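/- Let s > 1 and let E ⊆ ℝ² be a compact set with 0 < H^s(E) < ∞, where H^s denotes s-dimensional Hausdorff measure. Then there exists a set B ⊆ ℝ² with dim_H(B) ≤ 1 such that for every x ∈ ℝ² \ B, the pinned distance set Δ_x E = {‖x − y‖ : y ∈ E} satisfies dim_H(Δ_x E) ≥ s/4 + 1/2. -/

import Mathlib

open MeasureTheory

/-!
The exceptional set `B` is the set of all pins `x` with `dim Δ_x E < s/4 + 1/2`, and the proof shows
that `H^t(B) = 0` for every `t > 1`.

*Reduction to finite sets.* `E` contains a subset `E'` of positive measure on which `H^s` satisfies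
a Frostman condition (`exists_frostman_subset`). Up to countably many pieces, the pins under
consideration are separated in one coordinate from a part `F` of `E'` of positive measure, and
`Δ_x F` is `H^u`-null for a fixed `u < s/4 + 1/2`. Pigeonholing an efficient covering of `Δ_x F` over
its scales (`exists_level`) shows that, for arbitrarily small `q = 2⁻ᵏ`, a non-negligible part of `F`
lies in at most `q^(-Nu)` annuli about `x` of width `q^N`. For fixed `k`, a maximal `t`-dimensional
finite set of such pins (`finite_frostman`) carries a `t`-dimensional measure, which is tiny by
the discretised theorem `finite_main`; by maximality the pins are covered at a cost which is summable
in `k` (`piece_null`).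

*The discretised theorem.* Let `ν` on `X` and `μ` on `Y` be finite measures of dimensions `t, s > 1` at
scales above `q^N`, with `N = m²`. Since both dimensions exceed one, for all but a fraction
`q^η` of the pairs `(x, y)` no tube about the line through `x` and `y` is much heavier than its width
(`heavy_tubes`); this is an `L²` estimate for strip averages on the space of lines. Most points are
regular: the mass of their squares of side `q^ρ` is `q^(f ρ)` for one of boundedly many branching
functions `f` (`Cls`, `wt_not_cls`).

Fix a regular `y` and scales `a ≤ b`. Two points `y`, `z` at distance `q^r` are seen at the same
distance, up to `q^b`, from few `x`: if `b ≤ 2r`, these `x` lie in a tube of width `q^(b-r)` about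
the perpendicular bisector, which has mass `≈ q^(b-r)` (`yblock_shell`); if `b = N > 2r`, they lie
near a hyperbola, and following this curve through the scales, with tubes through its points, bounds
the mass by `q^(N/2)` (`tube_chain`). By Fubini and Markov (`block_lemma`), for typical `x` the annulus
about `x` through `y` then occupies at scale `q^b` only a small fraction of the square of side `q^a`
about `y`. Multiplying these fractions over a well chosen chain of blocks `[a, b]`, which is an
optimisation problem for the branching function (`chain_annulus`), one finds that an annulus of width
`q^N` has mass at most `q^(N(s/4 + 1/2) - O(m))` on good points (`annulus_chain`). As `N = m²` the error
is negligible, so `q^(-Nu)` annuli carry almost no mass.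
-/

namespace PinnedDist

/-- The Euclidean plane. -/
abbrev Plane := EuclideanSpace ℝ (Fin 2)

/-- The index of the half-open dyadic square of side `2⁻ⁿ` containing `x`. -/
noncomputable def cell (n : ℕ) (x : Plane) : ℤ × ℤ := (⌊x 0 * 2 ^ n⌋, ⌊x 1 * 2 ^ n⌋)

/-- The mass of `A` under the measure `∑_{x ∈ X} ν(x) δ_x`. -/
noncomputable def wt (X : Finset Plane) (ν : Plane → ℝ) (A : Set Plane) : ℝ :=
  ∑ x ∈ X, A.indicator ν x

/-- The planar cross product. -/
def cross (a b : Plane) : ℝ := a 0 * b 1 - a 1 * b 0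

/-! ### Dyadic squares -/

lemma floor_two_pow_mono {a b : ℝ} {n m : ℕ} (h : n ≤ m)
    (hab : ⌊a * 2 ^ m⌋ = ⌊b * 2 ^ m⌋) : ⌊a * 2 ^ n⌋ = ⌊b * 2 ^ n⌋ := by
  obtain ⟨d, rfl⟩ := Nat.exists_eq_add_of_le h
  have key : ∀ c : ℝ, ⌊c * 2 ^ n⌋ = ⌊c * 2 ^ (n + d)⌋ / ((2 ^ d : ℕ) : ℤ) := by
    intro c
    rw [← Int.floor_div_natCast]
    congr 1
    push_cast
    rw [pow_add]
    field_simp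
  rw [key, key, hab]

lemma cell_mono {n m : ℕ} (h : n ≤ m) {x y : Plane} (hxy : cell m x = cell m y) :
    cell n x = cell n y := by
  simp only [cell, Prod.mk.injEq] at hxy ⊢
  exact ⟨floor_two_pow_mono h hxy.1, floor_two_pow_mono h hxy.2⟩

lemma abs_sub_le_of_floor {a b : ℝ} {n : ℕ} (hab : ⌊a * 2 ^ n⌋ = ⌊b * 2 ^ n⌋) :
    |a - b| ≤ (1 / 2) ^ n := by
  have h := Int.abs_sub_lt_one_of_floor_eq_floor hab
  rw [← sub_mul, abs_mul, abs_of_pos (by positivity : (0 : ℝ) < 2 ^ n)] at h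
  rw [one_div, inv_pow, ← one_div, le_div_iff₀ (by positivity)]
  exact h.le

lemma cell_coord {n : ℕ} {x y : Plane} (h : cell n x = cell n y) (i : Fin 2) :
    |x i - y i| ≤ (1 / 2) ^ n := by
  simp only [cell, Prod.mk.injEq] at h
  fin_cases i
  · exact abs_sub_le_of_floor h.1
  · exact abs_sub_le_of_floor h.2

lemma dist_sq (x y : Plane) : dist x y ^ 2 = (x 0 - y 0) ^ 2 + (x 1 - y 1) ^ 2 := by
  rw [EuclideanSpace.dist_eq, Real.sq_sqrt (by positivity), Fin.sum_univ_two, Real.dist_eq,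
    Real.dist_eq, sq_abs, sq_abs]

lemma abs_coord_le_dist (x y : Plane) (i : Fin 2) : |x i - y i| ≤ dist x y := by
  apply abs_le_of_sq_le_sq _ dist_nonneg
  rw [dist_sq]
  fin_cases i <;> simp <;> positivity

lemma dist_le_two_mul {x y : Plane} {r : ℝ} (h : ∀ i, |x i - y i| ≤ r) :
    dist x y ≤ 2 * r := by
  have hr : 0 ≤ r := (abs_nonneg _).trans (h 0)
  apply le_of_sq_le_sq _ (by positivity)
  rw [dist_sq]
  have h0 := sq_le_sq' (by linarith [abs_le.1 (h 0)]) (abs_le.1 (h 0)).2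
  have h1 := sq_le_sq' (by linarith [abs_le.1 (h 1)]) (abs_le.1 (h 1)).2
  nlinarith

lemma cell_dist {n : ℕ} {x y : Plane} (h : cell n x = cell n y) :
    dist x y ≤ 2 * (1 / 2) ^ n := dist_le_two_mul (cell_coord h)

/-- A square of radius `L · 2⁻ⁿ` meets at most `(2L+3)²` dyadic squares of side `2⁻ⁿ`. -/
lemma card_cells (A : Finset Plane) (p : Plane) (n L : ℕ)
    (h : ∀ x ∈ A, ∀ i, |x i - p i| ≤ L * (1 / 2) ^ n) :
    (A.image (cell n)).card ≤ (2 * L + 3) ^ 2 := by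
  have key : ∀ a b : ℝ, |a - b| ≤ L * (1 / 2) ^ n →
      ⌊a * 2 ^ n⌋ ∈ Finset.Icc (⌊b * 2 ^ n⌋ - (L + 1)) (⌊b * 2 ^ n⌋ + (L + 1)) := by
    intro a b hab
    have h2 : (0 : ℝ) < 2 ^ n := by positivity
    have h3 : |a * 2 ^ n - b * 2 ^ n| ≤ L := by
      rw [← sub_mul, abs_mul, abs_of_pos h2]
      calc |a - b| * 2 ^ n ≤ L * (1 / 2) ^ n * 2 ^ n := by gcongr
        _ = L := by rw [mul_assoc, ← mul_pow]; norm_num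
    rw [abs_le] at h3
    rw [Finset.mem_Icc]
    have e1 := Int.floor_le (a * 2 ^ n)
    have e2 := Int.lt_floor_add_one (a * 2 ^ n)
    have e3 := Int.floor_le (b * 2 ^ n)
    have e4 := Int.lt_floor_add_one (b * 2 ^ n)
    constructor
    · have : ((⌊b * 2 ^ n⌋ - (L + 1) : ℤ) : ℝ) < ((⌊a * 2 ^ n⌋ + 1 : ℤ) : ℝ) := by
        push_cast; linarith
      have := Int.cast_lt.1 this
      lia
    · have : ((⌊a * 2 ^ n⌋ : ℤ) : ℝ) < ((⌊b * 2 ^ n⌋ + (L + 1) + 1 : ℤ) : ℝ) := by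
        push_cast; linarith
      have := Int.cast_lt.1 this
      lia
  have hsub : A.image (cell n) ⊆
      (Finset.Icc (⌊p 0 * 2 ^ n⌋ - (L + 1) : ℤ) (⌊p 0 * 2 ^ n⌋ + (L + 1))) ×ˢ
      (Finset.Icc (⌊p 1 * 2 ^ n⌋ - (L + 1) : ℤ) (⌊p 1 * 2 ^ n⌋ + (L + 1))) := by
    intro c hc
    obtain ⟨x, hx, rfl⟩ := Finset.mem_image.1 hc
    exact Finset.mem_product.2 ⟨key _ _ (h x hx 0), key _ _ (h x hx 1)⟩
  refine (Finset.card_le_card hsub).trans ?_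
  rw [Finset.card_product, Int.card_Icc, Int.card_Icc, sq]
  apply Nat.mul_le_mul <;> lia

/-! ### Finitely supported measures -/

section wt

variable {X : Finset Plane} {ν : Plane → ℝ}

lemma wt_nonneg (hν : ∀ x, 0 ≤ ν x) (A : Set Plane) : 0 ≤ wt X ν A :=
  Finset.sum_nonneg fun x _ => Set.indicator_nonneg (fun x _ => hν x) x

lemma wt_mono (hν : ∀ x, 0 ≤ ν x) {A B : Set Plane} (h : ∀ x ∈ X, x ∈ A → x ∈ B) :
    wt X ν A ≤ wt X ν B := by
  apply Finset.sum_le_sum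
  intro x hx
  by_cases hA : x ∈ A
  · rw [Set.indicator_of_mem hA, Set.indicator_of_mem (h x hx hA)]
  · rw [Set.indicator_of_notMem hA]
    exact Set.indicator_nonneg (fun x _ => hν x) x

lemma wt_le_univ (hν : ∀ x, 0 ≤ ν x) (A : Set Plane) : wt X ν A ≤ wt X ν Set.univ :=
  wt_mono hν fun _ _ _ => trivial

lemma le_wt (hν : ∀ x, 0 ≤ ν x) {A : Set Plane} {x : Plane} (hx : x ∈ X) (hA : x ∈ A) :
    ν x ≤ wt X ν A := by
  have := Finset.single_le_sum (f := fun x => A.indicator ν x)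
    (fun x _ => Set.indicator_nonneg (fun x _ => hν x) x) hx
  simpa [Set.indicator_of_mem hA, wt] using this

/-- Subadditivity, for a finite family. -/
lemma wt_le_sum {ι : Type*} (hν : ∀ x, 0 ≤ ν x) (A : Set Plane) (I : Finset ι)
    (B : ι → Set Plane) (h : ∀ x ∈ X, x ∈ A → ∃ i ∈ I, x ∈ B i) :
    wt X ν A ≤ ∑ i ∈ I, wt X ν (B i) := by
  unfold wt
  rw [Finset.sum_comm]
  apply Finset.sum_le_sum
  intro x hx
  have hn : ∀ i ∈ I, 0 ≤ (B i).indicator ν x :=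
    fun i _ => Set.indicator_nonneg (fun x _ => hν x) x
  by_cases hA : x ∈ A
  · obtain ⟨i, hi, hxi⟩ := h x hx hA
    have := Finset.single_le_sum hn hi
    rw [Set.indicator_of_mem hxi] at this
    rwa [Set.indicator_of_mem hA]
  · rw [Set.indicator_of_notMem hA]
    exact Finset.sum_nonneg hn

/-- Fubini for two finitely supported measures. -/
lemma wt_swap (Y : Finset Plane) (μ : Plane → ℝ) (A B : Set Plane) (R : Plane → Plane → Prop) :
    ∑ y ∈ Y, B.indicator μ y * wt X ν {x | x ∈ A ∧ R x y} =
      ∑ x ∈ X, A.indicator ν x * wt Y μ {y | y ∈ B ∧ R x y} := by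
  classical
  unfold wt
  simp_rw [Finset.mul_sum]
  rw [Finset.sum_comm]
  refine Finset.sum_congr rfl fun x _ => Finset.sum_congr rfl fun y _ => ?_
  simp only [Set.indicator_apply, Set.mem_ofPred_eq]
  by_cases h1 : x ∈ A <;> by_cases h2 : y ∈ B <;> by_cases h3 : R x y <;>
    simp [h1, h2, h3, mul_comm]

lemma wt_eq_sum_cells (A : Set Plane) (n : ℕ) :
    wt X ν A = ∑ c ∈ X.image (cell n), wt X ν {x | x ∈ A ∧ cell n x = c} := by
  classical
  unfold wt
  rw [Finset.sum_comm]
  refine Finset.sum_congr rfl fun x hx => ?_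
  rw [Finset.sum_eq_single (cell n x)]
  · simp [Set.indicator_apply]
  · intro c _ hc
    apply Set.indicator_of_notMem
    rintro ⟨_, rfl⟩
    exact hc rfl
  · intro h
    exact absurd (Finset.mem_image_of_mem _ hx) h

lemma sum_div_cell_le (hν : ∀ x, 0 ≤ ν x) (A : Finset Plane) (hA : A ⊆ X) (n : ℕ) :
    ∑ x ∈ A, ν x / wt X ν {x' | cell n x' = cell n x} ≤ (A.image (cell n)).card := by
  classical
  rw [← Finset.sum_fiberwise_of_maps_to (g := cell n) (t := A.image (cell n))
    (fun x hx => Finset.mem_image_of_mem _ hx)]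
  rw [← nsmul_one, ← Finset.sum_const]
  apply Finset.sum_le_sum
  intro c _
  have : ∑ x ∈ A with cell n x = c, ν x / wt X ν {x' | cell n x' = cell n x} =
      (∑ x ∈ A with cell n x = c, ν x) / wt X ν {x' | cell n x' = c} := by
    rw [Finset.sum_div]
    refine Finset.sum_congr rfl fun x hx => ?_
    rw [(Finset.mem_filter.1 hx).2]
  rw [this]
  apply div_le_one_of_le₀ _ (wt_nonneg hν _)
  unfold wt
  rw [Finset.sum_filter]
  refine (Finset.sum_le_sum_of_subset_of_nonneg hA fun x _ _ => ?_).trans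
    (le_of_eq (Finset.sum_congr rfl fun x _ => ?_))
  · split_ifs
    · exact hν x
    · exact le_rfl
  · simp [Set.indicator_apply]

/-- The points whose dyadic square carries less than a `θ`-fraction of the mass of a surrounding
square of radius `L · 2⁻ⁿ` have total mass at most `θ (2L+3)²`, relative to the full mass. -/
lemma wt_irregular_le (hν : ∀ x, 0 ≤ ν x) (n L : ℕ) {θ : ℝ} (hθ : 0 ≤ θ) :
    wt X ν {x | wt X ν {x' | cell n x' = cell n x} <
        θ * wt X ν {x' | ∀ i, |x' i - x i| ≤ L * (1 / 2) ^ n}} ≤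
      θ * (2 * L + 3) ^ 2 * wt X ν Set.univ := by
  classical
  set Q : Plane → ℝ := fun x => wt X ν {x' | cell n x' = cell n x} with hQ
  have h1 : ∀ x ∈ X, ({x | Q x < θ * wt X ν {x' | ∀ i, |x' i - x i| ≤ L * (1 / 2) ^ n}}).indicator
      ν x ≤ ∑ x' ∈ X, θ * (ν x' * if ∀ i, |x' i - x i| ≤ L * (1 / 2) ^ n
        then ν x / Q x else 0) := by
    intro x hx
    have hnn : 0 ≤ ∑ x' ∈ X, θ * (ν x' * if ∀ i, |x' i - x i| ≤ L * (1 / 2) ^ n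
        then ν x / Q x else 0) := by
      refine Finset.sum_nonneg fun x' _ => mul_nonneg hθ (mul_nonneg (hν _) ?_)
      split_ifs
      · exact div_nonneg (hν _) (wt_nonneg hν _)
      · exact le_rfl
    by_cases hb : x ∈ {x | Q x < θ * wt X ν {x' | ∀ i, |x' i - x i| ≤ L * (1 / 2) ^ n}}
    · rw [Set.indicator_of_mem hb]
      rcases (hν x).eq_or_lt with h0 | hpos
      · rw [← h0]; rw [← h0] at hnn; exact hnn
      have hQx : ν x ≤ Q x := le_wt hν hx (by simp)
      have hQpos : 0 < Q x := hpos.trans_le hQx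
      have : ∑ x' ∈ X, θ * (ν x' * if ∀ i, |x' i - x i| ≤ L * (1 / 2) ^ n
        then ν x / Q x else 0) = (ν x / Q x) *
          (θ * wt X ν {x' | ∀ i, |x' i - x i| ≤ L * (1 / 2) ^ n}) := by
        unfold wt
        rw [Finset.mul_sum, Finset.mul_sum]
        refine Finset.sum_congr rfl fun x' _ => ?_
        simp only [Set.indicator_apply, Set.mem_ofPred_eq]
        split_ifs <;> ring
      rw [this]
      calc ν x = ν x / Q x * Q x := by field_simp
        _ ≤ _ := by
          apply mul_le_mul_of_nonneg_left (le_of_lt hb)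
          positivity
    · rw [Set.indicator_of_notMem hb]
      exact hnn
  calc wt X ν _ ≤ ∑ x ∈ X, ∑ x' ∈ X, θ * (ν x' * if ∀ i, |x' i - x i| ≤ L * (1 / 2) ^ n
        then ν x / Q x else 0) := Finset.sum_le_sum h1
    _ = ∑ x' ∈ X, θ * (ν x' * ∑ x ∈ X with ∀ i, |x' i - x i| ≤ L * (1 / 2) ^ n,
          ν x / Q x) := by
        rw [Finset.sum_comm]
        refine Finset.sum_congr rfl fun x' _ => ?_
        rw [Finset.sum_filter, Finset.mul_sum, Finset.mul_sum]
    _ ≤ ∑ x' ∈ X, θ * (ν x' * (2 * L + 3) ^ 2) := by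
        apply Finset.sum_le_sum
        intro x' _
        have := (sum_div_cell_le hν (X.filter fun x => ∀ i, |x' i - x i| ≤ L * (1 / 2) ^ n)
          (Finset.filter_subset _ _) n).trans (Nat.cast_le.2 (card_cells _ x' n L (by
            intro x hx i
            rw [abs_sub_comm]
            exact (Finset.mem_filter.1 hx).2 i)))
        have h3 := hν x'
        push_cast at this
        gcongr
    _ = _ := by
        unfold wt
        simp only [Set.indicator_univ]
        rw [Finset.mul_sum]
        refine Finset.sum_congr rfl fun x' _ => ?_
        ring

end wt

/-! ### Optimising over chains of scales -/

section chains

variable {P : ℕ → ℝ → Prop} {f : ℕ → ℝ} {c : ℝ} {M m : ℕ}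

lemma chain_blocks_aux (hP : ∀ a e e', P a e → e' ≤ e → P a e')
    (hmono : ∀ a b, a ≤ b → b ≤ M → f a ≤ f b)
    (hdbl : ∀ a b, a ≤ b → b ≤ M → f b ≤ f a + 2 * (b - a) + c)
    {a₀ : ℕ} (h0 : P a₀ 0)
    (hblock : ∀ a, a₀ ≤ a → a + m ≤ M → ∀ e g : ℝ,
      (∀ r, a ≤ r → r ≤ a + m → g ≤ f r - f a + (a + m - r)) → P a e → P (a + m) (e + g - c))
    (j : ℕ) (hj : a₀ + j * m ≤ M) :
    P (a₀ + j * m) ((f (a₀ + j * m) - f a₀) / 2 - j * (c + c / 2)) := by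
  induction j with
  | zero => simpa using h0
  | succ j ih =>
    have e1 : a₀ + (j + 1) * m = a₀ + j * m + m := by ring
    rw [e1] at hj ⊢
    refine hP _ _ _ (hblock (a₀ + j * m) (by lia) hj _
      ((f (a₀ + j * m + m) - f (a₀ + j * m) - c) / 2) ?_ (ih (by lia))) ?_
    · intro r h1 h2
      have d := hdbl r _ h2 hj
      have d2 := hmono _ r h1 (by lia)
      push_cast at d ⊢
      linarith
    · push_cast
      linarith

/-- Chaining blocks of length `m` gains half of the increment of `f`. -/
lemma chain_blocks (hP : ∀ a e e', P a e → e' ≤ e → P a e')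
    (hPm : ∀ a b e, a ≤ b → b ≤ M → P a e → P b e)
    (hmono : ∀ a b, a ≤ b → b ≤ M → f a ≤ f b)
    (hdbl : ∀ a b, a ≤ b → b ≤ M → f b ≤ f a + 2 * (b - a) + c) (hc : 1 ≤ c)
    (hm : 1 ≤ m) (hM : M ≤ m ^ 2) (hf0 : f 0 ≤ c)
    {a₀ : ℕ} (h0 : P a₀ 0)
    (hblock : ∀ a, a₀ ≤ a → a + m ≤ M → ∀ e g : ℝ,
      (∀ r, a ≤ r → r ≤ a + m → g ≤ f r - f a + (a + m - r)) → P a e → P (a + m) (e + g - c))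
    (a : ℕ) (ha : a₀ ≤ a) (haM : a ≤ M) :
    P a (f a / 2 - (a₀ + 6 * c * m)) := by
  obtain ⟨j, i, hi, hj⟩ : ∃ j i, i < m ∧ a = a₀ + j * m + i := by
    refine ⟨(a - a₀) / m, (a - a₀) % m, Nat.mod_lt _ hm, ?_⟩
    have := Nat.div_add_mod' (a - a₀) m
    lia
  have h1 := chain_blocks_aux hP hmono hdbl h0 hblock j (by lia)
  have hjm : j ≤ m := by
    by_contra hcon
    have : (m + 1) * m ≤ j * m := Nat.mul_le_mul_right _ (by lia)
    nlinarith
  have d1 := hdbl (a₀ + j * m) a (by lia) haM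
  have d2 := hdbl 0 a₀ (by lia) (by lia)
  have hi' : (i : ℝ) ≤ m := by exact_mod_cast hi.le
  have hm' : (1 : ℝ) ≤ m := by exact_mod_cast hm
  have hj' : (j : ℝ) ≤ m := by exact_mod_cast hjm
  refine hP _ _ _ (hPm _ a _ (by lia) haM h1) ?_
  have ha' : (a : ℝ) = a₀ + j * m + i := by exact_mod_cast hj
  rw [ha'] at d1
  push_cast at d1 d2
  have e1 : (j : ℝ) * c ≤ m * c := by gcongr
  have e2 : c ≤ c * m := by nlinarith
  have e3 : (m : ℝ) ≤ c * m := by nlinarith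
  nlinarith

/-- Long blocks, chosen to end where `f ρ - ρ` is minimal, gain `min r (M - f a)` from `a` on. -/
lemma chain_long {r : ℕ} (hP : ∀ a e e', P a e → e' ≤ e → P a e')
    (hPm : ∀ a b e, a ≤ b → b ≤ M → P a e → P b e)
    (hmono : ∀ a b, a ≤ b → b ≤ M → f a ≤ f b)
    (hlin : ∀ a, a ≤ M → (a : ℝ) - c ≤ f a) (hc : 1 ≤ c) (hm : 1 ≤ m)
    (hblock : ∀ a b : ℕ, a ≤ b → b ≤ M → b ≤ a + r → ∀ e g : ℝ,
      (∀ ρ, a ≤ ρ → ρ ≤ b → g ≤ f ρ - f a + (b - ρ)) → P a e → P b (e + g - c))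
    (d : ℕ) : ∀ a, a ≤ M → M - a ≤ d → ∀ e, P a e →
      P M (e + min (r : ℝ) (M - f a) - m - 2 * c - c * (f a - a + c) / m) := by
  have hm0 : (0 : ℝ) < m := by exact_mod_cast hm
  induction d with
  | zero =>
    intro a ha hd e he
    obtain rfl : a = M := by lia
    refine hP _ _ _ he ?_
    have h1 := hlin a ha
    have h2 : 0 ≤ c * (f a - a + c) / m := by
      apply div_nonneg _ hm0.le
      apply mul_nonneg (by linarith) (by linarith)
    have := min_le_right (r : ℝ) (a - f a)
    linarith
  | succ d ih =>
    intro a ha hd e he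
    have h1 := hlin a ha
    have h2 : 0 ≤ c * (f a - a + c) / m := by
      apply div_nonneg _ hm0.le
      apply mul_nonneg (by linarith) (by linarith)
    by_cases hex : ∃ ρ, a ≤ ρ ∧ ρ ≤ M ∧ ρ ≤ a + r ∧ f ρ - ρ ≤ f a - a - m
    · obtain ⟨ρ₁, hρ1, hρ2, hρ3, hρ4⟩ := hex
      obtain ⟨ρ, hρ, hmin⟩ := Finset.exists_min_image (Finset.Icc a (min M (a + r)))
        (fun ρ => f ρ - (ρ : ℝ)) ⟨ρ₁, by simp; lia⟩
      have h3 := hmin ρ₁ (by simp; lia)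
      simp only [Finset.mem_Icc, le_min_iff] at hρ
      have hne : ρ ≠ a := by
        rintro rfl
        linarith
      have hb := hblock a ρ hρ.1 hρ.2.1 hρ.2.2 e (f ρ - f a) (by
        intro σ h4 h5
        have := hmin σ (by simp; lia)
        linarith) he
      refine hP _ _ _ (ih ρ hρ.2.1 (by lia) _ hb) ?_
      have h6 : c * (f ρ - ρ + c) / m + c ≤ c * (f a - a + c) / m := by
        rw [div_add' _ _ _ hm0.ne']
        gcongr
        nlinarith
      have h7 := hmono a ρ hρ.1 hρ.2.1
      have h8 : min (r : ℝ) (M - f a) ≤ min (r : ℝ) (M - f ρ) + (f ρ - f a) := by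
        rcases le_total (r : ℝ) (M - f ρ) with h | h
        · rw [min_eq_left h]
          linarith [min_le_left (r : ℝ) (M - f a)]
        · rw [min_eq_right h]
          linarith [min_le_right (r : ℝ) (M - f a)]
      linarith
    · push Not at hex
      by_cases har : a + r ≤ M
      · have hb := hblock a (a + r) (by lia) har le_rfl e (r - m) (by
          intro ρ h4 h5
          have := hex ρ h4 (by lia) h5
          push_cast
          linarith) he
        refine hP _ _ _ (hPm _ M _ har le_rfl hb) ?_
        have h9 := min_le_left (r : ℝ) (M - f a)
        linarith
      · have hb := hblock a M ha le_rfl (by lia) e (M - a - m) (by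
          intro ρ h4 h5
          have := hex ρ h4 (by lia) (by lia)
          linarith) he
        refine hP _ _ _ hb ?_
        have := min_le_right (r : ℝ) (M - f a)
        linarith

lemma exists_last (Q : ℕ → Prop) (M : ℕ) (h0 : Q 0) :
    ∃ a ≤ M, Q a ∧ (a = M ∨ ¬ Q (a + 1)) := by
  classical
  refine ⟨Nat.findGreatest Q M, Nat.findGreatest_le M,
    Nat.findGreatest_spec (Nat.zero_le M) h0, ?_⟩
  rcases (Nat.findGreatest_le (P := Q) M).eq_or_lt with h | h
  · exact Or.inl h
  · exact Or.inr (Nat.findGreatest_is_greatest (Nat.lt_succ_self _) h)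

/-- The total gain of an optimal chain of tube blocks: the first half of the chain uses blocks of
length `m`, the second half the long blocks of `chain_long`. -/
lemma chain_tube {r : ℕ} (hP : ∀ a e e', P a e → e' ≤ e → P a e')
    (hPm : ∀ a b e, a ≤ b → b ≤ M → P a e → P b e)
    (hmono : ∀ a b, a ≤ b → b ≤ M → f a ≤ f b)
    (hdbl : ∀ a b, a ≤ b → b ≤ M → f b ≤ f a + 2 * (b - a) + c)
    (hlin : ∀ a, a ≤ M → (a : ℝ) - c ≤ f a) (hc : 1 ≤ c)
    (hm : 1 ≤ m) (hM : M ≤ m ^ 2) (hf0 : f 0 ≤ c) (hmr : m ≤ r) (hrM : r ≤ M) (h0 : P 0 0)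
    (hblock : ∀ a b : ℕ, a ≤ b → b ≤ M → b ≤ a + r → ∀ e g : ℝ,
      (∀ ρ, a ≤ ρ → ρ ≤ b → g ≤ f ρ - f a + (b - ρ)) → P a e → P b (e + g - c)) :
    P M (((M : ℝ) + r) / 2 - 20 * c ^ 2 * m) := by
  have hm' : (1 : ℝ) ≤ m := by exact_mod_cast hm
  have hrM' : (r : ℝ) ≤ M := by exact_mod_cast hrM
  have hM' : (M : ℝ) ≤ (m : ℝ) ^ 2 := by exact_mod_cast hM
  have hcm : c ≤ c ^ 2 * m := by nlinarith
  have hcm2 : (m : ℝ) ≤ c ^ 2 * m := le_mul_of_one_le_left (by linarith) (one_le_pow₀ hc)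
  have hcm3 : c * m ≤ c ^ 2 * m := by nlinarith
  have hloss : ∀ a, a ≤ M → c * (f a - a + c) / m ≤ 4 * (c ^ 2 * m) := by
    intro a ha
    have h1 := hdbl 0 a (by lia) ha
    have ha' : (a : ℝ) ≤ M := by exact_mod_cast ha
    rw [div_le_iff₀ (by positivity)]
    push_cast at h1
    have h2 : f a - a + c ≤ (m : ℝ) ^ 2 + 3 * c := by linarith
    have h3 : c * (f a - a + c) ≤ c * ((m : ℝ) ^ 2 + 3 * c) := by gcongr
    have h4 : (m : ℝ) ^ 2 * c ≤ c ^ 2 * m ^ 2 := by nlinarith [sq_nonneg (m : ℝ)]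
    have h5 : c ^ 2 ≤ c ^ 2 * (m : ℝ) ^ 2 := by nlinarith [sq_nonneg c]
    nlinarith
  by_cases hlow : f 0 ≤ M - r
  · obtain ⟨a, haM, hfa, hnext⟩ := exists_last (fun a => f a ≤ M - r) M hlow
    have h1 := chain_blocks hP hPm hmono hdbl hc hm hM hf0 h0 (by
      intro a _ h2 e g hg hPa
      exact hblock a (a + m) (by lia) h2 (by lia) e g (by
        intro ρ h3 h4
        push_cast
        exact hg ρ h3 h4) hPa) a (Nat.zero_le _) haM
    refine hP _ _ _ (chain_long hP hPm hmono hlin hc hm hblock (M - a) a haM le_rfl _ h1) ?_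
    rw [min_eq_left (by linarith)]
    have h3 : (M : ℝ) - r - 2 - c ≤ f a := by
      rcases hnext with rfl | h
      · linarith [hlin a haM, (Nat.cast_nonneg r : (0 : ℝ) ≤ r)]
      · rcases haM.eq_or_lt with rfl | h5
        · linarith [hlin a haM, (Nat.cast_nonneg r : (0 : ℝ) ≤ r)]
        have h4 := hdbl a (a + 1) (by lia) (by lia)
        push_cast at h4
        push Not at h
        linarith
    have := hloss a haM
    push_cast
    linarith
  · push Not at hlow
    refine hP _ _ _ (chain_long hP hPm hmono hlin hc hm hblock M 0 (by lia) (by lia) _ h0) ?_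
    have h3 : (r : ℝ) - c ≤ min (r : ℝ) (M - f 0) := by
      apply le_min <;> linarith
    have := hloss 0 (by lia)
    linarith

/-- The total gain of an optimal chain of annular blocks: blocks of length `m` up to the scale `a`
where `f a ≈ sM/2`, then the single block `[a, M]`. -/
lemma chain_annulus {s E : ℝ} (hs : 1 < s) (hE : 0 ≤ E)
    (hP : ∀ a e e', P a e → e' ≤ e → P a e')
    (hPm : ∀ a b e, a ≤ b → b ≤ M → P a e → P b e)
    (hmono : ∀ a b, a ≤ b → b ≤ M → f a ≤ f b)
    (hdbl : ∀ a b, a ≤ b → b ≤ M → f b ≤ f a + 2 * (b - a) + c)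
    (hlin : ∀ a, a ≤ M → s * (a : ℝ) - c ≤ f a) (hc : 1 ≤ c)
    (hM : M = m ^ 2) (hmc : 12 * c + 4 ≤ m) (hf0 : f 0 ≤ c) (h0 : P 0 0)
    (hblock : ∀ a b : ℕ, a ≤ b → b ≤ M → b ≤ 2 * a → ∀ e g : ℝ,
      (∀ ρ, a ≤ ρ → ρ ≤ b → g ≤ f ρ - f a + (b - ρ)) → P a e → P b (e + g - c))
    (hlast : ∀ a : ℕ, m ≤ a → a ≤ M → ∀ e g : ℝ,
      (∀ ρ, a ≤ ρ → ρ ≤ M → M ≤ 2 * ρ → g ≤ f ρ - f a + (M - ρ)) →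
      (∀ ρ, a ≤ ρ → ρ ≤ M → 2 * ρ < M → g ≤ f ρ - f a + ((M : ℝ) / 2 - E)) →
      P a e → P M (e + g - c)) :
    P M (M * (s / 4 + 1 / 2) - E - 20 * c ^ 2 * m) := by
  have hm1 : (1 : ℝ) ≤ m := by linarith
  have hm : 1 ≤ m := by exact_mod_cast hm1
  have hM' : (M : ℝ) = (m : ℝ) ^ 2 := by exact_mod_cast hM
  have hcm : c ≤ c ^ 2 * m := by nlinarith
  have hcm2 : (m : ℝ) ≤ c ^ 2 * m := le_mul_of_one_le_left (by linarith) (one_le_pow₀ hc)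
  have hcm3 : c * m ≤ c ^ 2 * m := by nlinarith
  have hmm : (12 * c + 4) * m ≤ M := by rw [hM']; nlinarith
  have hMpos : (0 : ℝ) ≤ M := by positivity
  have hsM : (M : ℝ) ≤ s * M := by nlinarith
  obtain ⟨a, haM, hfa, hnext⟩ := exists_last (fun a => f a ≤ s * M / 2) M (by nlinarith)
  have h3 : s * M / 2 - 2 - c ≤ f a := by
    have h5 : a = M → s * M / 2 - 2 - c ≤ f a := by
      rintro rfl
      nlinarith [hlin a haM]
    rcases hnext with h | h
    · exact h5 h
    · rcases haM.eq_or_lt with h6 | h6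
      · exact h5 h6
      have h4 := hdbl a (a + 1) (by lia) (by lia)
      push_cast at h4
      push Not at h
      linarith
  have ham : m ≤ a := by
    have h4 := hdbl 0 a (by lia) haM
    push_cast at h4
    have : (m : ℝ) ≤ a := by nlinarith
    exact_mod_cast this
  have h1 := chain_blocks hP hPm hmono hdbl hc hm hM.le hf0
    (hPm 0 m 0 (by lia) (by rw [hM]; nlinarith) h0) (by
      intro a h1 h2 e g hg hPa
      exact hblock a (a + m) (by lia) h2 (by lia) e g (by
        intro ρ h3 h4
        push_cast
        exact hg ρ h3 h4) hPa) a ham haM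
  refine hP _ _ _ (hlast a ham haM _ (M / 2 - E - c) ?_ ?_ h1) ?_
  · intro ρ h4 h5 h6
    have h7 := hlin ρ h5
    have h8 : (M : ℝ) ≤ 2 * ρ := by exact_mod_cast h6
    nlinarith
  · intro ρ h4 h5 h6
    linarith [hmono a ρ h4 h5]
  · linarith

end chains

/-! ### Strips in the plane: Gram integrals over the space of lines -/

/-- A cut-off in the slope variable: `1` on `[-L-1, L+1]`, supported on `[-L-2, L+2]`. -/
noncomputable def chi (L m : ℝ) : ℝ := max 0 (min 1 (L + 2 - |m|))

/-- The normalised indicator of `[-a, a]`. -/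
noncomputable def bx (a u : ℝ) : ℝ := (Set.Icc (-a) a).indicator (fun _ => 1 / (2 * a)) u

/-- The correlation of the `a`-strip indicator at `x` with the `b`-strip indicator at `y`, over
all lines `{p | p₁ = m p₀ + c}`, the slope being weighted by `chi L`. -/
noncomputable def gram (L a b x0 x1 y0 y1 : ℝ) : ℝ :=
  ∫ z : ℝ × ℝ, chi L z.1 * (bx a (x1 - z.1 * x0 - z.2) * bx b (y1 - z.1 * y0 - z.2))

lemma chi_nonneg (L m : ℝ) : 0 ≤ chi L m := le_max_left _ _

lemma chi_le_one (L m : ℝ) : chi L m ≤ 1 := max_le zero_le_one (min_le_left _ _)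

lemma chi_lip (L m m' : ℝ) : |chi L m - chi L m'| ≤ |m - m'| := by
  unfold chi
  refine (abs_max_sub_max_le_max _ _ _ _).trans ?_
  refine max_le (by simp) ?_
  refine (abs_min_sub_min_le_max _ _ _ _).trans ?_
  refine max_le (by simp) ?_
  rw [show L + 2 - |m| - (L + 2 - |m'|) = |m'| - |m| by ring, abs_sub_comm m m']
  exact abs_abs_sub_abs_le_abs_sub _ _

lemma chi_eq_zero {L m : ℝ} (h : L + 2 ≤ |m|) : chi L m = 0 := by
  unfold chi
  exact max_eq_left ((min_le_right _ _).trans (by linarith))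

lemma chi_eq_one {L m : ℝ} (h : |m| ≤ L + 1) : chi L m = 1 := by
  unfold chi
  rw [min_eq_left (by linarith)]
  simp

lemma chi_continuous (L : ℝ) : Continuous (chi L) := by
  unfold chi
  fun_prop

lemma bx_nonneg {a : ℝ} (ha : 0 < a) (u : ℝ) : 0 ≤ bx a u :=
  Set.indicator_nonneg (fun _ _ => by positivity) u

lemma bx_le {a : ℝ} (ha : 0 < a) (u : ℝ) : bx a u ≤ 1 / (2 * a) :=
  Set.indicator_le_self' (fun _ _ => by positivity) u

lemma bx_eq {a u : ℝ} (h : |u| ≤ a) : bx a u = 1 / (2 * a) :=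
  Set.indicator_of_mem (Set.mem_Icc.2 (abs_le.1 h)) _

lemma bx_eq_zero {a u : ℝ} (h : a < |u|) : bx a u = 0 :=
  Set.indicator_of_notMem (fun h' => absurd (abs_le.2 (Set.mem_Icc.1 h')) (not_le.2 h)) _

lemma bx_measurable (a : ℝ) : Measurable (bx a) :=
  measurable_const.indicator measurableSet_Icc

lemma bx_integrable (a : ℝ) : Integrable (bx a) := by
  unfold bx
  rw [integrable_indicator_iff measurableSet_Icc]
  exact integrableOn_const (by simp)

lemma integral_bx {a : ℝ} (ha : 0 < a) : ∫ u, bx a u = 1 := by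
  unfold bx
  rw [integral_indicator measurableSet_Icc]
  simp
  rw [max_eq_left (by linarith)]
  field_simp
  ring

lemma chi_integrable (L : ℝ) : Integrable (chi L) := by
  apply (chi_continuous L).integrable_of_hasCompactSupport
  apply HasCompactSupport.intro (isCompact_Icc (a := -(L + 2)) (b := L + 2))
  intro m hm
  apply chi_eq_zero
  by_contra h
  exact hm (abs_le.1 (not_le.1 h).le)

lemma integral_chi_le {L : ℝ} (hL : 0 ≤ L) : ∫ m, chi L m ≤ 2 * (L + 2) := by
  calc ∫ m, chi L m ≤ ∫ m, (Set.Icc (-(L + 2)) (L + 2)).indicator (fun _ => (1 : ℝ)) m := by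
        apply integral_mono (chi_integrable L)
        · rw [integrable_indicator_iff measurableSet_Icc]
          exact integrableOn_const (by simp)
        · intro m
          by_cases h : |m| ≤ L + 2
          · rw [Set.indicator_of_mem (Set.mem_Icc.2 (abs_le.1 h))]
            exact chi_le_one L m
          · rw [chi_eq_zero (not_le.1 h).le]
            exact Set.indicator_nonneg (fun _ _ => zero_le_one) m
    _ = 2 * (L + 2) := by
        rw [integral_indicator measurableSet_Icc]
        simp
        rw [max_eq_left (by linarith)]
        ring

lemma gram_integrable {L a b : ℝ} (ha : 0 < a) (hb : 0 < b) (x0 x1 y0 y1 : ℝ) :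
    Integrable (fun z : ℝ × ℝ =>
      chi L z.1 * (bx a (x1 - z.1 * x0 - z.2) * bx b (y1 - z.1 * y0 - z.2))) := by
  set R := |x1| + |L + 2| * |x0| + a with hR
  have hK : IsCompact (Set.Icc (-(L + 2)) (L + 2) ×ˢ Set.Icc (-R) R) :=
    isCompact_Icc.prod isCompact_Icc
  rw [← integrableOn_iff_integrable_of_support_subset (s := Set.Icc (-(L + 2)) (L + 2) ×ˢ
    Set.Icc (-R) R)]
  · apply Measure.integrableOn_of_bounded (M := 1 / (2 * a) * (1 / (2 * b))) hK.measure_lt_top.ne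
    · apply Measurable.aestronglyMeasurable
      have h1 := bx_measurable a
      have h2 := bx_measurable b
      have h3 := (chi_continuous L).measurable
      fun_prop
    · refine Filter.Eventually.of_forall fun z => ?_
      have h1 := bx_nonneg ha (x1 - z.1 * x0 - z.2)
      have h2 := bx_nonneg hb (y1 - z.1 * y0 - z.2)
      have h3 := chi_nonneg L z.1
      rw [Real.norm_of_nonneg (by positivity)]
      calc chi L z.1 * (bx a (x1 - z.1 * x0 - z.2) * bx b (y1 - z.1 * y0 - z.2))
          ≤ 1 * (1 / (2 * a) * (1 / (2 * b))) := by
            gcongr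
            · exact chi_le_one _ _
            · exact bx_le ha _
            · exact bx_le hb _
        _ = _ := one_mul _
  · intro z hz
    rw [Function.mem_support] at hz
    have h1 : |z.1| ≤ L + 2 := by
      by_contra h
      rw [chi_eq_zero (not_le.1 h).le, zero_mul] at hz
      exact hz rfl
    have h2 : |x1 - z.1 * x0 - z.2| ≤ a := by
      by_contra h
      rw [bx_eq_zero (not_le.1 h), zero_mul, mul_zero] at hz
      exact hz rfl
    have h3 : |z.2| ≤ R := by
      have e : z.2 = x1 - z.1 * x0 - (x1 - z.1 * x0 - z.2) := by ring
      rw [e]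
      refine (abs_sub _ _).trans ?_
      have e2 := abs_sub x1 (z.1 * x0)
      rw [abs_mul] at e2
      have e3 : |z.1| * |x0| ≤ |L + 2| * |x0| :=
        mul_le_mul_of_nonneg_right (h1.trans (le_abs_self _)) (abs_nonneg _)
      linarith
    exact ⟨abs_le.1 h1, abs_le.1 h3⟩

lemma gram_nonneg {L a b : ℝ} (ha : 0 < a) (hb : 0 < b) (x0 x1 y0 y1 : ℝ) :
    0 ≤ gram L a b x0 x1 y0 y1 :=
  integral_nonneg fun _ =>
    mul_nonneg (chi_nonneg _ _) (mul_nonneg (bx_nonneg ha _) (bx_nonneg hb _))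

lemma gram_le {L a b : ℝ} (hL : 0 ≤ L) (ha : 0 < a) (hb : 0 < b) (x0 x1 y0 y1 : ℝ) :
    gram L a b x0 x1 y0 y1 ≤ (L + 2) / a := by
  unfold gram
  rw [Measure.volume_eq_prod, integral_prod _ (by
    rw [← Measure.volume_eq_prod]; exact gram_integrable ha hb x0 x1 y0 y1)]
  calc ∫ m, ∫ c, chi L m * (bx a (x1 - m * x0 - c) * bx b (y1 - m * y0 - c))
      ≤ ∫ m, chi L m * (1 / (2 * a)) := by
        apply integral_mono_of_nonneg
        · refine Filter.Eventually.of_forall fun m => integral_nonneg fun c => ?_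
          exact mul_nonneg (chi_nonneg _ _) (mul_nonneg (bx_nonneg ha _) (bx_nonneg hb _))
        · exact (chi_integrable L).mul_const _
        · refine Filter.Eventually.of_forall fun m => ?_
          show ∫ c, chi L m * (bx a (x1 - m * x0 - c) * bx b (y1 - m * y0 - c)) ≤ _
          rw [integral_const_mul]
          apply mul_le_mul_of_nonneg_left _ (chi_nonneg L m)
          calc ∫ c, bx a (x1 - m * x0 - c) * bx b (y1 - m * y0 - c)
              ≤ ∫ c, 1 / (2 * a) * bx b (y1 - m * y0 - c) := by
                apply integral_mono_of_nonneg
                · exact Filter.Eventually.of_forall fun c =>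
                    mul_nonneg (bx_nonneg ha _) (bx_nonneg hb _)
                · exact ((bx_integrable b).comp_sub_left _).const_mul _
                · exact Filter.Eventually.of_forall fun c =>
                    mul_le_mul_of_nonneg_right (bx_le ha _) (bx_nonneg hb _)
            _ = 1 / (2 * a) := by
                rw [integral_const_mul, integral_sub_left_eq_self (bx b), integral_bx hb, mul_one]
    _ ≤ (L + 2) / a := by
        rw [integral_mul_const]
        calc (∫ m, chi L m) * (1 / (2 * a)) ≤ 2 * (L + 2) * (1 / (2 * a)) := by
              gcongr
              exact integral_chi_le hL
          _ = (L + 2) / a := by field_simp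

lemma gram_comm (L a b x0 x1 y0 y1 : ℝ) :
    gram L a b x0 x1 y0 y1 = gram L b a y0 y1 x0 x1 := by
  unfold gram
  congr 1
  ext z
  ring

lemma gram_eq_zero {L a b x0 x1 y0 y1 : ℝ}
    (h : a + b < |x1 - y1| - (L + 2) * |x0 - y0|) : gram L a b x0 x1 y0 y1 = 0 := by
  unfold gram
  apply integral_eq_zero_of_ae
  refine Filter.Eventually.of_forall fun z => ?_
  by_contra hz
  change ¬ chi L z.1 * (bx a (x1 - z.1 * x0 - z.2) * bx b (y1 - z.1 * y0 - z.2)) = 0 at hz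
  have h1 : |z.1| ≤ L + 2 := by
    by_contra h
    rw [chi_eq_zero (not_le.1 h).le, zero_mul] at hz
    exact hz rfl
  have h2 : |x1 - z.1 * x0 - z.2| ≤ a := by
    by_contra h
    rw [bx_eq_zero (not_le.1 h), zero_mul, mul_zero] at hz
    exact hz rfl
  have h3 : |y1 - z.1 * y0 - z.2| ≤ b := by
    by_contra h
    rw [bx_eq_zero (not_le.1 h), mul_zero, mul_zero] at hz
    exact hz rfl
  have h4 := abs_sub (x1 - z.1 * x0 - z.2) (y1 - z.1 * y0 - z.2)
  have h5 := abs_add_le (x1 - z.1 * x0 - z.2 - (y1 - z.1 * y0 - z.2)) (z.1 * (x0 - y0))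
  rw [show x1 - z.1 * x0 - z.2 - (y1 - z.1 * y0 - z.2) + z.1 * (x0 - y0) = x1 - y1 by ring,
    abs_mul] at h5
  have h6 : |z.1| * |x0 - y0| ≤ (L + 2) * |x0 - y0| := by gcongr
  linarith

lemma gram_translate {L a b : ℝ} (ha : 0 < a) (hb : 0 < b) (x0 x1 y0 y1 : ℝ) :
    gram L a b x0 x1 y0 y1 = gram L a b (x0 - y0) (x1 - y1) 0 0 := by
  unfold gram
  rw [Measure.volume_eq_prod, integral_prod _ (by
    rw [← Measure.volume_eq_prod]; exact gram_integrable ha hb x0 x1 y0 y1), integral_prod _ (by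
    rw [← Measure.volume_eq_prod]; exact gram_integrable ha hb _ _ 0 0)]
  congr 1
  ext m
  rw [← integral_add_right_eq_self _ (y1 - m * y0)]
  congr 1
  ext c
  ring_nf

/-- The slope integral for a fixed offset, by the substitution `u = A - m v`. -/
lemma inner_approx {L a v : ℝ} (ha : 0 < a) (hv : v ≠ 0) (A B : ℝ) :
    |(∫ m, chi L m * bx a (A - m * v)) - (chi L (B / v) / |v|)| ≤ (a + |A - B|) / v ^ 2 := by
  have hv' : 0 < |v| := abs_pos.2 hv
  have h1 : ∫ m, chi L m * bx a (A - m * v) =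
      |v|⁻¹ * ∫ u, chi L ((A - u) / v) * bx a u := by
    have := Measure.integral_comp_mul_right (fun t => chi L ((A - (A - t)) / v) * bx a (A - t)) v
    rw [integral_sub_left_eq_self (fun u => chi L ((A - u) / v) * bx a u), smul_eq_mul,
      abs_inv] at this
    rw [← this]
    congr 1
    ext m
    rw [sub_sub_cancel, mul_div_cancel_right₀ _ hv]
  have hinteg : Integrable (fun u => chi L ((A - u) / v) * bx a u) := by
    refine (bx_integrable a).bdd_mul (c := 1) ?_ ?_
    · apply Continuous.aestronglyMeasurable
      exact (chi_continuous L).comp (by fun_prop)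
    · refine Filter.Eventually.of_forall fun u => ?_
      rw [Real.norm_of_nonneg (chi_nonneg _ _)]
      exact chi_le_one _ _
  have h2 : (∫ m, chi L m * bx a (A - m * v)) - chi L (B / v) / |v| =
      |v|⁻¹ * ∫ u, (chi L ((A - u) / v) - chi L (B / v)) * bx a u := by
    simp_rw [sub_mul]
    rw [integral_sub hinteg ((bx_integrable a).const_mul _), integral_const_mul, integral_bx ha, h1]
    ring
  rw [h2, abs_mul, abs_of_pos (inv_pos.2 hv')]
  have h3 : |∫ u, (chi L ((A - u) / v) - chi L (B / v)) * bx a u| ≤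
      ∫ u, (a + |A - B|) / |v| * bx a u := by
    rw [← Real.norm_eq_abs]
    apply norm_integral_le_of_norm_le ((bx_integrable a).const_mul _)
    refine Filter.Eventually.of_forall fun u => ?_
    rw [Real.norm_eq_abs, abs_mul, abs_of_nonneg (bx_nonneg ha u)]
    by_cases hu : |u| ≤ a
    · apply mul_le_mul_of_nonneg_right _ (bx_nonneg ha u)
      refine (chi_lip _ _ _).trans ?_
      rw [← sub_div, abs_div]
      gcongr
      have := abs_sub (A - B) u
      rw [show A - u - B = A - B - u by ring]
      linarith
    · rw [bx_eq_zero (not_le.1 hu), mul_zero, mul_zero]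
  rw [integral_const_mul, integral_bx ha, mul_one] at h3
  calc |v|⁻¹ * |∫ u, (chi L ((A - u) / v) - chi L (B / v)) * bx a u|
      ≤ |v|⁻¹ * ((a + |A - B|) / |v|) := by gcongr
    _ = (a + |A - B|) / v ^ 2 := by
      rw [← sq_abs v]
      field_simp

/-- Away from the diagonal the correlation is `chi L (slope) / |x₀ - y₀|` up to a relative error
of the order of the width over the distance. -/
lemma gram_approx {L a b : ℝ} (ha : 0 < a) (hb : 0 < b) {x0 x1 y0 y1 : ℝ} (h : x0 - y0 ≠ 0) :
    |gram L a b x0 x1 y0 y1 - (chi L ((x1 - y1) / (x0 - y0)) / |x0 - y0|)| ≤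
      (a + b) / (x0 - y0) ^ 2 := by
  rw [gram_translate ha hb]
  set v := x0 - y0
  set B := x1 - y1
  have hI := gram_integrable (L := L) ha hb v B 0 0
  rw [Measure.volume_eq_prod] at hI
  have hI2 := hI.integral_prod_right
  have e : ∀ c : ℝ, ∫ m, chi L m * (bx a (B - m * v - c) * bx b (0 - m * 0 - c)) =
      (∫ m, chi L m * bx a (B - c - m * v)) * bx b (-c) := by
    intro c
    rw [← integral_mul_const]
    congr 1
    ext m
    ring_nf
  have e2 : gram L a b v B 0 0 =
      ∫ c, (∫ m, chi L m * bx a (B - c - m * v)) * bx b (-c) := by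
    unfold gram
    rw [Measure.volume_eq_prod, integral_prod_symm _ hI]
    congr 1
    ext c
    exact e c
  have hI3 : Integrable fun c => (∫ m, chi L m * bx a (B - c - m * v)) * bx b (-c) := by
    refine hI2.congr (Filter.Eventually.of_forall fun c => ?_)
    exact e c
  have hbn : ∫ c, bx b (-c) = 1 := by
    rw [integral_neg_eq_self (bx b), integral_bx hb]
  have hbi : Integrable fun c => bx b (-c) := (bx_integrable b).comp_neg
  have h2 : gram L a b v B 0 0 - chi L (B / v) / |v| =
      ∫ c, ((∫ m, chi L m * bx a (B - c - m * v)) - chi L (B / v) / |v|) * bx b (-c) := by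
    simp_rw [sub_mul]
    rw [integral_sub (by simpa using hI3) (hbi.const_mul _), integral_const_mul, hbn, e2, mul_one]
  rw [h2]
  have h3 : |∫ c, ((∫ m, chi L m * bx a (B - c - m * v)) - chi L (B / v) / |v|) * bx b (-c)| ≤
      ∫ c, (a + b) / v ^ 2 * bx b (-c) := by
    rw [← Real.norm_eq_abs]
    apply norm_integral_le_of_norm_le (hbi.const_mul _)
    refine Filter.Eventually.of_forall fun c => ?_
    rw [Real.norm_eq_abs, abs_mul, abs_of_nonneg (bx_nonneg hb (-c))]
    by_cases hu : |-c| ≤ b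
    · apply mul_le_mul_of_nonneg_right _ (bx_nonneg hb _)
      refine (inner_approx ha h (B - c) B).trans ?_
      rw [show B - c - B = -c by ring]
      gcongr
    · rw [bx_eq_zero (not_le.1 hu), mul_zero, mul_zero]
  rwa [integral_const_mul, hbn, mul_one] at h3

section kernel

variable {L a b d x0 x1 y0 y1 : ℝ}

lemma gram_far (hdd : d ^ 2 = (x0 - y0) ^ 2 + (x1 - y1) ^ 2)
    (hab : 2 * (a + b) ≤ d) (h : (2 * L + 6) * |x0 - y0| < d) :
    gram L a b x0 x1 y0 y1 = 0 := by
  apply gram_eq_zero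
  have h1 : d ≤ |x0 - y0| + |x1 - y1| := by
    apply le_of_sq_le_sq _ (by positivity)
    rw [hdd, ← sq_abs (x0 - y0), ← sq_abs (x1 - y1)]
    nlinarith [abs_nonneg (x0 - y0), abs_nonneg (x1 - y1)]
  linarith

lemma gram_diag_le (hL : 0 ≤ L) (ha : 0 < a) (hd : 0 ≤ d)
    (hdd : d ^ 2 = (x0 - y0) ^ 2 + (x1 - y1) ^ 2) :
    gram L a a x0 x1 y0 y1 ≤ (2 * L + 6) ^ 2 / max d a := by
  have hmax : 0 < max d a := lt_max_of_lt_right ha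
  by_cases h4 : 4 * a ≤ d
  · have hd0 : 0 < d := by linarith
    have hmd : max d a = d := max_eq_left (by linarith)
    by_cases hfar : (2 * L + 6) * |x0 - y0| < d
    · rw [gram_far hdd (by linarith) hfar]
      positivity
    · push Not at hfar
      have hv : 0 < |x0 - y0| := by
        by_contra h
        have : |x0 - y0| = 0 := le_antisymm (not_lt.1 h) (abs_nonneg _)
        rw [this] at hfar
        linarith
      have h1 := (abs_le.1 (gram_approx (L := L) (x1 := x1) (y1 := y1) ha ha
        (abs_pos.1 hv))).2
      have h2 : chi L ((x1 - y1) / (x0 - y0)) / |x0 - y0| ≤ (2 * L + 6) / d := by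
        rw [div_le_div_iff₀ hv hd0]
        calc _ ≤ 1 * d := by gcongr; exact chi_le_one _ _
          _ ≤ _ := by linarith
      have h3 : (a + a) / (x0 - y0) ^ 2 ≤ (2 * L + 6) ^ 2 / (2 * d) := by
        rw [← sq_abs (x0 - y0), div_le_div_iff₀ (by positivity) (by positivity)]
        calc (a + a) * (2 * d) ≤ d * d := by nlinarith
          _ ≤ ((2 * L + 6) * |x0 - y0|) * ((2 * L + 6) * |x0 - y0|) := by gcongr
          _ = _ := by ring
      rw [hmd]
      calc _ ≤ (2 * L + 6) / d + (2 * L + 6) ^ 2 / (2 * d) := by linarith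
        _ ≤ (2 * L + 6) ^ 2 / d := by
          rw [div_add_div _ _ hd0.ne' (by positivity), div_le_div_iff₀ (by positivity) hd0]
          have e : 2 * (2 * L + 6) ≤ (2 * L + 6) ^ 2 := by nlinarith
          have e2 := mul_le_mul_of_nonneg_right e (by positivity : 0 ≤ d * d)
          nlinarith
  · push Not at h4
    refine (gram_le hL ha ha _ _ _ _).trans ?_
    rw [div_le_div_iff₀ ha hmax]
    have : max d a ≤ 4 * a := max_le h4.le (by linarith)
    calc (L + 2) * max d a ≤ (L + 2) * (4 * a) := by gcongr
      _ = (4 * L + 8) * a := by ring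
      _ ≤ _ := mul_le_mul_of_nonneg_right (by nlinarith) ha.le

/-- The Gram kernel of the difference of the strip averages at widths `a` and `b` decays faster
than that of the averages themselves. -/
lemma gram_diff_le {θ : ℝ} (hθ : 0 < θ) (hθ1 : θ ≤ 1) (hL : 0 ≤ L) (ha : 0 < a) (hab : a ≤ b)
    (hd : 0 ≤ d) (hdd : d ^ 2 = (x0 - y0) ^ 2 + (x1 - y1) ^ 2) :
    gram L a a x0 x1 y0 y1 - gram L a b x0 x1 y0 y1 - gram L b a x0 x1 y0 y1 +
      gram L b b x0 x1 y0 y1 ≤ 8 * (2 * L + 6) ^ 2 * b ^ θ / (max d a) ^ (1 + θ) := by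
  have hb : 0 < b := ha.trans_le hab
  have hmax : 0 < max d a := lt_max_of_lt_right ha
  by_cases h4 : 4 * b ≤ d
  · have hd0 : 0 < d := by linarith
    have hmd : max d a = d := max_eq_left (by linarith)
    by_cases hfar : (2 * L + 6) * |x0 - y0| < d
    · rw [gram_far hdd (by linarith) hfar, gram_far hdd (by linarith) hfar,
        gram_far hdd (by linarith) hfar, gram_far hdd (by linarith) hfar]
      simp only [sub_zero, add_zero]
      positivity
    · push Not at hfar
      have hv : 0 < |x0 - y0| := by
        by_contra h
        have : |x0 - y0| = 0 := le_antisymm (not_lt.1 h) (abs_nonneg _)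
        rw [this] at hfar
        linarith
      have hv0 := abs_pos.1 hv
      have h1 := (abs_le.1 (gram_approx (L := L) (x1 := x1) (y1 := y1) ha ha hv0)).2
      have h2 := (abs_le.1 (gram_approx (L := L) (x1 := x1) (y1 := y1) ha hb hv0)).1
      have h3 := (abs_le.1 (gram_approx (L := L) (x1 := x1) (y1 := y1) hb ha hv0)).1
      have h5 := (abs_le.1 (gram_approx (L := L) (x1 := x1) (y1 := y1) hb hb hv0)).2
      have h6 : (a + a) / (x0 - y0) ^ 2 + (a + b) / (x0 - y0) ^ 2 + (b + a) / (x0 - y0) ^ 2 +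
          (b + b) / (x0 - y0) ^ 2 ≤ 8 * b / (x0 - y0) ^ 2 := by
        rw [← add_div, ← add_div, ← add_div]
        gcongr
        linarith
      have h7 : 8 * b / (x0 - y0) ^ 2 ≤ 8 * (2 * L + 6) ^ 2 * b / d ^ 2 := by
        rw [← sq_abs (x0 - y0), div_le_div_iff₀ (by positivity) (by positivity)]
        calc 8 * b * d ^ 2 ≤ 8 * b * ((2 * L + 6) * |x0 - y0|) ^ 2 := by gcongr
          _ = _ := by ring
      have h8 : b / d ^ 2 ≤ b ^ θ / d ^ (1 + θ) := by
        rw [div_le_div_iff₀ (by positivity) (by positivity)]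
        have e1 : b = b ^ θ * b ^ (1 - θ) := by
          rw [← Real.rpow_add hb]; simp
        have e2 : d ^ 2 = d ^ (1 + θ) * d ^ (1 - θ) := by
          rw [← Real.rpow_add hd0, ← Real.rpow_natCast]
          congr 1
          push_cast
          ring
        rw [e2]
        nth_rewrite 1 [e1]
        have e3 : b ^ (1 - θ) ≤ d ^ (1 - θ) :=
          Real.rpow_le_rpow hb.le (by linarith) (by linarith)
        have e4 : 0 ≤ b ^ θ * d ^ (1 + θ) := by positivity
        nlinarith
      rw [hmd]
      calc _ ≤ 8 * (2 * L + 6) ^ 2 * b / d ^ 2 := by linarith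
        _ = 8 * (2 * L + 6) ^ 2 * (b / d ^ 2) := by ring
        _ ≤ 8 * (2 * L + 6) ^ 2 * (b ^ θ / d ^ (1 + θ)) := by gcongr
        _ = _ := by ring
  · push Not at h4
    have h1 := gram_diag_le (L := L) hL ha hd hdd
    have h2 := gram_diag_le (L := L) hL hb hd hdd
    have h3 := gram_nonneg (L := L) ha hb x0 x1 y0 y1
    have h5 := gram_nonneg (L := L) hb ha x0 x1 y0 y1
    have h6 : (2 * L + 6) ^ 2 / max d b ≤ (2 * L + 6) ^ 2 / max d a := by gcongr
    have hM : max d a ≤ 4 * b := max_le h4.le (by linarith)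
    have h7 : 1 / max d a ≤ 4 * b ^ θ / (max d a) ^ (1 + θ) := by
      rw [div_le_div_iff₀ hmax (by positivity), Real.rpow_add hmax, Real.rpow_one]
      have e1 : (max d a) ^ θ ≤ (4 * b) ^ θ := Real.rpow_le_rpow hmax.le hM hθ.le
      rw [Real.mul_rpow (by norm_num) hb.le] at e1
      have e2 : (4 : ℝ) ^ θ ≤ 4 := by
        calc (4 : ℝ) ^ θ ≤ 4 ^ (1 : ℝ) := Real.rpow_le_rpow_of_exponent_le (by norm_num) hθ1
          _ = 4 := Real.rpow_one _
      have e3 : 0 ≤ b ^ θ := by positivity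
      have e4 : (max d a) ^ θ ≤ 4 * b ^ θ := e1.trans (by gcongr)
      nlinarith
    calc _ ≤ 2 * (2 * L + 6) ^ 2 * (1 / max d a) := by
          rw [mul_one_div, mul_div_assoc]; linarith
      _ ≤ 2 * (2 * L + 6) ^ 2 * (4 * b ^ θ / (max d a) ^ (1 + θ)) := by gcongr
      _ = _ := by ring

end kernel

/-! ### Energy -/

lemma inv_rpow_le_dyadic {α : ℝ} (hα : 0 < α) (d ω : ℝ) (n : ℕ) (hω : (1 / 2 : ℝ) ^ (n + 1) ≤ ω) :
    1 / (max d ω) ^ α ≤ 1 + ∑ k ∈ Finset.range (n + 1),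
      if d ≤ (1 / 2 : ℝ) ^ k then ((1 / 2 : ℝ) ^ (k + 1)) ^ (-α) else 0 := by
  have hω0 : 0 < ω := lt_of_lt_of_le (by positivity) hω
  have hmax : 0 < max d ω := lt_max_of_lt_right hω0
  have hnn : ∀ k ∈ Finset.range (n + 1), 0 ≤
      if d ≤ (1 / 2 : ℝ) ^ k then ((1 / 2 : ℝ) ^ (k + 1)) ^ (-α) else (0 : ℝ) := by
    intro k _
    split_ifs <;> positivity
  by_cases h1 : d ≤ 1
  · obtain ⟨k, hk, hQ, hnext⟩ := exists_last (fun k => d ≤ (1 / 2 : ℝ) ^ k) n (by simpa using h1)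
    have h2 : (1 / 2 : ℝ) ^ (k + 1) ≤ max d ω := by
      rcases hnext with rfl | h
      · exact hω.trans (le_max_right _ _)
      · exact (not_le.1 h).le.trans (le_max_left _ _)
    have h3 := Finset.single_le_sum hnn (Finset.mem_range.2 (Nat.lt_succ_of_le hk))
    rw [if_pos hQ] at h3
    have h4 : 1 / (max d ω) ^ α ≤ ((1 / 2 : ℝ) ^ (k + 1)) ^ (-α) := by
      rw [one_div, ← Real.rpow_neg hmax.le]
      exact Real.rpow_le_rpow_of_nonpos (by positivity) h2 (by linarith)
    linarith
  · have h2 := Finset.sum_nonneg hnn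
    have h3 : 1 / (max d ω) ^ α ≤ 1 := by
      rw [div_le_one (by positivity)]
      exact Real.one_le_rpow ((not_le.1 h1).le.trans (le_max_left _ _)) hα.le
    linarith

/-- The truncated Riesz potentials of order `α < t` of a `t`-Frostman measure are bounded. -/
lemma energy_le {α t C : ℝ} (hα : 0 < α) (hαt : α < t) (hC : 0 ≤ C) :
    ∃ C' : ℝ, 0 < C' ∧ ∀ (X : Finset Plane) (ν : Plane → ℝ) (ω : ℝ) (p : Plane),
      (∀ x, 0 ≤ ν x) → 0 < ω → wt X ν Set.univ ≤ C →
      (∀ ρ, ω ≤ ρ → wt X ν (Metric.closedBall p ρ) ≤ C * ρ ^ t) →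
      ∑ x ∈ X, ν x / (max (dist x p) ω) ^ α ≤ C' := by
  set y : ℝ := (1 / 2 : ℝ) ^ (t - α) with hy
  have hy0 : 0 < y := by positivity
  have hy1 : y < 1 := Real.rpow_lt_one (by norm_num) (by norm_num) (by linarith)
  refine ⟨C + C * (1 / 2 : ℝ) ^ (-α) * (1 - y)⁻¹ + 1, ?_, ?_⟩
  · have : 0 < 1 - y := by linarith
    positivity
  intro X ν ω p hν hω htot hfr
  have hgeo : ∀ n, ∑ k ∈ Finset.range n, y ^ k ≤ (1 - y)⁻¹ := by
    intro n
    rw [← tsum_geometric_of_lt_one hy0.le hy1]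
    exact (summable_geometric_of_lt_one hy0.le hy1).sum_le_tsum _ (fun _ _ => by positivity)
  have hmain : ∀ n : ℕ, (1 / 2 : ℝ) ^ (n + 1) ≤ ω → (∀ k ≤ n, n = 0 ∨ ω ≤ (1 / 2 : ℝ) ^ k) →
      ∑ x ∈ X, ν x / (max (dist x p) ω) ^ α ≤ C + C * (1 / 2 : ℝ) ^ (-α) * (1 - y)⁻¹ := by
    intro n hn hn2
    calc ∑ x ∈ X, ν x / (max (dist x p) ω) ^ α
        ≤ ∑ x ∈ X, ν x * (1 + ∑ k ∈ Finset.range (n + 1),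
          if dist x p ≤ (1 / 2 : ℝ) ^ k then ((1 / 2 : ℝ) ^ (k + 1)) ^ (-α) else 0) := by
          apply Finset.sum_le_sum
          intro x _
          rw [div_eq_mul_one_div]
          exact mul_le_mul_of_nonneg_left (inv_rpow_le_dyadic hα _ _ _ hn) (hν x)
      _ = wt X ν Set.univ + ∑ k ∈ Finset.range (n + 1), ((1 / 2 : ℝ) ^ (k + 1)) ^ (-α) *
            wt X ν (Metric.closedBall p ((1 / 2 : ℝ) ^ k)) := by
          classical
          unfold wt
          simp_rw [mul_add, Finset.sum_add_distrib, Finset.mul_sum]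
          refine congr_arg₂ (· + ·) (Finset.sum_congr rfl fun x _ => ?_) ?_
          · rw [mul_one, Set.indicator_univ]
          · rw [Finset.sum_comm]
            refine Finset.sum_congr rfl fun k _ => Finset.sum_congr rfl fun x _ => ?_
            simp only [Set.indicator_apply, Metric.mem_closedBall]
            split_ifs <;> ring
      _ ≤ C + ∑ k ∈ Finset.range (n + 1), C * (1 / 2 : ℝ) ^ (-α) * y ^ k := by
          refine add_le_add htot (Finset.sum_le_sum fun k hk => ?_)
          have hb : wt X ν (Metric.closedBall p ((1 / 2 : ℝ) ^ k)) ≤ C * ((1 / 2 : ℝ) ^ k) ^ t := by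
            rcases hn2 k (by exact Nat.lt_succ_iff.1 (Finset.mem_range.1 hk)) with h0 | h
            · have : k = 0 := by
                have := Finset.mem_range.1 hk
                lia
              subst this
              simpa using (wt_le_univ hν _).trans htot
            · exact hfr _ h
          calc _ ≤ ((1 / 2 : ℝ) ^ (k + 1)) ^ (-α) * (C * ((1 / 2 : ℝ) ^ k) ^ t) := by gcongr
            _ = C * (1 / 2 : ℝ) ^ (-α) * y ^ k := by
              have h2 : (0 : ℝ) < 1 / 2 := by norm_num
              have e : ((1 / 2 : ℝ) ^ (k + 1)) ^ (-α) * ((1 / 2 : ℝ) ^ k) ^ t =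
                  (1 / 2 : ℝ) ^ (-α) * y ^ k := by
                rw [hy, ← Real.rpow_natCast, ← Real.rpow_natCast, ← Real.rpow_natCast,
                  ← Real.rpow_mul h2.le, ← Real.rpow_mul h2.le, ← Real.rpow_mul h2.le,
                  ← Real.rpow_add h2, ← Real.rpow_add h2]
                congr 1
                push_cast
                ring
              linear_combination C * e
      _ ≤ C + C * (1 / 2 : ℝ) ^ (-α) * (1 - y)⁻¹ := by
          rw [← Finset.mul_sum]
          gcongr
          exact hgeo _
  by_cases h1 : ω ≤ 1
  · have hex : ∃ n : ℕ, (1 / 2 : ℝ) ^ n < ω := exists_pow_lt_of_lt_one hω (by norm_num)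
    classical
    obtain ⟨n, hn⟩ : ∃ n, Nat.find hex = n + 1 := by
      apply Nat.exists_eq_succ_of_ne_zero
      intro h0
      have := Nat.find_spec hex
      rw [h0] at this
      simp at this
      linarith
    have hs := Nat.find_spec hex
    rw [hn] at hs
    have := hmain n hs.le (fun k hk => Or.inr (not_lt.1 (Nat.find_min hex (by lia))))
    linarith
  · have := hmain 0 (by norm_num; linarith) (fun k hk => Or.inl rfl)
    linarith

/-! ### Few pairs of points span heavy tubes -/

section heavy

variable {X Y : Finset Plane} {ν μ : Plane → ℝ}

/-- The average of `ν` over the strip of half-width `a` about the line `{p | p j = m p i + c}`,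
with `z = (m, c)`. -/
noncomputable def strip (X : Finset Plane) (ν : Plane → ℝ) (i j : Fin 2) (a : ℝ) (z : ℝ × ℝ) : ℝ :=
  ∑ x ∈ X, ν x * bx a (x j - z.1 * x i - z.2)

lemma strip_nonneg (hν : ∀ x, 0 ≤ ν x) {a : ℝ} (ha : 0 < a) (i j : Fin 2) (z : ℝ × ℝ) :
    0 ≤ strip X ν i j a z :=
  Finset.sum_nonneg fun x _ => mul_nonneg (hν x) (bx_nonneg ha _)

lemma strip_mul_eq (L a b : ℝ) (i j : Fin 2) (z : ℝ × ℝ) :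
    chi L z.1 * (strip X ν i j a z * strip Y μ i j b z) =
      ∑ x ∈ X, ∑ y ∈ Y, ν x * μ y * (chi L z.1 * (bx a (x j - z.1 * x i - z.2) *
        bx b (y j - z.1 * y i - z.2))) := by
  unfold strip
  rw [Finset.sum_mul_sum, Finset.mul_sum]
  refine Finset.sum_congr rfl fun x _ => ?_
  rw [Finset.mul_sum]
  refine Finset.sum_congr rfl fun y _ => ?_
  ring

lemma strip_integrable (L : ℝ) {a b : ℝ} (ha : 0 < a) (hb : 0 < b) (i j : Fin 2) :
    Integrable fun z : ℝ × ℝ => chi L z.1 * (strip X ν i j a z * strip Y μ i j b z) := by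
  simp_rw [strip_mul_eq]
  refine integrable_finsetSum _ fun x _ => integrable_finsetSum _ fun y _ => ?_
  exact (gram_integrable ha hb _ _ _ _).const_mul _

lemma strip_integral (L : ℝ) {a b : ℝ} (ha : 0 < a) (hb : 0 < b) (i j : Fin 2) :
    ∫ z : ℝ × ℝ, chi L z.1 * (strip X ν i j a z * strip Y μ i j b z) =
      ∑ x ∈ X, ∑ y ∈ Y, ν x * μ y * gram L a b (x i) (x j) (y i) (y j) := by
  simp_rw [strip_mul_eq]
  rw [integral_finsetSum]
  · refine Finset.sum_congr rfl fun x _ => ?_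
    rw [integral_finsetSum]
    · refine Finset.sum_congr rfl fun y _ => ?_
      rw [integral_const_mul]
      rfl
    · exact fun y _ => (gram_integrable ha hb _ _ _ _).const_mul _
  · exact fun x _ => integrable_finsetSum _ fun y _ =>
      (gram_integrable ha hb _ _ _ _).const_mul _

lemma dist_sq' {i j : Fin 2} (hij : i ≠ j) (x y : Plane) :
    dist x y ^ 2 = (x i - y i) ^ 2 + (x j - y j) ^ 2 := by
  rw [dist_sq]
  fin_cases i <;> fin_cases j <;> simp_all [add_comm]

lemma abs_cross {i j : Fin 2} (hij : i ≠ j) (a b : Plane) :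
    |cross a b| = |a i * b j - a j * b i| := by
  unfold cross
  fin_cases i <;> fin_cases j <;> simp_all [abs_sub_comm]

/-- A point in the tube around `x, y` is close to every line that is close to both `x` and `y`. -/
lemma near_line {i j : Fin 2} (hij : i ≠ j) {c₀ R w : ℝ} (hc₀ : 0 < c₀) {x y x' : Plane}
    (hsep : c₀ ≤ |x i - y i|) (hx' : |x' i| ≤ R) (hy : |y i| ≤ R)
    (hcr : |cross (x' - y) (x - y)| ≤ w) {m c : ℝ}
    (h1 : |x j - m * x i - c| ≤ w) (h2 : |y j - m * y i - c| ≤ w) :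
    |x' j - m * x' i - c| ≤ (1 + (4 * R + 1) / c₀) * w := by
  have hv : 0 < |x i - y i| := hc₀.trans_le hsep
  have hw : 0 ≤ w := (abs_nonneg _).trans h1
  rw [abs_cross hij] at hcr
  simp only [PiLp.sub_apply] at hcr
  have e : (x' j - m * x' i - c) * (x i - y i) = (y j - m * y i - c) * (x i - y i) +
      (x' i - y i) * ((x j - m * x i - c) - (y j - m * y i - c)) -
      ((x' i - y i) * (x j - y j) - (x' j - y j) * (x i - y i)) := by ring
  have e1 : |x' i - y i| ≤ 2 * R := by linarith [abs_sub (x' i) (y i)]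
  have e2 : |(x j - m * x i - c) - (y j - m * y i - c)| ≤ 2 * w := by
    linarith [abs_sub (x j - m * x i - c) (y j - m * y i - c)]
  have h3 : |x' j - m * x' i - c| * |x i - y i| ≤ w * |x i - y i| + 2 * R * (2 * w) + w := by
    rw [← abs_mul, e]
    refine (abs_sub _ _).trans (add_le_add ((abs_add_le _ _).trans (add_le_add ?_ ?_)) hcr)
    · rw [abs_mul]; gcongr
    · rw [abs_mul]
      have : 0 ≤ 2 * R := (abs_nonneg _).trans e1
      gcongr
  have hR : 0 ≤ R := (abs_nonneg _).trans hy
  have h4 : (2 * R * (2 * w) + w) ≤ (4 * R + 1) / c₀ * w * |x i - y i| := by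
    have : (4 * R + 1) / c₀ * w * c₀ ≤ (4 * R + 1) / c₀ * w * |x i - y i| := by gcongr
    refine le_trans (le_of_eq ?_) this
    field_simp
    ring
  refine le_of_mul_le_mul_right ?_ hv
  calc _ ≤ _ := h3
    _ ≤ w * |x i - y i| + (4 * R + 1) / c₀ * w * |x i - y i| := by linarith
    _ = _ := by ring

end heavy

set_option maxHeartbeats 1000000 in
/-- Few pairs of points span tubes that are much heavier than their width. If `(x, y)` is such a pair
for the width `w` and the constant `K`, then for every line close to `x` and `y` the average of `ν`
over the strip of half-width `ω ≈ w` is at least `K / (2D)`, whereas averages over strips of half-width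
`ω' ≈ 1/K` are at most `K / (4D)`. By Cauchy-Schwarz over the space of lines, the mass of these
pairs is controlled by the `L²`-norm of the difference of the two strip averages, which is small
because `ν` has dimension more than one. -/
lemma heavy_tubes {t s c₀ R C : ℝ} (ht : 1 < t) (hs : 1 < s) (hc₀ : 0 < c₀) (hR : 0 < R)
    (hC : 0 < C) : ∃ C' K₁ η : ℝ, 0 < C' ∧ 1 ≤ K₁ ∧ 0 < η ∧
    ∀ (i j : Fin 2), i ≠ j → ∀ (X Y : Finset Plane) (ν μ : Plane → ℝ) (w K : ℝ),
      (∀ x, 0 ≤ ν x) → (∀ y, 0 ≤ μ y) →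
      (∀ x ∈ X, ∀ y ∈ Y, c₀ ≤ |x i - y i|) →
      (∀ x ∈ X, ∀ l, |x l| ≤ R) → (∀ y ∈ Y, ∀ l, |y l| ≤ R) →
      wt X ν Set.univ ≤ C → wt Y μ Set.univ ≤ C → 0 < w →
      (∀ p ρ, w ≤ ρ → wt X ν (Metric.closedBall p ρ) ≤ C * ρ ^ t) →
      (∀ p ρ, w ≤ ρ → wt Y μ (Metric.closedBall p ρ) ≤ C * ρ ^ s) →
      K₁ ≤ K →
      ∑ x ∈ X, ν x * wt Y μ {y | K * w < wt X ν {x' | |cross (x' - y) (x - y)| ≤ w}} ≤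
        C' * K ^ (-η) := by
  classical
  obtain ⟨θ, hθ, hθ1, hθt⟩ : ∃ θ : ℝ, 0 < θ ∧ θ ≤ 1 ∧ 1 + θ < t :=
    ⟨min 1 ((t - 1) / 2), lt_min one_pos (by linarith), min_le_left _ _, by
      linarith [min_le_right 1 ((t - 1) / 2)]⟩
  obtain ⟨C1, hC1, hE1⟩ := energy_le (α := 1 + θ) (t := t) (by linarith) hθt hC.le
  obtain ⟨C2, hC2, hE2⟩ := energy_le (α := 1) (t := s) (by linarith) hs hC.le
  set L : ℝ := 2 * R / c₀ with hL
  have hL0 : 0 ≤ L := by positivity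
  set D : ℝ := 1 + (4 * R + 1) / c₀ with hD
  have hD1 : 1 ≤ D := by
    have : 0 ≤ (4 * R + 1) / c₀ := by positivity
    linarith
  set A1 : ℝ := C * (8 * (2 * L + 6) ^ 2 * C1) with hA1
  set A2 : ℝ := C * ((2 * L + 6) ^ 2 * C2) with hA2
  have hA1p : 0 < A1 := by positivity
  have hA2p : 0 < A2 := by positivity
  refine ⟨4 * R * D * (A1 + A2) * (2 * D * C) ^ (θ / 2), max 1 (8 * R * C / c₀ ^ 2), θ / 2,
    by positivity, le_max_left _ _, by positivity, ?_⟩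
  intro i j hij X Y ν μ w K hν hμ hsep hXR hYR hXC hYC hw hfX hfY hK
  have hK1 : 1 ≤ K := (le_max_left _ _).trans hK
  have hK0 : 0 < K := by linarith
  have hKc : 8 * R * C / c₀ ^ 2 ≤ K := (le_max_right _ _).trans hK
  set bad : Plane → Plane → Prop :=
    fun x y => K * w < wt X ν {x' | |cross (x' - y) (x - y)| ≤ w} with hbad
  set S := ∑ x ∈ X, ν x * wt Y μ {y | bad x y} with hS
  change S ≤ _
  by_cases hwK : C ≤ K * w
  · have : S = 0 := by
      rw [hS]
      apply Finset.sum_eq_zero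
      intro x _
      have : {y | bad x y} = ∅ := by
        ext y
        simp only [Set.mem_ofPred_eq, Set.mem_empty_iff_false, iff_false, hbad, not_lt]
        exact ((wt_le_univ hν _).trans hXC).trans hwK
      rw [this]
      simp [wt]
    rw [this]
    positivity
  push Not at hwK
  set ω := D * w with hω
  set ω' := 2 * D * C / K with hω'
  have hω0 : 0 < ω := by positivity
  have hω'0 : 0 < ω' := by positivity
  have hwω : w ≤ ω := by rw [hω]; nlinarith
  have hωω' : ω ≤ ω' := by
    rw [hω, hω', le_div_iff₀ hK0]
    nlinarith
  set ε := ω' ^ (θ / 2) with hε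
  have hε0 : 0 < ε := by positivity
  have hεε : ε * ε = ω' ^ θ := by
    rw [hε, ← Real.rpow_add hω'0]
    congr 1
    ring
  -- the pair `(x, y)` is seen by many lines
  have hlow : ∀ x ∈ X, ∀ y ∈ Y, 1 / (4 * R) ≤ gram L w w (x i) (x j) (y i) (y j) := by
    intro x hx y hy
    have hv : c₀ ≤ |x i - y i| := hsep x hx y hy
    have hv0 : 0 < |x i - y i| := hc₀.trans_le hv
    have hv2 : |x i - y i| ≤ 2 * R := by
      linarith [abs_sub (x i) (y i), hXR x hx i, hYR y hy i]
    have hv3 : |x j - y j| ≤ 2 * R := by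
      linarith [abs_sub (x j) (y j), hXR x hx j, hYR y hy j]
    have h1 := (abs_le.1 (gram_approx (L := L) (x1 := x j) (y1 := y j) hw hw
      (abs_pos.1 hv0))).1
    rw [chi_eq_one (by
      rw [abs_div]
      calc |x j - y j| / |x i - y i| ≤ 2 * R / c₀ := by gcongr
        _ ≤ L + 1 := by linarith)] at h1
    have h2 : 1 / (2 * R) ≤ 1 / |x i - y i| := by gcongr
    have h3 : (w + w) / (x i - y i) ^ 2 ≤ 1 / (4 * R) := by
      rw [← sq_abs (x i - y i), div_le_div_iff₀ (by positivity) (by positivity)]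
      have h4 : w * (8 * R) ≤ c₀ ^ 2 := by
        rw [div_le_iff₀ (by positivity)] at hKc
        have : K * (w * (8 * R)) ≤ K * c₀ ^ 2 := by nlinarith
        exact le_of_mul_le_mul_left this hK0
      have h5 : c₀ ^ 2 ≤ |x i - y i| ^ 2 := by gcongr
      linarith
    have h6 : 1 / (2 * R) = 1 / (4 * R) + 1 / (4 * R) := by field_simp; norm_num
    linarith
  -- the contribution of a single line
  have hpt : ∀ z : ℝ × ℝ, chi L z.1 * (∑ x ∈ X, ∑ y ∈ Y, if bad x y then
      ν x * μ y * (bx w (x j - z.1 * x i - z.2) * bx w (y j - z.1 * y i - z.2)) else 0) ≤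
      D * (ε⁻¹ * (chi L z.1 * (strip X ν i j ω z * strip X ν i j ω z) -
        chi L z.1 * (strip X ν i j ω z * strip X ν i j ω' z) -
        chi L z.1 * (strip X ν i j ω' z * strip X ν i j ω z) +
        chi L z.1 * (strip X ν i j ω' z * strip X ν i j ω' z)) +
        ε * (chi L z.1 * (strip Y μ i j w z * strip Y μ i j w z))) := by
    intro z
    set F := strip X ν i j ω z with hF
    set F' := strip X ν i j ω' z with hF'
    set M := strip Y μ i j w z with hM
    have hMn : 0 ≤ M := strip_nonneg hμ hw _ _ _
    have hFn : 0 ≤ F := strip_nonneg hν hω0 _ _ _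
    suffices h : (∑ x ∈ X, ∑ y ∈ Y, if bad x y then
      ν x * μ y * (bx w (x j - z.1 * x i - z.2) * bx w (y j - z.1 * y i - z.2)) else 0) ≤
        D * (ε⁻¹ * (F - F') ^ 2 + ε * M ^ 2) by
      calc _ ≤ chi L z.1 * (D * (ε⁻¹ * (F - F') ^ 2 + ε * M ^ 2)) :=
            mul_le_mul_of_nonneg_left h (chi_nonneg _ _)
        _ = _ := by ring
    by_cases hex : ∃ x ∈ X, ∃ y ∈ Y, bad x y ∧ |x j - z.1 * x i - z.2| ≤ w ∧
        |y j - z.1 * y i - z.2| ≤ w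
    · obtain ⟨x, hx, y, hy, hxy, hx1, hy1⟩ := hex
      have hFlow : K / (2 * D) ≤ F := by
        have h1 : wt X ν {x' | |cross (x' - y) (x - y)| ≤ w} * (1 / (2 * ω)) ≤ F := by
          rw [hF, strip, wt, Finset.sum_mul]
          apply Finset.sum_le_sum
          intro x' hx'
          by_cases hmem : x' ∈ {x' | |cross (x' - y) (x - y)| ≤ w}
          · rw [Set.indicator_of_mem hmem, bx_eq]
            exact near_line hij hc₀ (hsep x hx y hy) (hXR x' hx' i) (hYR y hy i) hmem hx1 hy1
          · rw [Set.indicator_of_notMem hmem, zero_mul]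
            exact mul_nonneg (hν _) (bx_nonneg hω0 _)
        refine le_trans ?_ h1
        calc K / (2 * D) = K * w * (1 / (2 * ω)) := by
              rw [hω]; field_simp
          _ ≤ _ := by gcongr
      have hF'up : F' ≤ K / (4 * D) := by
        calc F' ≤ wt X ν Set.univ * (1 / (2 * ω')) := by
              rw [hF', strip, wt, Finset.sum_mul]
              apply Finset.sum_le_sum
              intro x' _
              rw [Set.indicator_univ]
              exact mul_le_mul_of_nonneg_left (bx_le hω'0 _) (hν _)
          _ ≤ C * (1 / (2 * ω')) := by gcongr
          _ = K / (4 * D) := by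
              rw [hω']; field_simp; ring
      have hhalf : F ≤ 2 * (F - F') := by
        have : K / (2 * D) = 2 * (K / (4 * D)) := by field_simp; norm_num
        linarith
      have hsum : (∑ x ∈ X, ∑ y ∈ Y, if bad x y then
          ν x * μ y * (bx w (x j - z.1 * x i - z.2) * bx w (y j - z.1 * y i - z.2)) else 0) ≤
          D * F * M := by
        rw [hF, hM, mul_assoc, strip, strip, Finset.sum_mul_sum, Finset.mul_sum]
        simp_rw [Finset.mul_sum]
        refine Finset.sum_le_sum fun x _ => Finset.sum_le_sum fun y _ => ?_
        have b1 := bx_nonneg hw (y j - z.1 * y i - z.2)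
        have b2 := bx_nonneg hω0 (x j - z.1 * x i - z.2)
        have b3 : bx w (x j - z.1 * x i - z.2) ≤ D * bx ω (x j - z.1 * x i - z.2) := by
          by_cases h : |x j - z.1 * x i - z.2| ≤ w
          · rw [bx_eq h, bx_eq (h.trans hwω), hω]
            apply le_of_eq
            field_simp
          · rw [bx_eq_zero (not_le.1 h)]
            positivity
        have n1 := hν x
        have n2 := hμ y
        split_ifs
        · calc _ ≤ ν x * μ y * ((D * bx ω (x j - z.1 * x i - z.2)) *
                bx w (y j - z.1 * y i - z.2)) := by gcongr
            _ = _ := by ring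
        · positivity
      have hamgm : 2 * ((F - F') * M) ≤ ε⁻¹ * (F - F') ^ 2 + ε * M ^ 2 := by
        have h1 : 0 ≤ ε⁻¹ * (F - F' - ε * M) ^ 2 := by positivity
        have h2 : ε⁻¹ * (F - F' - ε * M) ^ 2 =
            ε⁻¹ * (F - F') ^ 2 + ε * M ^ 2 - 2 * ((F - F') * M) := by
          field_simp
          ring
        linarith
      calc _ ≤ D * F * M := hsum
        _ ≤ D * (2 * (F - F')) * M := by gcongr
        _ = D * (2 * ((F - F') * M)) := by ring
        _ ≤ _ := by gcongr
    · push Not at hex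
      have : (∑ x ∈ X, ∑ y ∈ Y, if bad x y then
          ν x * μ y * (bx w (x j - z.1 * x i - z.2) * bx w (y j - z.1 * y i - z.2)) else 0) = 0 := by
        refine Finset.sum_eq_zero fun x hx => Finset.sum_eq_zero fun y hy => ?_
        split_ifs with hb
        · by_cases h : |x j - z.1 * x i - z.2| ≤ w
          · rw [bx_eq_zero (hex x hx y hy hb h)]; simp
          · rw [bx_eq_zero (not_le.1 h)]; simp
        · rfl
      rw [this]
      positivity
  -- integrate over all lines
  have hI := fun (a b : ℝ) (ha : 0 < a) (hb : 0 < b) =>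
    strip_integrable (X := X) (Y := X) (ν := ν) (μ := ν) L ha hb i j
  have hIY := strip_integrable (X := Y) (Y := Y) (ν := μ) (μ := μ) L hw hw i j
  have hpt' : ∀ z : ℝ × ℝ, (∑ x ∈ X, ∑ y ∈ Y, (if bad x y then ν x * μ y else 0) *
      (chi L z.1 * (bx w (x j - z.1 * x i - z.2) * bx w (y j - z.1 * y i - z.2)))) ≤
      D * (ε⁻¹ * (chi L z.1 * (strip X ν i j ω z * strip X ν i j ω z) -
        chi L z.1 * (strip X ν i j ω z * strip X ν i j ω' z) -
        chi L z.1 * (strip X ν i j ω' z * strip X ν i j ω z) +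
        chi L z.1 * (strip X ν i j ω' z * strip X ν i j ω' z)) +
        ε * (chi L z.1 * (strip Y μ i j w z * strip Y μ i j w z))) := by
    intro z
    refine le_trans (le_of_eq ?_) (hpt z)
    rw [Finset.mul_sum]
    refine Finset.sum_congr rfl fun x _ => ?_
    rw [Finset.mul_sum]
    refine Finset.sum_congr rfl fun y _ => ?_
    split_ifs <;> ring
  have hinteg := integral_mono (μ := volume) (integrable_finsetSum X fun x _ =>
    integrable_finsetSum Y fun y _ => (gram_integrable (L := L) hw hw _ _ _ _).const_mul _)
    (((((((hI ω ω hω0 hω0).sub (hI ω ω' hω0 hω'0)).sub (hI ω' ω hω'0 hω0)).add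
      (hI ω' ω' hω'0 hω'0)).const_mul ε⁻¹).add (hIY.const_mul ε)).const_mul D) hpt'
  rw [integral_finsetSum _ (fun x _ => integrable_finsetSum Y fun y _ =>
    (gram_integrable (L := L) hw hw _ _ _ _).const_mul _)] at hinteg
  simp only [Pi.add_apply, Pi.sub_apply] at hinteg
  rw [integral_const_mul, integral_add (by
    exact (((((hI ω ω hω0 hω0).sub (hI ω ω' hω0 hω'0)).sub (hI ω' ω hω'0 hω0)).add
      (hI ω' ω' hω'0 hω'0)).const_mul ε⁻¹)) (hIY.const_mul ε), integral_const_mul,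
    integral_const_mul, integral_add (by
      exact ((hI ω ω hω0 hω0).sub (hI ω ω' hω0 hω'0)).sub (hI ω' ω hω'0 hω0))
      (hI ω' ω' hω'0 hω'0), integral_sub (by
      exact (hI ω ω hω0 hω0).sub (hI ω ω' hω0 hω'0)) (hI ω' ω hω'0 hω0),
    integral_sub (hI ω ω hω0 hω0) (hI ω ω' hω0 hω'0), strip_integral L hω0 hω0,
    strip_integral L hω0 hω'0, strip_integral L hω'0 hω0, strip_integral L hω'0 hω'0,
    strip_integral L hw hw] at hinteg
  have hleft : S * (1 / (4 * R)) ≤ ∑ x ∈ X, ∫ z : ℝ × ℝ, ∑ y ∈ Y,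
      (if bad x y then ν x * μ y else 0) *
      (chi L z.1 * (bx w (x j - z.1 * x i - z.2) * bx w (y j - z.1 * y i - z.2))) := by
    rw [hS, Finset.sum_mul]
    refine Finset.sum_le_sum fun x hx => ?_
    rw [integral_finsetSum _ (fun y _ => (gram_integrable (L := L) hw hw _ _ _ _).const_mul _),
      wt, Finset.mul_sum, Finset.sum_mul]
    refine Finset.sum_le_sum fun y hy => ?_
    rw [integral_const_mul]
    change _ ≤ _ * gram L w w (x i) (x j) (y i) (y j)
    have hg := hlow x hx y hy
    have n1 := hν x
    have n2 := hμ y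
    simp only [Set.indicator_apply, Set.mem_ofPred_eq]
    split_ifs
    · gcongr
    · simp
  have hdiff : ∑ x ∈ X, ∑ y ∈ X, ν x * ν y * gram L ω ω (x i) (x j) (y i) (y j) -
      ∑ x ∈ X, ∑ y ∈ X, ν x * ν y * gram L ω ω' (x i) (x j) (y i) (y j) -
      ∑ x ∈ X, ∑ y ∈ X, ν x * ν y * gram L ω' ω (x i) (x j) (y i) (y j) +
      ∑ x ∈ X, ∑ y ∈ X, ν x * ν y * gram L ω' ω' (x i) (x j) (y i) (y j) ≤ A1 * ω' ^ θ := by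
    rw [← Finset.sum_sub_distrib, ← Finset.sum_sub_distrib, ← Finset.sum_add_distrib]
    calc _ ≤ ∑ x ∈ X, ν x * (8 * (2 * L + 6) ^ 2 * ω' ^ θ * C1) := by
          refine Finset.sum_le_sum fun x hx => ?_
          rw [← Finset.sum_sub_distrib, ← Finset.sum_sub_distrib, ← Finset.sum_add_distrib]
          calc _ ≤ ∑ y ∈ X, ν x * (8 * (2 * L + 6) ^ 2 * ω' ^ θ *
                (ν y / (max (dist y x) ω) ^ (1 + θ))) := by
                refine Finset.sum_le_sum fun y _ => ?_
                have h := gram_diff_le (L := L) hθ hθ1 hL0 hω0 hωω' dist_nonneg (dist_sq' hij x y)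
                rw [dist_comm x y] at h
                have hn := mul_le_mul_of_nonneg_left h (mul_nonneg (hν x) (hν y))
                refine le_trans (le_of_eq ?_) (hn.trans (le_of_eq ?_)) <;> ring
            _ ≤ _ := by
                rw [← Finset.mul_sum, ← Finset.mul_sum]
                have := hE1 X ν ω x hν hω0 hXC (fun ρ hρ => hfX x ρ (hwω.trans hρ))
                have n1 := hν x
                gcongr
      _ = wt X ν Set.univ * (8 * (2 * L + 6) ^ 2 * ω' ^ θ * C1) := by
          rw [← Finset.sum_mul, wt]; simp
      _ ≤ C * (8 * (2 * L + 6) ^ 2 * ω' ^ θ * C1) := by gcongr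
      _ = _ := by rw [hA1]; ring
  have hdiag : ∑ x ∈ Y, ∑ y ∈ Y, μ x * μ y * gram L w w (x i) (x j) (y i) (y j) ≤ A2 := by
    calc _ ≤ ∑ x ∈ Y, μ x * ((2 * L + 6) ^ 2 * C2) := by
          refine Finset.sum_le_sum fun x hx => ?_
          calc _ ≤ ∑ y ∈ Y, μ x * ((2 * L + 6) ^ 2 * (μ y / (max (dist y x) w) ^ (1 : ℝ))) := by
                refine Finset.sum_le_sum fun y _ => ?_
                have h := gram_diag_le (L := L) hL0 hw dist_nonneg (dist_sq' hij x y)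
                rw [dist_comm x y] at h
                have hn := mul_le_mul_of_nonneg_left h (mul_nonneg (hμ x) (hμ y))
                refine hn.trans (le_of_eq ?_)
                rw [Real.rpow_one]
                ring
            _ ≤ _ := by
                rw [← Finset.mul_sum, ← Finset.mul_sum]
                have := hE2 Y μ w x hμ hw hYC (fun ρ hρ => hfY x ρ hρ)
                have n1 := hμ x
                gcongr
      _ = wt Y μ Set.univ * ((2 * L + 6) ^ 2 * C2) := by
          rw [← Finset.sum_mul, wt]; simp
      _ ≤ _ := by rw [hA2]; gcongr
  have hfin : S * (1 / (4 * R)) ≤ D * (ε⁻¹ * (A1 * ω' ^ θ) + ε * A2) := by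
    refine (hleft.trans hinteg).trans ?_
    exact mul_le_mul_of_nonneg_left (add_le_add (mul_le_mul_of_nonneg_left hdiff
      (by positivity)) (mul_le_mul_of_nonneg_left hdiag (by positivity))) (by positivity)
  have hfin2 : D * (ε⁻¹ * (A1 * ω' ^ θ) + ε * A2) = D * (A1 + A2) * ε := by
    rw [← hεε]
    field_simp
  rw [hfin2] at hfin
  have hεK : ε = (2 * D * C) ^ (θ / 2) * K ^ (-(θ / 2)) := by
    rw [hε, hω', Real.div_rpow (by positivity) hK0.le, Real.rpow_neg hK0.le]
    rfl
  have : S = S * (1 / (4 * R)) * (4 * R) := by field_simp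
  rw [this]
  calc _ ≤ D * (A1 + A2) * ε * (4 * R) := by gcongr
    _ = _ := by rw [hεK]; ring

/-! ### Products, blocks and chains -/

section blocks

variable {X Y : Finset Plane} {ν μ : Plane → ℝ}

/-- The dyadic square of side `2⁻ⁿ` containing `p`. -/
def sq (n : ℕ) (p : Plane) : Set Plane := {x | cell n x = cell n p}

/-- The union of the dyadic squares of side `2⁻ⁿ` that meet `S`. -/
def hit (n : ℕ) (S : Set Plane) : Set Plane := {p | ∃ s ∈ S, cell n p = cell n s}

/-- The `ν × μ`-mass of the set of pairs satisfying `G`. -/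
noncomputable def pm (X Y : Finset Plane) (ν μ : Plane → ℝ) (G : Plane → Plane → Prop) : ℝ :=
  ∑ x ∈ X, ν x * wt Y μ {y | G x y}

lemma pm_swap (G : Plane → Plane → Prop) :
    pm X Y ν μ G = pm Y X μ ν (fun y x => G x y) := by
  have := wt_swap (X := Y) (ν := μ) X ν Set.univ Set.univ (fun y x => G x y)
  simpa [pm] using this

lemma pm_le_sum {ι : Type*} (hν : ∀ x, 0 ≤ ν x) (hμ : ∀ y, 0 ≤ μ y) (G : Plane → Plane → Prop)
    (I : Finset ι) (B : ι → Plane → Plane → Prop)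
    (h : ∀ x ∈ X, ∀ y ∈ Y, G x y → ∃ i ∈ I, B i x y) :
    pm X Y ν μ G ≤ ∑ i ∈ I, pm X Y ν μ (B i) := by
  unfold pm
  rw [Finset.sum_comm]
  refine Finset.sum_le_sum fun x hx => ?_
  rw [← Finset.mul_sum]
  exact mul_le_mul_of_nonneg_left (wt_le_sum hμ _ I (fun i => {y | B i x y})
    fun y hy hG => h x hx y hy hG) (hν x)

lemma pm_le_of_or (hν : ∀ x, 0 ≤ ν x) (hμ : ∀ y, 0 ≤ μ y) {G A B : Plane → Plane → Prop}
    (h : ∀ x ∈ X, ∀ y ∈ Y, G x y → A x y ∨ B x y) :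
    pm X Y ν μ G ≤ pm X Y ν μ A + pm X Y ν μ B := by
  have := pm_le_sum hν hμ G (Finset.univ : Finset Bool) (fun b => if b then A else B) (by
    intro x hx y hy hG
    rcases h x hx y hy hG with h | h
    · exact ⟨true, Finset.mem_univ _, by simpa using h⟩
    · exact ⟨false, Finset.mem_univ _, by simpa using h⟩)
  simpa using this

lemma pm_le_mul (hν : ∀ x, 0 ≤ ν x) {G : Plane → Plane → Prop} {A : ℝ}
    (h : ∀ x ∈ X, wt Y μ {y | G x y} ≤ A) : pm X Y ν μ G ≤ wt X ν Set.univ * A := by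
  unfold pm wt
  rw [Finset.sum_mul]
  refine Finset.sum_le_sum fun x hx => ?_
  rw [Set.indicator_univ]
  exact mul_le_mul_of_nonneg_left (h x hx) (hν x)

lemma pm_fst_le (A : Set Plane) :
    pm X Y ν μ (fun x _ => x ∈ A) ≤ wt X ν A * wt Y μ Set.univ := by
  unfold pm
  rw [wt, Finset.sum_mul]
  refine Finset.sum_le_sum fun x hx => ?_
  by_cases h : x ∈ A
  · simp [h]
  · simp [h, wt]

/-- The block lemma. The points `p'` near `p` are sorted according to their distance from `p`;
those at distance about `q^r` have mass at most `q^(f r - 1)`, and for each of them the set of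
tests `y` that cannot tell `p'` from `p` is small. By Fubini and Markov's inequality, for most `y`
the set of such `p'` is a small fraction of the square of `p`. -/
lemma block_lemma (hν : ∀ x, 0 ≤ ν x) (hμ : ∀ y, 0 ≤ μ y) {k a b : ℕ} {q : ℝ}
    (hqk : q = (1 / 2) ^ k) (hab : a ≤ b) {p : Plane} {G : Set Plane} {Near : Plane → Plane → Prop}
    {f h : ℕ → ℝ}
    (h1 : ∀ r, a ≤ r → r ≤ b → wt X ν (Metric.closedBall p (2 * q ^ r)) ≤ q ^ (f r - 1))
    (h2 : q ^ (f a + 1) ≤ wt X ν (sq (k * a) p))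
    (h3 : ∀ r, a ≤ r → r ≤ b → ∀ p' ∈ X, dist p' p ≤ 2 * q ^ r →
      (r < b → 2 * q ^ (r + 1) < dist p' p) → wt Y μ {y | y ∈ G ∧ Near p' y} ≤ q ^ (h r))
    (hN : (b : ℝ) + 1 ≤ q⁻¹) :
    wt Y μ {y | y ∈ G ∧ ∃ g : ℝ, (∀ r, a ≤ r → r ≤ b → g ≤ f r - f a + h r) ∧
      q ^ (g - 4) * wt X ν (sq (k * a) p) <
        wt X ν {p' | p' ∈ sq (k * a) p ∧ Near p' y}} ≤ q := by
  classical
  have hq0 : 0 < q := by rw [hqk]; positivity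
  have hq1 : q ≤ 1 := by rw [hqk]; exact pow_le_one₀ (by norm_num) (by norm_num)
  obtain ⟨r₀, hr₀, hmin⟩ := Finset.exists_min_image (Finset.Icc a b) (fun r => f r - f a + h r)
    ⟨a, Finset.mem_Icc.2 ⟨le_rfl, hab⟩⟩
  set g₀ := f r₀ - f a + h r₀ with hg₀
  have hmin' : ∀ r, a ≤ r → r ≤ b → g₀ ≤ f r - f a + h r := fun r h1 h2 =>
    hmin r (Finset.mem_Icc.2 ⟨h1, h2⟩)
  rw [Finset.mem_Icc] at hr₀
  set w := wt X ν (sq (k * a) p) with hw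
  have hw0 : 0 < w := lt_of_lt_of_le (Real.rpow_pos_of_pos hq0 _) h2
  set B : Set Plane := {y | y ∈ G ∧ q ^ (g₀ - 4) * w <
        wt X ν {p' | p' ∈ sq (k * a) p ∧ Near p' y}} with hB
  refine (wt_mono hμ (B := B) ?_).trans ?_
  · rintro y _ ⟨hyG, g, hg, hlt⟩
    refine ⟨hyG, lt_of_le_of_lt ?_ hlt⟩
    apply mul_le_mul_of_nonneg_right _ hw0.le
    exact Real.rpow_le_rpow_of_exponent_ge hq0 hq1 (by linarith [hg r₀ hr₀.1 hr₀.2])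
  have hmarkov : wt Y μ B * (q ^ (g₀ - 4) * w) ≤
      ∑ y ∈ Y, G.indicator μ y * wt X ν {p' | p' ∈ sq (k * a) p ∧ Near p' y} := by
    rw [wt, Finset.sum_mul]
    refine Finset.sum_le_sum fun y _ => ?_
    by_cases hy : y ∈ B
    · rw [Set.indicator_of_mem hy, Set.indicator_of_mem hy.1]
      exact mul_le_mul_of_nonneg_left hy.2.le (hμ y)
    · rw [Set.indicator_of_notMem hy, zero_mul]
      exact mul_nonneg (Set.indicator_nonneg (fun y _ => hμ y) y) (wt_nonneg hν _)
  rw [wt_swap] at hmarkov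
  have hsum : ∑ x ∈ X, (sq (k * a) p).indicator ν x * wt Y μ {y | y ∈ G ∧ Near x y} ≤
      ∑ r ∈ Finset.Icc a b, wt X ν (Metric.closedBall p (2 * q ^ r)) * q ^ (h r) := by
    simp_rw [wt, Finset.sum_mul]
    rw [Finset.sum_comm]
    refine Finset.sum_le_sum fun x hx => ?_
    have hn : ∀ r ∈ Finset.Icc a b,
        0 ≤ (Metric.closedBall p (2 * q ^ r)).indicator ν x * q ^ (h r) := fun r _ =>
      mul_nonneg (Set.indicator_nonneg (fun y _ => hν y) x) (Real.rpow_nonneg hq0.le _)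
    by_cases hxa : x ∈ sq (k * a) p
    · obtain ⟨r, hrb, hr, hrl⟩ := exists_last (fun n => dist x p ≤ 2 * q ^ (a + n)) (b - a) (by
        have := cell_dist hxa
        rwa [pow_mul, ← hqk] at this)
      have hi := h3 (a + r) (by lia) (by lia) x hx hr (by
        intro hlt
        rcases hrl with h | h
        · lia
        · exact not_le.1 h)
      refine le_trans ?_ (Finset.single_le_sum hn (Finset.mem_Icc.2 ⟨by lia, by lia⟩ :
        a + r ∈ Finset.Icc a b))
      rw [Set.indicator_of_mem hxa, Set.indicator_of_mem (Metric.mem_closedBall.2 hr)]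
      exact mul_le_mul_of_nonneg_left hi (hν x)
    · rw [Set.indicator_of_notMem hxa, zero_mul]
      exact Finset.sum_nonneg hn
  have hsum2 : ∑ r ∈ Finset.Icc a b, wt X ν (Metric.closedBall p (2 * q ^ r)) * q ^ (h r) ≤
      q ^ (g₀ + f a - 2) := by
    calc _ ≤ ∑ r ∈ Finset.Icc a b, q ^ (g₀ + f a - 1) := by
          refine Finset.sum_le_sum fun r hr => ?_
          rw [Finset.mem_Icc] at hr
          calc _ ≤ q ^ (f r - 1) * q ^ (h r) :=
                mul_le_mul_of_nonneg_right (h1 r hr.1 hr.2) (Real.rpow_nonneg hq0.le _)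
            _ = q ^ (f r - 1 + h r) := by rw [Real.rpow_add hq0]
            _ ≤ _ := Real.rpow_le_rpow_of_exponent_ge hq0 hq1 (by linarith [hmin' r hr.1 hr.2])
      _ ≤ q⁻¹ * q ^ (g₀ + f a - 1) := by
          rw [Finset.sum_const, nsmul_eq_mul]
          apply mul_le_mul_of_nonneg_right _ (Real.rpow_nonneg hq0.le _)
          refine le_trans ?_ hN
          rw [Nat.card_Icc]
          exact_mod_cast (by lia : b + 1 - a ≤ b + 1)
      _ = _ := by
          rw [← Real.rpow_neg_one, ← Real.rpow_add hq0]
          congr 1; ring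
  have hfin := hmarkov.trans (hsum.trans hsum2)
  have hlow : wt Y μ B * (q ^ (g₀ - 4) * q ^ (f a + 1)) ≤ q ^ (g₀ + f a - 2) := by
    refine le_trans ?_ hfin
    have := wt_nonneg (X := Y) hμ B
    gcongr
  have he : q ^ (g₀ + f a - 2) = q * (q ^ (g₀ - 4) * q ^ (f a + 1)) := by
    nth_rewrite 2 [← Real.rpow_one q]
    rw [← Real.rpow_add hq0, ← Real.rpow_add hq0]
    congr 1; ring
  rw [he] at hlow
  exact le_of_mul_le_mul_right hlow (by positivity)

lemma hit_antitone {S : Set Plane} {k a b : ℕ} (hab : a ≤ b) :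
    hit (k * b) S ⊆ hit (k * a) S := by
  rintro p ⟨s, hs, hps⟩
  exact ⟨s, hs, cell_mono (Nat.mul_le_mul_left k hab) hps⟩

lemma subset_hit (n : ℕ) (S : Set Plane) : S ⊆ hit n S := fun s hs => ⟨s, hs, rfl⟩

/-- One step of a chain: a bound, relative to each square of the coarse scale, on the part of
that square that is hit at the fine scale. -/
lemma hit_step (hν : ∀ x, 0 ≤ ν x) {S : Set Plane} {a b : ℕ} {A : ℝ} (hab : a ≤ b)
    (h : ∀ s ∈ S, wt X ν {p | p ∈ sq a s ∧ p ∈ hit b S} ≤ A * wt X ν (sq a s)) :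
    wt X ν (hit b S) ≤ A * wt X ν (hit a S) := by
  classical
  rw [wt_eq_sum_cells (hit b S) a, wt_eq_sum_cells (hit a S) a, Finset.mul_sum]
  refine Finset.sum_le_sum fun c _ => ?_
  by_cases hc : ∃ s ∈ S, cell a s = c
  · obtain ⟨s, hs, rfl⟩ := hc
    refine (wt_mono hν ?_).trans ((h s hs).trans (le_of_eq ?_))
    · rintro x _ ⟨h1, h2⟩
      exact ⟨h2, h1⟩
    · congr 2
      ext x
      exact ⟨fun hx => ⟨⟨s, hs, hx⟩, hx⟩, fun hx => hx.2⟩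
  · have h0 : ∀ n, a ≤ n → {x | x ∈ hit n S ∧ cell a x = c} = ∅ := by
      intro n hn
      rw [Set.eq_empty_iff_forall_notMem]
      rintro x ⟨⟨s, hs, hx⟩, rfl⟩
      exact hc ⟨s, hs, (cell_mono hn hx).symm⟩
    rw [h0 a le_rfl, h0 b hab]
    simp [wt]

end blocks

/-! ### Regular points and branching functions -/

section classes

variable {X : Finset Plane} {ν : Plane → ℝ}

/-- The point `p` is regular with branching function `f`: up to bounded factors of `q = 2⁻ᵏ`, the
square of side `q^ρ` at `p` and its neighbourhood have mass `q^(f ρ)` for `ρ ≤ N`. The remaining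
clauses record the properties of `f` that this entails. -/
def Cls (X : Finset Plane) (ν : Plane → ℝ) (k N : ℕ) (t : ℝ) (f : ℕ → ℝ) (p : Plane) : Prop :=
  (∀ ρ ≤ N, ((1 / 2 : ℝ) ^ k) ^ (f ρ + 1) ≤ wt X ν (sq (k * ρ) p) ∧
    wt X ν (Metric.closedBall p (2 * ((1 / 2 : ℝ) ^ k) ^ ρ)) ≤ ((1 / 2 : ℝ) ^ k) ^ (f ρ - 1)) ∧
  (∀ a b : ℕ, a ≤ b → b ≤ N → f a ≤ f b) ∧
  (∀ a b : ℕ, a ≤ b → b ≤ N → f b ≤ f a + 2 * (b - a) + 7) ∧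
  (∀ a : ℕ, a ≤ N → t * a - 7 ≤ f a) ∧ f 0 ≤ 7

/-- The function `ℕ → ℝ` with integer values coded by `i`. -/
def branching {N : ℕ} (i : Fin (N + 1) → Fin (2 * N + 20)) (ρ : ℕ) : ℝ :=
  if h : ρ < N + 1 then ((i ⟨ρ, h⟩ : ℕ) : ℝ) - 1 else 0

lemma wt_union_le (hν : ∀ x, 0 ≤ ν x) (A B : Set Plane) :
    wt X ν (A ∪ B) ≤ wt X ν A + wt X ν B := by
  have := wt_le_sum (X := X) hν (A ∪ B) (Finset.univ : Finset Bool) (fun b => if b then A else B) (by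
    rintro x _ (h | h)
    · exact ⟨true, Finset.mem_univ _, by simpa using h⟩
    · exact ⟨false, Finset.mem_univ _, by simpa using h⟩)
  simpa using this

/-- A point whose squares are comparable with their surroundings is regular. -/
lemma exists_cls (hν : ∀ x, 0 ≤ ν x) {k N : ℕ} {t C q : ℝ} (hk : 1 ≤ k) (hqk : q = (1 / 2) ^ k)
    (hC : wt X ν Set.univ ≤ C) (hC0 : 0 < C) (hCq : C ≤ q⁻¹) (hCt : C * 2 ^ t ≤ q⁻¹)
    (hfX : ∀ p ρ, q ^ N ≤ ρ → wt X ν (Metric.closedBall p ρ) ≤ C * ρ ^ t)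
    (hlow : q ≤ wt X ν Set.univ) {x : Plane}
    (r1 : ∀ ρ ≤ N, q * wt X ν (Metric.closedBall x (2 * q ^ ρ)) ≤ wt X ν (sq (k * ρ) x))
    (r2 : ∀ a b, a ≤ b → b ≤ N →
      q ^ (1 + 2 * (b - a)) * wt X ν (sq (k * a) x) ≤ wt X ν (sq (k * b) x))
    (r3 : q * wt X ν Set.univ ≤ wt X ν (sq 0 x)) :
    ∃ i : Fin (N + 1) → Fin (2 * N + 20), Cls X ν k N t (branching i) x := by
  have hq0 : 0 < q := by rw [hqk]; positivity
  have hq1 : q < 1 := by rw [hqk]; exact pow_lt_one₀ (by norm_num) (by norm_num) (by lia)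
  set w : ℕ → ℝ := fun ρ => wt X ν (sq (k * ρ) x) with hw
  have hw0 : q ^ 2 ≤ w 0 := by
    rw [hw]
    simp only [mul_zero]
    nlinarith
  have hwρ : ∀ ρ ≤ N, q ^ (3 + 2 * ρ) ≤ w ρ := by
    intro ρ hρ
    have := r2 0 ρ (by lia) hρ
    refine le_trans ?_ this
    calc q ^ (3 + 2 * ρ) = q ^ (1 + 2 * (ρ - 0)) * q ^ 2 := by
          rw [← pow_add]; congr 1; lia
      _ ≤ _ := by gcongr
  have hwpos : ∀ ρ ≤ N, 0 < w ρ := fun ρ hρ => lt_of_lt_of_le (by positivity) (hwρ ρ hρ)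
  set l : ℕ → ℝ := fun ρ => Real.logb q (w ρ) with hl
  have hlw : ∀ ρ ≤ N, q ^ (l ρ) = w ρ := fun ρ hρ => Real.rpow_logb hq0 hq1.ne (hwpos ρ hρ)
  have hle : ∀ ρ ≤ N, ∀ e : ℝ, w ρ ≤ q ^ e → e ≤ l ρ := by
    intro ρ hρ e he
    rw [← hlw ρ hρ] at he
    exact (Real.rpow_le_rpow_left_iff_of_base_lt_one hq0 hq1).1 he
  have hge : ∀ ρ ≤ N, ∀ e : ℝ, q ^ e ≤ w ρ → l ρ ≤ e := by
    intro ρ hρ e he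
    rw [← hlw ρ hρ] at he
    exact (Real.rpow_le_rpow_left_iff_of_base_lt_one hq0 hq1).1 he
  have hl1 : ∀ ρ ≤ N, -1 ≤ l ρ := by
    intro ρ hρ
    apply hle ρ hρ
    rw [Real.rpow_neg_one]
    exact (wt_le_univ hν _).trans (hC.trans hCq)
  have hl2 : ∀ ρ ≤ N, l ρ ≤ 3 + 2 * ρ := by
    intro ρ hρ
    apply hge ρ hρ
    have := hwρ ρ hρ
    rw [← Real.rpow_natCast] at this
    push_cast at this
    exact this
  have hfl : ∀ ρ ≤ N, (-1 : ℤ) ≤ ⌊l ρ⌋ := fun ρ hρ => Int.le_floor.2 (by push_cast; exact hl1 ρ hρ)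
  have hfl2 : ∀ ρ ≤ N, ⌊l ρ⌋ ≤ 3 + 2 * ρ := by
    intro ρ hρ
    have h1 := (Int.floor_le (l ρ)).trans (hl2 ρ hρ)
    exact_mod_cast h1
  have hbd : ∀ j : Fin (N + 1), (⌊l j⌋ + 1).toNat < 2 * N + 20 := by
    intro j
    have h1 := hfl2 j (by lia)
    have h2 := j.2
    rw [Int.toNat_lt' (by lia)]
    push_cast
    linarith
  refine ⟨fun j => ⟨(⌊l j⌋ + 1).toNat, hbd j⟩, ?_⟩
  have hf : ∀ ρ ≤ N, branching (N := N) (fun j => ⟨(⌊l j⌋ + 1).toNat, hbd j⟩) ρ = (⌊l ρ⌋ : ℝ) := by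
    intro ρ hρ
    have h1 := hfl ρ hρ
    rw [branching, dif_pos (by lia)]
    have h2 : (((⌊l ρ⌋ + 1).toNat : ℤ) : ℝ) = ((⌊l ρ⌋ + 1 : ℤ) : ℝ) := by
      rw [Int.toNat_of_nonneg (by lia)]
    push_cast at h2
    simp only
    rw [h2]
    ring
  have hmono : ∀ a b, a ≤ b → b ≤ N → l a ≤ l b := by
    intro a b hab hb
    apply hle b hb
    rw [hlw a (hab.trans hb)]
    exact wt_mono hν fun y _ hy => cell_mono (Nat.mul_le_mul_left k hab) hy
  refine ⟨?_, ?_, ?_, ?_, ?_⟩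
  · intro ρ hρ
    rw [hf ρ hρ, ← hqk]
    constructor
    · change _ ≤ w ρ
      rw [← hlw ρ hρ]
      exact Real.rpow_le_rpow_of_exponent_ge hq0 hq1.le (Int.lt_floor_add_one _).le
    · have h1 := r1 ρ hρ
      change _ ≤ w ρ at h1
      rw [← hlw ρ hρ, mul_comm, ← le_div_iff₀ hq0] at h1
      refine h1.trans ?_
      rw [Real.rpow_sub_one hq0.ne']
      exact div_le_div_of_nonneg_right
        (Real.rpow_le_rpow_of_exponent_ge hq0 hq1.le (Int.floor_le _)) hq0.le
  · intro a b hab hb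
    rw [hf a (hab.trans hb), hf b hb]
    exact_mod_cast Int.floor_le_floor (hmono a b hab hb)
  · intro a b hab hb
    rw [hf a (hab.trans hb), hf b hb]
    have h1 : l b ≤ 1 + 2 * ((b : ℝ) - a) + l a := by
      apply hge b hb
      have h2 := r2 a b hab hb
      refine le_trans (le_of_eq ?_) h2
      change _ = _ * w a
      rw [Real.rpow_add hq0, hlw a (hab.trans hb), ← Real.rpow_natCast]
      push_cast [Nat.cast_sub hab]
      rfl
    have h2 := Int.floor_le (l b)
    have h3 := Int.lt_floor_add_one (l a)
    linarith
  · intro a ha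
    rw [hf a ha]
    have h1 : t * a - 1 ≤ l a := by
      apply hle a ha
      calc w a ≤ wt X ν (Metric.closedBall x (2 * q ^ a)) := by
            apply wt_mono hν
            intro y _ hy
            have := cell_dist hy
            rwa [pow_mul, ← hqk] at this
        _ ≤ C * (2 * q ^ a) ^ t := by
            apply hfX
            have : q ^ N ≤ q ^ a := pow_le_pow_of_le_one hq0.le hq1.le ha
            have : 0 < q ^ a := by positivity
            linarith
        _ = C * 2 ^ t * q ^ (t * a) := by
            rw [Real.mul_rpow (by norm_num) (by positivity), ← Real.rpow_natCast,
              ← Real.rpow_mul hq0.le, mul_comm (a : ℝ) t]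
            ring
        _ ≤ q⁻¹ * q ^ (t * a) := by gcongr
        _ = _ := by
            rw [← Real.rpow_neg_one, ← Real.rpow_add hq0]
            congr 1; ring
    have h3 := Int.lt_floor_add_one (l a)
    linarith
  · rw [hf 0 (by lia)]
    have h1 := hl2 0 (by lia)
    have h2 := Int.floor_le (l 0)
    push_cast at h1
    linarith

/-- All but a small part of the mass consists of regular points. -/
lemma wt_not_cls (hν : ∀ x, 0 ≤ ν x) {k N L : ℕ} {t C q : ℝ} (hk : 1 ≤ k) (hqk : q = (1 / 2) ^ k)
    (hL : ∀ x ∈ X, ∀ l, |x l| ≤ (L : ℝ) / 2)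
    (hC : wt X ν Set.univ ≤ C) (hC0 : 0 < C) (hCq : C ≤ q⁻¹) (hCt : C * 2 ^ t ≤ q⁻¹)
    (hfX : ∀ p ρ, q ^ N ≤ ρ → wt X ν (Metric.closedBall p ρ) ≤ C * ρ ^ t)
    (hlow : q ≤ wt X ν Set.univ) :
    wt X ν {x | ¬ ∃ i : Fin (N + 1) → Fin (2 * N + 20), Cls X ν k N t (branching i) x} ≤
      (N + 1) ^ 2 * (C * (74 + (2 * L + 3) ^ 2) * q) := by
  have hq0 : 0 < q := by rw [hqk]; positivity
  have hq1 : q < 1 := by rw [hqk]; exact pow_lt_one₀ (by norm_num) (by norm_num) (by lia)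
  set B1 : ℕ → Set Plane := fun ρ => {x | wt X ν {x' | cell (k * ρ) x' = cell (k * ρ) x} <
    q * wt X ν {x' | ∀ i, |x' i - x i| ≤ (2 : ℕ) * (1 / 2) ^ (k * ρ)}} with hB1
  set B2 : ℕ → ℕ → Set Plane := fun a b => {x | wt X ν {x' | cell (k * b) x' = cell (k * b) x} <
    q ^ (1 + 2 * (b - a)) *
      wt X ν {x' | ∀ i, |x' i - x i| ≤ (2 ^ (k * (b - a)) : ℕ) * (1 / 2) ^ (k * b)}} with hB2
  set B3 : Set Plane := {x | wt X ν {x' | cell 0 x' = cell 0 x} <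
    q * wt X ν {x' | ∀ i, |x' i - x i| ≤ (L : ℕ) * (1 / 2) ^ 0}} with hB3
  have hcov := wt_le_sum (X := X) hν
    {x | ¬ ∃ i : Fin (N + 1) → Fin (2 * N + 20), Cls X ν k N t (branching i) x}
    (Finset.range (N + 1) ×ˢ Finset.range (N + 1)) (fun ab => (B1 ab.1 ∪ B2 ab.1 ab.2) ∪ B3) (by
    intro x hx hxn
    by_contra! hcon
    apply hxn
    have hc : ∀ a b, a ≤ N → b ≤ N → x ∉ B1 a ∧ x ∉ B2 a b ∧ x ∉ B3 := by
      intro a b ha hb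
      have := hcon (a, b) (by simp; lia)
      simp only [Set.mem_union, not_or] at this
      tauto
    apply exists_cls hν hk hqk hC hC0 hCq hCt hfX hlow
    · intro ρ hρ
      refine le_trans ?_ (not_lt.1 (hc ρ ρ hρ hρ).1)
      apply mul_le_mul_of_nonneg_left _ hq0.le
      apply wt_mono hν
      intro y _ hy i
      rw [pow_mul, ← hqk]
      exact (abs_coord_le_dist y x i).trans (by simpa using hy)
    · intro a b hab hb
      refine le_trans ?_ (not_lt.1 (hc a b (hab.trans hb) hb).2.1)
      apply mul_le_mul_of_nonneg_left _ (by positivity)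
      apply wt_mono hν
      intro y _ hy i
      refine (cell_coord hy i).trans (le_of_eq ?_)
      push_cast
      obtain ⟨d, rfl⟩ := Nat.exists_eq_add_of_le hab
      rw [Nat.add_sub_cancel_left, mul_add, pow_add, mul_left_comm, ← mul_pow]
      norm_num
    · refine le_trans ?_ (not_lt.1 (hc 0 0 (by lia) (by lia)).2.2)
      apply mul_le_mul_of_nonneg_left _ hq0.le
      apply wt_mono hν
      intro y hy _ i
      have h1 := hL x hx i
      have h2 := hL y hy i
      rw [pow_zero, mul_one]
      calc |y i - x i| ≤ |y i| + |x i| := abs_sub _ _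
        _ ≤ L := by linarith)
  refine hcov.trans ?_
  calc _ ≤ ∑ _ab ∈ Finset.range (N + 1) ×ˢ Finset.range (N + 1),
        (C * (74 + (2 * L + 3) ^ 2) * q) := by
        refine Finset.sum_le_sum fun ab _ => ?_
        have e1 : wt X ν (B1 ab.1) ≤ 49 * C * q := by
          refine (wt_irregular_le hν _ 2 hq0.le).trans ?_
          calc q * (2 * ((2 : ℕ) : ℝ) + 3) ^ 2 * wt X ν Set.univ
              ≤ q * (2 * ((2 : ℕ) : ℝ) + 3) ^ 2 * C := by gcongr
            _ = _ := by push_cast; ring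
        have e2 : wt X ν (B2 ab.1 ab.2) ≤ 25 * C * q := by
          refine (wt_irregular_le hν _ (2 ^ (k * (ab.2 - ab.1))) (by positivity)).trans ?_
          set d := ab.2 - ab.1
          have hqd : q ^ d * 2 ^ (k * d) = 1 := by
            rw [hqk, ← pow_mul, ← mul_pow]; norm_num
          have hqd1 : q ^ d ≤ 1 := pow_le_one₀ hq0.le hq1.le
          have hqd0 : 0 < q ^ d := by positivity
          calc q ^ (1 + 2 * d) * (2 * ((2 ^ (k * d) : ℕ) : ℝ) + 3) ^ 2 * wt X ν Set.univ
              ≤ q ^ (1 + 2 * d) * (2 * ((2 ^ (k * d) : ℕ) : ℝ) + 3) ^ 2 * C := by gcongr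
            _ = q * C * (2 * (q ^ d * 2 ^ (k * d)) + 3 * q ^ d) ^ 2 := by push_cast; ring
            _ ≤ q * C * 5 ^ 2 := by
                rw [hqd]
                gcongr
                linarith
            _ = _ := by ring
        have e3 : wt X ν B3 ≤ (2 * L + 3) ^ 2 * C * q := by
          refine (wt_irregular_le hν 0 L hq0.le).trans ?_
          calc q * (2 * (L : ℝ) + 3) ^ 2 * wt X ν Set.univ ≤ q * (2 * (L : ℝ) + 3) ^ 2 * C := by
                gcongr
            _ = _ := by ring
        have u1 := wt_union_le (X := X) hν (B1 ab.1 ∪ B2 ab.1 ab.2) B3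
        have u2 := wt_union_le (X := X) hν (B1 ab.1) (B2 ab.1 ab.2)
        calc _ ≤ 49 * C * q + 25 * C * q + (2 * L + 3) ^ 2 * C * q := by linarith
          _ = _ := by ring
    _ = _ := by
        rw [Finset.sum_const, Finset.card_product, Finset.card_range, nsmul_eq_mul]
        push_cast; ring

end classes

/-! ### Geometry of tubes -/

section geometry

/-- The dot product of the plane. -/
def dot (a b : Plane) : ℝ := a 0 * b 0 + a 1 * b 1

lemma norm_sq_eq (a : Plane) : ‖a‖ ^ 2 = a 0 ^ 2 + a 1 ^ 2 := by
  rw [EuclideanSpace.norm_sq_eq]; simp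

lemma abs_dot_le (a b : Plane) : |dot a b| ≤ ‖a‖ * ‖b‖ := by
  apply abs_le_of_sq_le_sq _ (by positivity)
  rw [mul_pow, norm_sq_eq, norm_sq_eq, dot]
  nlinarith [sq_nonneg (a 0 * b 1 - a 1 * b 0)]

lemma abs_cross_le (a b : Plane) : |cross a b| ≤ ‖a‖ * ‖b‖ := by
  apply abs_le_of_sq_le_sq _ (by positivity)
  rw [mul_pow, norm_sq_eq, norm_sq_eq, cross]
  nlinarith [sq_nonneg (a 0 * b 0 + a 1 * b 1)]

lemma cross_mul_norm_sq (a b v : Plane) :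
    cross a b * ‖v‖ ^ 2 = dot a v * cross v b - dot b v * cross v a := by
  rw [norm_sq_eq, cross, cross, cross, dot, dot]; ring

/-- Two vectors nearly parallel to `v` are nearly parallel to each other. -/
lemma cross_le_of_cross {a b v : Plane} {ε D : ℝ} (hv : 0 < ‖v‖) (ha : ‖a‖ ≤ D) (hb : ‖b‖ ≤ D)
    (h1 : |cross v a| ≤ ε) (h2 : |cross v b| ≤ ε) : |cross a b| * ‖v‖ ≤ 2 * D * ε := by
  have hε : 0 ≤ ε := (abs_nonneg _).trans h1
  refine le_of_mul_le_mul_right ?_ hv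
  calc |cross a b| * ‖v‖ * ‖v‖ = |cross a b * ‖v‖ ^ 2| := by
        rw [abs_mul, abs_of_nonneg (sq_nonneg ‖v‖)]; ring
    _ = |dot a v * cross v b - dot b v * cross v a| := by rw [cross_mul_norm_sq]
    _ ≤ |dot a v| * |cross v b| + |dot b v| * |cross v a| := by
        rw [← abs_mul, ← abs_mul]; exact abs_sub _ _
    _ ≤ (D * ‖v‖) * ε + (D * ‖v‖) * ε := by
        have e1 : |dot a v| ≤ D * ‖v‖ := (abs_dot_le a v).trans (by gcongr)
        have e2 : |dot b v| ≤ D * ‖v‖ := (abs_dot_le b v).trans (by gcongr)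
        gcongr
        · exact (abs_nonneg _).trans e1
        · exact (abs_nonneg _).trans e2
    _ = _ := by ring

/-- Two vectors nearly orthogonal to `v` are nearly parallel to each other. -/
lemma cross_le_of_dot {a b v : Plane} {ε ε' : ℝ} (hv : 0 < ‖v‖)
    (h1 : |dot a v| ≤ ε) (h2 : |dot b v| ≤ ε') :
    |cross a b| * ‖v‖ ≤ ε * ‖b‖ + ε' * ‖a‖ := by
  have hε : 0 ≤ ε := (abs_nonneg _).trans h1
  have hε' : 0 ≤ ε' := (abs_nonneg _).trans h2
  refine le_of_mul_le_mul_right ?_ hv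
  calc |cross a b| * ‖v‖ * ‖v‖ = |cross a b * ‖v‖ ^ 2| := by
        rw [abs_mul, abs_of_nonneg (sq_nonneg ‖v‖)]; ring
    _ = |dot a v * cross v b - dot b v * cross v a| := by rw [cross_mul_norm_sq]
    _ ≤ |dot a v| * |cross v b| + |dot b v| * |cross v a| := by
        rw [← abs_mul, ← abs_mul]; exact abs_sub _ _
    _ ≤ ε * (‖v‖ * ‖b‖) + ε' * (‖v‖ * ‖a‖) := by
        gcongr
        · exact abs_cross_le _ _
        · exact abs_cross_le _ _
    _ = _ := by ring

/-- If `x` is almost equidistant from `y` and `z`, it lies near the perpendicular bisector. -/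
lemma bisector {x y z : Plane} {D ε : ℝ} (hy : dist x y ≤ D) (hz : dist x z ≤ D)
    (h : |dist x z - dist x y| ≤ ε) :
    |2 * dot (x - y) (z - y) - ‖z - y‖ ^ 2| ≤ 2 * D * ε := by
  have h1 : 2 * dot (x - y) (z - y) - ‖z - y‖ ^ 2 =
      (dist x y + dist x z) * (-(dist x z - dist x y)) := by
    have : (dist x y + dist x z) * (-(dist x z - dist x y)) = dist x y ^ 2 - dist x z ^ 2 := by ring
    rw [this, dist_sq, dist_sq, norm_sq_eq, dot]
    simp only [PiLp.sub_apply]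
    ring
  have h0 : 0 ≤ dist x y := dist_nonneg
  have h0' : 0 ≤ dist x z := dist_nonneg
  rw [h1, abs_mul, abs_neg, abs_of_nonneg (by positivity)]
  gcongr <;> linarith

end geometry

section tubes

variable {X Y : Finset Plane} {ν μ : Plane → ℝ} {k N : ℕ} {q A D : ℝ}

lemma absorb (hq0 : 0 < q) (hA : A ≤ q⁻¹) {b r : ℕ} (h : r < b) :
    q⁻¹ * (A * q ^ (b - r - 1)) ≤ q ^ ((b : ℝ) - r - 3) := by
  calc q⁻¹ * (A * q ^ (b - r - 1)) ≤ q⁻¹ * (q⁻¹ * q ^ (b - r - 1)) := by gcongr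
    _ = _ := by
      rw [← Real.rpow_natCast, Nat.sub_sub, Nat.cast_sub (by lia), ← Real.rpow_neg_one,
        ← Real.rpow_add hq0, ← Real.rpow_add hq0]
      congr 1
      push_cast
      ring

/-- The tests `y` such that `x` lies near the line through `x₀` and `y` form a tube through `x₀`,
and so have small mass. -/
lemma xblock_shell (hμ : ∀ y, 0 ≤ μ y) (hq0 : 0 < q) (hA : A ≤ q⁻¹) {A₁ : ℝ}
    (hAA : D * A₁ ≤ A) {x₀ x : Plane} {G : Set Plane} (hD : ∀ y ∈ Y, dist y x₀ ≤ D)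
    (hG : ∀ y ∈ Y, y ∈ G → ∀ j ≤ N, wt Y μ {y' | |cross (y' - x₀) (y - x₀)| ≤ A * q ^ j} ≤
      q⁻¹ * (A * q ^ j)) {r β : ℕ} (hr : r < β) (hβ : β ≤ N) (hx : 2 * q ^ (r + 1) < dist x x₀) :
    wt Y μ {y | y ∈ G ∧ |cross (x - x₀) (y - x₀)| ≤ A₁ * q ^ β} ≤ q ^ ((β : ℝ) - r - 3) := by
  by_cases hex : ∃ y ∈ Y, y ∈ G ∧ |cross (x - x₀) (y - x₀)| ≤ A₁ * q ^ β
  · obtain ⟨y₁, hy₁, hy₁G, hy₁c⟩ := hex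
    refine le_trans (wt_mono hμ ?_) ((hG y₁ hy₁ hy₁G (β - r - 1) (by lia)).trans (absorb hq0 hA hr))
    rintro y hy ⟨_, hyc⟩
    have hpos : 0 < q ^ (r + 1) := by positivity
    rw [dist_eq_norm] at hx
    have h := cross_le_of_cross (v := x - x₀) (a := y - x₀) (b := y₁ - x₀) (D := D) (by linarith)
      (by rw [← dist_eq_norm]; exact hD y hy) (by rw [← dist_eq_norm]; exact hD y₁ hy₁) hyc hy₁c
    have hβq : q ^ β = q ^ (β - r - 1) * q ^ (r + 1) := by
      rw [← pow_add]; congr 1; lia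
    have h2 : |cross (y - x₀) (y₁ - x₀)| * (2 * q ^ (r + 1)) ≤
        (A * q ^ (β - r - 1)) * (2 * q ^ (r + 1)) := by
      calc _ ≤ |cross (y - x₀) (y₁ - x₀)| * ‖x - x₀‖ := by gcongr
        _ ≤ _ := h
        _ = (D * A₁) * (2 * (q ^ (β - r - 1) * q ^ (r + 1))) := by rw [hβq]; ring
        _ ≤ A * (2 * (q ^ (β - r - 1) * q ^ (r + 1))) := by gcongr
        _ = _ := by ring
    exact le_of_mul_le_mul_right h2 (by positivity)
  · push Not at hex
    refine le_trans (le_of_eq ?_) (Real.rpow_nonneg hq0.le _)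
    refine Finset.sum_eq_zero fun y hy => Set.indicator_of_notMem ?_ _
    rintro ⟨h1, h2⟩
    exact absurd h2 (not_le.2 (hex y hy h1))

/-- The points almost equidistant from two points `y`, `z` at distance `≈ q^r`, up to `q^b` with
`b ≤ 2r`, lie in a tube through `y`. -/
lemma yblock_shell (hν : ∀ x, 0 ≤ ν x) (hq0 : 0 < q) (hq1 : q ≤ 1) (hA : A ≤ q⁻¹)
    (hAA : (8 * D + 2) * D ≤ A) {y z : Plane} {G : Set Plane} (hD : ∀ x ∈ X, dist x y ≤ D)
    (hDz : ∀ x ∈ X, dist x z ≤ D)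
    (hG : ∀ x ∈ X, x ∈ G → ∀ j ≤ N, wt X ν {x' | |cross (x' - y) (x - y)| ≤ A * q ^ j} ≤
      q⁻¹ * (A * q ^ j)) {r b : ℕ} (hr : r < b) (hb : b ≤ N) (hb2 : b ≤ 2 * r)
    (hz : 2 * q ^ (r + 1) < dist z y) (hz2 : dist z y ≤ 2 * q ^ r) :
    wt X ν {x | x ∈ G ∧ |dist x z - dist x y| ≤ 8 * q ^ b} ≤ q ^ ((b : ℝ) - r - 3) := by
  by_cases hex : ∃ x ∈ X, x ∈ G ∧ |dist x z - dist x y| ≤ 8 * q ^ b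
  · obtain ⟨x₁, hx₁, hx₁G, hx₁c⟩ := hex
    refine le_trans (wt_mono hν ?_) ((hG x₁ hx₁ hx₁G (b - r - 1) (by lia)).trans (absorb hq0 hA hr))
    rintro x hx ⟨_, hxc⟩
    have hpos : 0 < q ^ (r + 1) := by positivity
    rw [dist_eq_norm] at hz hz2
    have hD0 : 0 ≤ D := dist_nonneg.trans (hD x hx)
    have hv2 : ‖z - y‖ ^ 2 ≤ 4 * q ^ b := by
      calc ‖z - y‖ ^ 2 ≤ (2 * q ^ r) ^ 2 := by gcongr
        _ = 4 * q ^ (2 * r) := by ring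
        _ ≤ _ := by
          have := pow_le_pow_of_le_one hq0.le hq1 hb2
          linarith
    have hdot : ∀ x ∈ X, |dist x z - dist x y| ≤ 8 * q ^ b →
        |dot (x - y) (z - y)| ≤ (8 * D + 2) * q ^ b := by
      intro x hx hxc
      have := abs_le.1 (bisector (hD x hx) (hDz x hx) hxc)
      rw [abs_le]
      have h0 := sq_nonneg ‖z - y‖
      constructor <;> linarith [this.1, this.2, pow_pos hq0 b]
    have h := cross_le_of_dot (by linarith) (hdot x hx hxc) (hdot x₁ hx₁ hx₁c)
    have hβq : q ^ b = q ^ (b - r - 1) * q ^ (r + 1) := by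
      rw [← pow_add]; congr 1; lia
    have n1 : ‖x - y‖ ≤ D := by rw [← dist_eq_norm]; exact hD x hx
    have n2 : ‖x₁ - y‖ ≤ D := by rw [← dist_eq_norm]; exact hD x₁ hx₁
    have h2 : |cross (x - y) (x₁ - y)| * (2 * q ^ (r + 1)) ≤
        (A * q ^ (b - r - 1)) * (2 * q ^ (r + 1)) := by
      calc _ ≤ |cross (x - y) (x₁ - y)| * ‖z - y‖ := by gcongr
        _ ≤ _ := h
        _ ≤ (8 * D + 2) * q ^ b * D + (8 * D + 2) * q ^ b * D := by gcongr
        _ = ((8 * D + 2) * D) * (2 * (q ^ (b - r - 1) * q ^ (r + 1))) := by rw [hβq]; ring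
        _ ≤ A * (2 * (q ^ (b - r - 1) * q ^ (r + 1))) := by gcongr
        _ = _ := by ring
    exact le_of_mul_le_mul_right h2 (by positivity)
  · push Not at hex
    refine le_trans (le_of_eq ?_) (Real.rpow_nonneg hq0.le _)
    refine Finset.sum_eq_zero fun y hy => Set.indicator_of_notMem ?_ _
    rintro ⟨h1, h2⟩
    exact absurd h2 (not_le.2 (hex y hy h1))

end tubes

/-! ### Chains of blocks -/

section chains

variable {X Y : Finset Plane} {ν μ : Plane → ℝ} {k N : ℕ} {q A C D : ℝ}

/-- The pair `(x₀, y)` is good for blocks in the first variable: in each square about `x₀`, the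
tube along the line through `x₀` and `y` carries at most the fraction of the mass that the block
lemma predicts. -/
def XGood (X : Finset Plane) (ν : Plane → ℝ) (k N : ℕ) (A₁ : ℝ) (f : ℕ → ℝ) (x₀ y : Plane) : Prop :=
  ∀ α β : ℕ, α ≤ β → β ≤ N → ∀ g : ℝ,
    (∀ r, α ≤ r → r ≤ β → g ≤ f r - f α + ((β : ℝ) - r - 3)) →
    wt X ν {x | x ∈ sq (k * α) x₀ ∧ |cross (x - x₀) (y - x₀)| ≤ A₁ * ((1 / 2 : ℝ) ^ k) ^ β} ≤
      ((1 / 2 : ℝ) ^ k) ^ (g - 4) * wt X ν (sq (k * α) x₀)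

/-- The exponent of the mass of the points that are equidistant, up to `q^b`, from two given points
at distance about `q^r`. -/
noncomputable def bisExp (N m b r : ℕ) : ℝ :=
  if b ≤ 2 * r then (b : ℝ) - r - 3 else (N : ℝ) / 2 - (980 * m + 3 / 2)

/-- The pair `(y₀, x)` is good for blocks in the second variable: in each square about `y₀`, the
annulus centred at `x` through `y₀` carries at most the fraction of the mass that the block
lemma predicts. -/
def YGood (Y : Finset Plane) (μ : Plane → ℝ) (k N m : ℕ) (f : ℕ → ℝ) (y₀ x : Plane) : Prop :=
  ∀ a b : ℕ, a ≤ b → b ≤ N → (b ≤ 2 * a ∨ (b = N ∧ m ≤ a)) → ∀ g : ℝ,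
    (∀ r, a ≤ r → r ≤ b → g ≤ f r - f a + bisExp N m b r) →
    wt Y μ {z | z ∈ sq (k * a) y₀ ∧ |dist x z - dist x y₀| ≤ 8 * ((1 / 2 : ℝ) ^ k) ^ b} ≤
      ((1 / 2 : ℝ) ^ k) ^ (g - 4) * wt Y μ (sq (k * a) y₀)

/-- One step of a chain, in terms of exponents. -/
lemma chain_step (hν : ∀ x, 0 ≤ ν x) (hq0 : 0 < q) {S : Set Plane} {a b : ℕ} {e g : ℝ} (hab : a ≤ b)
    (h : ∀ s ∈ S, wt X ν {p | p ∈ sq (k * a) s ∧ p ∈ hit (k * b) S} ≤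
      q ^ (g - 3 - 4) * wt X ν (sq (k * a) s))
    (hP : wt X ν (hit (k * a) S) ≤ q ^ (e - 1)) :
    wt X ν (hit (k * b) S) ≤ q ^ (e + g - 7 - 1) := by
  calc _ ≤ q ^ (g - 3 - 4) * wt X ν (hit (k * a) S) := hit_step hν (Nat.mul_le_mul_left k hab) h
    _ ≤ q ^ (g - 3 - 4) * q ^ (e - 1) :=
        mul_le_mul_of_nonneg_left hP (Real.rpow_nonneg hq0.le _)
    _ = _ := by
        rw [← Real.rpow_add hq0]; congr 1; ring

/-- The mass of the points almost equidistant from `y` and `z`, when the distance of `y` and `z`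
is much larger than the square root of the admitted error. -/
lemma tube_chain (hν : ∀ x, 0 ≤ ν x) (hk : 1 ≤ k) (hqk : q = (1 / 2) ^ k)
    (hC : wt X ν Set.univ ≤ q⁻¹) {t : ℝ} (ht : 1 ≤ t) {f : ℕ → ℝ} {A₁ : ℝ}
    (hA₁ : 8 * D ^ 2 + 10 * D + 2 ≤ A₁) {S : Set Plane} {y z : Plane} {r m : ℕ}
    (hSX : ∀ x ∈ S, Cls X ν k N t f x ∧ XGood X ν k N A₁ f x y)
    (hD : ∀ x ∈ S, dist x y ≤ D) (hDz : ∀ x ∈ S, dist x z ≤ D)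
    (hS : ∀ x ∈ S, |dist x z - dist x y| ≤ 8 * q ^ N)
    (hm : 1 ≤ m) (hN : N ≤ m ^ 2) (hmr : m ≤ r) (hrN : 2 * r < N)
    (hz : 2 * q ^ (r + 1) < dist z y) (hz2 : dist z y ≤ 2 * q ^ r) :
    wt X ν S ≤ q ^ ((N : ℝ) / 2 - (980 * m + 3 / 2)) := by
  have hq0 : 0 < q := by rw [hqk]; positivity
  have hq1 : q < 1 := by rw [hqk]; exact pow_lt_one₀ (by norm_num) (by norm_num) (by lia)
  rcases Set.eq_empty_or_nonempty S with rfl | ⟨x₁, hx₁⟩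
  · simp only [wt, Set.indicator_empty, Finset.sum_const_zero]
    exact Real.rpow_nonneg hq0.le _
  obtain ⟨⟨_, hmono, hdbl, hlin, hf0⟩, _⟩ := hSX x₁ hx₁
  have hD0 : 0 ≤ D := dist_nonneg.trans (hD x₁ hx₁)
  obtain ⟨W, hW⟩ : ∃ W, N = W + (r + 1) := ⟨N - (r + 1), by lia⟩
  have hWN : W ≤ N := by lia
  have hgeo : ∀ α β : ℕ, α ≤ β → β ≤ W → β ≤ α + r → ∀ s ∈ S, ∀ p, p ∈ sq (k * α) s →
      p ∈ hit (k * β) S → |cross (p - s) (y - s)| ≤ A₁ * q ^ β := by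
    rintro α β hαβ hβW hβr s hs p hps ⟨s', hs', hps'⟩
    have hss' : cell (k * α) s' = cell (k * α) s :=
      (cell_mono (Nat.mul_le_mul_left k hαβ) hps').symm.trans hps
    have n1 : ‖s' - s‖ ≤ 2 * q ^ α := by
      have := cell_dist hss'
      rwa [pow_mul, ← hqk, dist_eq_norm] at this
    have n2 : ‖p - s'‖ ≤ 2 * q ^ β := by
      have := cell_dist hps'
      rwa [pow_mul, ← hqk, dist_eq_norm] at this
    have n3 : ‖y - s‖ ≤ D := by
      rw [← dist_eq_norm, dist_comm]; exact hD s hs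
    have b1 := abs_le.1 (bisector (hD s hs) (hDz s hs) (hS s hs))
    have b2 := abs_le.1 (bisector (hD s' hs') (hDz s' hs') (hS s' hs'))
    have e1 : |dot (s' - s) (z - y)| ≤ 16 * D * q ^ N := by
      have : dot (s' - s) (z - y) = dot (s' - y) (z - y) - dot (s - y) (z - y) := by
        simp only [dot, PiLp.sub_apply]; ring
      rw [this, abs_le]
      constructor <;> linarith [b1.1, b1.2, b2.1, b2.2]
    have e2 : |dot (y - s) (z - y)| ≤ 8 * D * q ^ N + ‖z - y‖ ^ 2 / 2 := by
      have : dot (y - s) (z - y) = - dot (s - y) (z - y) := by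
        simp only [dot, PiLp.sub_apply]; ring
      rw [this, abs_le]
      have := sq_nonneg ‖z - y‖
      constructor <;> linarith [b1.1, b1.2]
    rw [dist_eq_norm] at hz hz2
    have hpos : 0 < q ^ (r + 1) := by positivity
    have hv : 0 < ‖z - y‖ := by linarith
    have h := cross_le_of_dot hv e1 e2
    have hqN : q ^ N ≤ q ^ β * (‖z - y‖ / 2) := by
      rw [hW, pow_add]
      have h1 : q ^ W ≤ q ^ β := pow_le_pow_of_le_one hq0.le hq1.le hβW
      have h2 : q ^ (r + 1) ≤ ‖z - y‖ / 2 := by linarith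
      gcongr
    have hqα : q ^ α ≤ 1 := pow_le_one₀ hq0.le hq1.le
    have hqα0 : 0 < q ^ α := by positivity
    have hqβ0 : 0 < q ^ β := by positivity
    have hc1 : |cross (s' - s) (y - s)| ≤ (8 * D ^ 2 + 8 * D + 2) * q ^ β := by
      refine le_of_mul_le_mul_right ?_ hv
      calc _ ≤ _ := h
        _ ≤ 16 * D * (q ^ β * (‖z - y‖ / 2)) * D +
            (8 * D * (q ^ β * (‖z - y‖ / 2)) + ‖z - y‖ ^ 2 / 2) * (2 * q ^ α) := by gcongr
        _ = ((8 * D ^ 2 + 8 * D * q ^ α) * q ^ β + ‖z - y‖ * q ^ α) * ‖z - y‖ := by ring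
        _ ≤ ((8 * D ^ 2 + 8 * D * 1) * q ^ β + 2 * q ^ r * q ^ α) * ‖z - y‖ := by gcongr
        _ ≤ ((8 * D ^ 2 + 8 * D * 1) * q ^ β + 2 * q ^ β) * ‖z - y‖ := by
            have : q ^ r * q ^ α ≤ q ^ β := by
              rw [← pow_add]
              exact pow_le_pow_of_le_one hq0.le hq1.le (by lia)
            have h3 : 2 * q ^ r * q ^ α ≤ 2 * q ^ β := by linarith
            gcongr
        _ = _ := by ring
    have hc2 : |cross (p - s') (y - s)| ≤ 2 * q ^ β * D := (abs_cross_le _ _).trans (by gcongr)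
    have hsplit : cross (p - s) (y - s) = cross (p - s') (y - s) + cross (s' - s) (y - s) := by
      simp only [cross, PiLp.sub_apply]; ring
    rw [hsplit]
    calc _ ≤ 2 * q ^ β * D + (8 * D ^ 2 + 8 * D + 2) * q ^ β := (abs_add_le _ _).trans (by linarith)
      _ = (8 * D ^ 2 + 10 * D + 2) * q ^ β := by ring
      _ ≤ _ := by gcongr
  have key := chain_tube (P := fun n e => wt X ν (hit (k * n) S) ≤ q ^ (e - 1)) (f := f) (c := 7)
    (M := W) (m := m) (r := r)
    (fun a e e' h he => h.trans (Real.rpow_le_rpow_of_exponent_ge hq0 hq1.le (by linarith)))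
    (fun a b e hab _ h => (wt_mono hν fun x _ hx => hit_antitone hab hx).trans h)
    (fun a b hab hb => hmono a b hab (hb.trans hWN))
    (fun a b hab hb => hdbl a b hab (hb.trans hWN))
    (fun a ha => by
      have h1 := hlin a (ha.trans hWN)
      have h2 : (0 : ℝ) ≤ a := Nat.cast_nonneg a
      nlinarith)
    (by norm_num) hm (hWN.trans hN) hf0 hmr (by lia)
    (by
      rw [zero_sub, Real.rpow_neg_one]
      exact (wt_le_univ hν _).trans hC)
    (by
      intro a b hab hbW hbr e g hg hP
      refine chain_step hν hq0 hab (fun s hs => ?_) hP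
      have hgood := (hSX s hs).2 a b hab (hbW.trans hWN) (g - 3) (fun ρ h1 h2 => by
        linarith [hg ρ h1 h2])
      rw [← hqk] at hgood
      refine le_trans (wt_mono hν fun p _ hp => ?_) hgood
      exact ⟨hp.1, hgeo a b hab hbW hbr s hs p hp.1 hp.2⟩)
  refine (wt_mono hν fun x _ hx => subset_hit _ S hx).trans (key.trans (le_of_eq ?_))
  congr 1
  have : (N : ℝ) = W + (r + 1) := by exact_mod_cast hW
  rw [this]
  ring

/-- The mass of the part of a thin annulus about `x` consisting of points good for `x`. -/
lemma annulus_chain (hμ : ∀ y, 0 ≤ μ y) (hk : 1 ≤ k) (hqk : q = (1 / 2) ^ k)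
    (hC : wt Y μ Set.univ ≤ q⁻¹) {s : ℝ} (hs : 1 < s) {f : ℕ → ℝ} {S : Set Plane} {x : Plane}
    {a₀ : ℝ} {m : ℕ} (hSY : ∀ z ∈ S, Cls Y μ k N s f z ∧ YGood Y μ k N m f z x)
    (hS : ∀ z ∈ S, |dist x z - a₀| ≤ 3 * q ^ N) (hm : 88 ≤ m) (hN : N = m ^ 2) :
    wt Y μ S ≤ q ^ (N * (s / 4 + 1 / 2) - 2000 * m) := by
  have hq0 : 0 < q := by rw [hqk]; positivity
  have hq1 : q < 1 := by rw [hqk]; exact pow_lt_one₀ (by norm_num) (by norm_num) (by lia)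
  rcases Set.eq_empty_or_nonempty S with rfl | ⟨x₁, hx₁⟩
  · simp only [wt, Set.indicator_empty, Finset.sum_const_zero]
    exact Real.rpow_nonneg hq0.le _
  obtain ⟨⟨_, hmono, hdbl, hlin, hf0⟩, _⟩ := hSY x₁ hx₁
  have hm' : (88 : ℝ) ≤ m := by exact_mod_cast hm
  have hgeo : ∀ b ≤ N, ∀ s ∈ S, ∀ p, p ∈ hit (k * b) S → |dist x p - dist x s| ≤ 8 * q ^ b := by
    rintro b hb s hs p ⟨s', hs', hps'⟩
    have n2 : dist p s' ≤ 2 * q ^ b := by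
      have := cell_dist hps'
      rwa [pow_mul, ← hqk] at this
    have hNb : q ^ N ≤ q ^ b := pow_le_pow_of_le_one hq0.le hq1.le hb
    have h1 := abs_le.1 (hS s hs)
    have h2 := abs_le.1 (hS s' hs')
    have h3 := dist_triangle x p s'
    have h4 := dist_triangle x s' p
    rw [dist_comm s' p] at h4
    rw [abs_le]
    constructor <;> linarith [h1.1, h1.2, h2.1, h2.2]
  have hstep : ∀ a b, a ≤ b → b ≤ N → (b ≤ 2 * a ∨ (b = N ∧ m ≤ a)) → ∀ e g : ℝ,
      (∀ r, a ≤ r → r ≤ b → g - 3 ≤ f r - f a + bisExp N m b r) →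
      wt Y μ (hit (k * a) S) ≤ q ^ (e - 1) → wt Y μ (hit (k * b) S) ≤ q ^ (e + g - 7 - 1) := by
    intro a b hab hb hor e g hg hP
    refine chain_step hμ hq0 hab (fun s hs => ?_) hP
    have hgood := (hSY s hs).2 a b hab hb hor (g - 3) hg
    rw [← hqk] at hgood
    refine le_trans (wt_mono hμ fun p _ hp => ?_) hgood
    exact ⟨hp.1, hgeo b hb s hs p hp.2⟩
  have key := chain_annulus (P := fun n e => wt Y μ (hit (k * n) S) ≤ q ^ (e - 1)) (f := f) (c := 7)
    (M := N) (m := m) (s := s) (E := 980 * m + 3 / 2) hs (by positivity)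
    (fun a e e' h he => h.trans (Real.rpow_le_rpow_of_exponent_ge hq0 hq1.le (by linarith)))
    (fun a b e hab _ h => (wt_mono hμ fun x _ hx => hit_antitone hab hx).trans h)
    hmono hdbl hlin (by norm_num) hN (by linarith) hf0
    (by
      rw [zero_sub, Real.rpow_neg_one]
      exact (wt_le_univ hμ _).trans hC)
    (by
      intro a b hab hbN hba e g hg hP
      refine hstep a b hab hbN (Or.inl hba) e g (fun r h1 h2 => ?_) hP
      rw [bisExp, if_pos (by lia)]
      linarith [hg r h1 h2])
    (by
      intro a hma haN e g hg hg' hP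
      refine hstep a N haN le_rfl (Or.inr ⟨rfl, hma⟩) e g (fun r h1 h2 => ?_) hP
      rw [bisExp]
      split_ifs with h
      · linarith [hg r h1 h2 h]
      · linarith [hg' r h1 h2 (by lia)])
  refine (wt_mono hμ fun x _ hx => subset_hit _ S hx).trans (key.trans ?_)
  apply Real.rpow_le_rpow_of_exponent_ge hq0 hq1.le
  linarith

end chains

/-! ### The discretised theorem -/

section finite

variable {X Y : Finset Plane} {ν μ : Plane → ℝ} {k N : ℕ} {q A C D : ℝ}

/-- No tube along the line through `y` and `x` is heavy. -/
def TubeOK (X : Finset Plane) (ν : Plane → ℝ) (N : ℕ) (A q : ℝ) (y x : Plane) : Prop :=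
  ∀ j ≤ N, wt X ν {x' | |cross (x' - y) (x - y)| ≤ A * q ^ j} ≤ q⁻¹ * (A * q ^ j)

lemma inv_le_rpow (hq0 : 0 < q) (hq1 : q ≤ 1) (b : ℝ) : q⁻¹ ≤ q ^ (b - b - 3) := by
  rw [← Real.rpow_neg_one]
  exact Real.rpow_le_rpow_of_exponent_ge hq0 hq1 (by linarith)

/-- The block lemma applied to tubes: `x₀` and a point at distance `q^r` from it are collinear with
`y`, up to `q^b`, only for `y` in a tube of width `q^(b-r)`. -/
lemma wt_not_xgood (hν : ∀ x, 0 ≤ ν x) (hμ : ∀ y, 0 ≤ μ y) (hk : 1 ≤ k) (hqk : q = (1 / 2) ^ k)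
    (hA : A ≤ q⁻¹) {A₁ : ℝ} (hAA : D * A₁ ≤ A) (hN : (N : ℝ) + 1 ≤ q⁻¹)
    (hC : wt Y μ Set.univ ≤ q⁻¹) {t : ℝ} {f : ℕ → ℝ} {x₀ : Plane} (hD : ∀ y ∈ Y, dist y x₀ ≤ D)
    (hcls : Cls X ν k N t f x₀) :
    wt Y μ {y | TubeOK Y μ N A q x₀ y ∧ ¬ XGood X ν k N A₁ f x₀ y} ≤ (N + 1) ^ 2 * q := by
  have hq0 : 0 < q := by rw [hqk]; positivity
  have hq1 : q < 1 := by rw [hqk]; exact pow_lt_one₀ (by norm_num) (by norm_num) (by lia)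
  set B : ℕ × ℕ → Set Plane := fun ab => {y | (ab.1 ≤ ab.2 ∧ ab.2 ≤ N) ∧ TubeOK Y μ N A q x₀ y ∧
    ∃ g : ℝ, (∀ r, ab.1 ≤ r → r ≤ ab.2 → g ≤ f r - f ab.1 + ((ab.2 : ℝ) - r - 3)) ∧
      q ^ (g - 4) * wt X ν (sq (k * ab.1) x₀) <
        wt X ν {p' | p' ∈ sq (k * ab.1) x₀ ∧ |cross (p' - x₀) (y - x₀)| ≤ A₁ * q ^ ab.2}} with hB
  have hcov := wt_le_sum (X := Y) hμ {y | TubeOK Y μ N A q x₀ y ∧ ¬ XGood X ν k N A₁ f x₀ y}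
    (Finset.range (N + 1) ×ˢ Finset.range (N + 1)) B (by
    rintro y _ ⟨hy, hyn⟩
    unfold XGood at hyn
    push Not at hyn
    obtain ⟨α, β, hαβ, hβ, g, hg, hlt⟩ := hyn
    rw [← hqk] at hlt
    exact ⟨(α, β), by simp; lia, ⟨hαβ, hβ⟩, hy, g, hg, hlt⟩)
  refine hcov.trans ?_
  calc _ ≤ ∑ _ab ∈ Finset.range (N + 1) ×ˢ Finset.range (N + 1), q := by
        refine Finset.sum_le_sum fun ab _ => ?_
        by_cases hab : ab.1 ≤ ab.2 ∧ ab.2 ≤ N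
        · refine le_trans (wt_mono hμ fun y _ hy => hy.2) (block_lemma (Y := Y) (μ := μ) hν hμ hqk
            hab.1 (p := x₀) (G := {y | TubeOK Y μ N A q x₀ y})
            (Near := fun p' y => |cross (p' - x₀) (y - x₀)| ≤ A₁ * q ^ ab.2)
            (f := f) (h := fun r => (ab.2 : ℝ) - r - 3) ?_ ?_ ?_ ?_)
          · intro r _ hr
            rw [hqk]
            exact (hcls.1 r (hr.trans hab.2)).2
          · rw [hqk]
            exact (hcls.1 ab.1 (hab.1.trans hab.2)).1
          · intro r _ hr p' _ _ h
            rcases eq_or_lt_of_le hr with rfl | hr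
            · exact (wt_le_univ hμ _).trans (hC.trans (inv_le_rpow hq0 hq1.le _))
            · exact xblock_shell hμ hq0 hA hAA hD (fun y _ hy => hy) hr hab.2 (h hr)
          · have : (ab.2 : ℝ) ≤ N := by exact_mod_cast hab.2
            linarith
        · refine le_trans (le_of_eq ?_) hq0.le
          exact Finset.sum_eq_zero fun y _ => Set.indicator_of_notMem (fun h => hab h.1) _
    _ = _ := by
        rw [Finset.sum_const, Finset.card_product, Finset.card_range, nsmul_eq_mul]
        push_cast; ring

/-- The block lemma applied to annuli, with `yblock_shell` for `b ≤ 2r` and `tube_chain` otherwise. -/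
lemma wt_not_ygood (hν : ∀ x, 0 ≤ ν x) (hμ : ∀ y, 0 ≤ μ y) (hk : 1 ≤ k) (hqk : q = (1 / 2) ^ k)
    (hA : A ≤ q⁻¹) {A₁ : ℝ} (hAA : (8 * D + 2) * D ≤ A) (hA₁ : 8 * D ^ 2 + 10 * D + 2 ≤ A₁)
    (hN : (N : ℝ) + 1 ≤ q⁻¹) (hC : wt X ν Set.univ ≤ q⁻¹) {s t : ℝ} (ht : 1 ≤ t) {f f' : ℕ → ℝ}
    {m : ℕ} (hm : 1 ≤ m) (hNm : N = m ^ 2)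
    {y₀ : Plane} (hD : ∀ x ∈ X, dist x y₀ ≤ D) (hDY : ∀ x ∈ X, ∀ y ∈ Y, dist x y ≤ D)
    (hcls : Cls Y μ k N s f' y₀) :
    wt X ν {x | (Cls X ν k N t f x ∧ TubeOK X ν N A q y₀ x ∧ XGood X ν k N A₁ f x y₀) ∧
      ¬ YGood Y μ k N m f' y₀ x} ≤ (N + 1) ^ 2 * q := by
  have hq0 : 0 < q := by rw [hqk]; positivity
  have hq1 : q < 1 := by rw [hqk]; exact pow_lt_one₀ (by norm_num) (by norm_num) (by lia)
  set G : Set Plane :=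
    {x | Cls X ν k N t f x ∧ TubeOK X ν N A q y₀ x ∧ XGood X ν k N A₁ f x y₀} with hG
  set B : ℕ × ℕ → Set Plane := fun ab => {x | (ab.1 ≤ ab.2 ∧ ab.2 ≤ N ∧
    (ab.2 ≤ 2 * ab.1 ∨ (ab.2 = N ∧ m ≤ ab.1))) ∧ x ∈ G ∧
    ∃ g : ℝ, (∀ r, ab.1 ≤ r → r ≤ ab.2 → g ≤ f' r - f' ab.1 + bisExp N m ab.2 r) ∧
      q ^ (g - 4) * wt Y μ (sq (k * ab.1) y₀) <
        wt Y μ {z | z ∈ sq (k * ab.1) y₀ ∧ |dist x z - dist x y₀| ≤ 8 * q ^ ab.2}} with hB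
  have hcov := wt_le_sum (X := X) hν {x | x ∈ G ∧ ¬ YGood Y μ k N m f' y₀ x}
    (Finset.range (N + 1) ×ˢ Finset.range (N + 1)) B (by
    rintro x _ ⟨hx, hxn⟩
    unfold YGood at hxn
    push Not at hxn
    obtain ⟨α, β, hαβ, hβ, hor, g, hg, hlt⟩ := hxn
    rw [← hqk] at hlt
    exact ⟨(α, β), by simp; lia, ⟨hαβ, hβ, hor⟩, hx, g, hg, hlt⟩)
  refine hcov.trans ?_
  calc _ ≤ ∑ _ab ∈ Finset.range (N + 1) ×ˢ Finset.range (N + 1), q := by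
        refine Finset.sum_le_sum fun ab _ => ?_
        by_cases hab : ab.1 ≤ ab.2 ∧ ab.2 ≤ N ∧ (ab.2 ≤ 2 * ab.1 ∨ (ab.2 = N ∧ m ≤ ab.1))
        · refine le_trans (wt_mono hν fun y _ hy => hy.2) (block_lemma (Y := X) (μ := ν) hμ hν hqk
            hab.1 (p := y₀) (G := G)
            (Near := fun z x => |dist x z - dist x y₀| ≤ 8 * q ^ ab.2)
            (f := f') (h := fun r => bisExp N m ab.2 r) ?_ ?_ ?_ ?_)
          · intro r _ hr
            rw [hqk]
            exact (hcls.1 r (hr.trans hab.2.1)).2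
          · rw [hqk]
            exact (hcls.1 ab.1 (hab.1.trans hab.2.1)).1
          · intro r hra hr z hz hzr h
            unfold bisExp
            rcases eq_or_lt_of_le hr with rfl | hr
            · rw [if_pos (by lia)]
              exact (wt_le_univ hν _).trans (hC.trans (inv_le_rpow hq0 hq1.le _))
            · split_ifs with h2
              · exact yblock_shell hν hq0 hq1.le hA hAA hD (fun x hx => hDY x hx z hz)
                  (fun x _ hx => hx.2.1) hr hab.2.1 h2 (h hr) hzr
              · have hbN : ab.2 = N ∧ m ≤ ab.1 := by
                  rcases hab.2.2 with h3 | h3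
                  · lia
                  · exact h3
                rw [hbN.1] at h2 hr ⊢
                refine le_trans (wt_mono hν (B := {x | x ∈ X ∧ x ∈ G ∧
                  |dist x z - dist x y₀| ≤ 8 * q ^ N}) fun x hx hx' => ⟨hx, hx'⟩) ?_
                refine tube_chain (r := r) (y := y₀) (z := z) (f := f) hν hk hqk hC ht hA₁
                  (fun x hx => ⟨hx.2.1.1, hx.2.1.2.2⟩) (fun x hx => hD x hx.1)
                  (fun x hx => hDY x hx.1 z hz) (fun x hx => hx.2.2) hm hNm.le
                  (hbN.2.trans hra) (by lia) (h (by lia)) hzr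
          · have : (ab.2 : ℝ) ≤ N := by exact_mod_cast hab.2.1
            linarith
        · refine le_trans (le_of_eq ?_) hq0.le
          exact Finset.sum_eq_zero fun y _ => Set.indicator_of_notMem (fun h => hab h.1) _
    _ = _ := by
        rw [Finset.sum_const, Finset.card_product, Finset.card_range, nsmul_eq_mul]
        push_cast; ring

/-- The pairs with prescribed branching functions whose distance is one of few prescribed values
are few. -/
lemma pm_class_le (hν : ∀ x, 0 ≤ ν x) (hμ : ∀ y, 0 ≤ μ y) (hk : 1 ≤ k) (hqk : q = (1 / 2) ^ k)
    (hA : A ≤ q⁻¹) {A₁ : ℝ} (hAA' : D * A₁ ≤ A) (hAA : (8 * D + 2) * D ≤ A)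
    (hA₁ : 8 * D ^ 2 + 10 * D + 2 ≤ A₁) (hN : (N : ℝ) + 1 ≤ q⁻¹)
    (hXC : wt X ν Set.univ ≤ C) (hYC : wt Y μ Set.univ ≤ C) (hCq : C ≤ q⁻¹)
    {s t u : ℝ} (ht : 1 ≤ t) (hs : 1 < s) {f f' : ℕ → ℝ} {m : ℕ} (hm : 88 ≤ m) (hNm : N = m ^ 2)
    (hmu : 1 + 2000 * m ≤ N * (s / 4 + 1 / 2 - u))
    (hDY : ∀ x ∈ X, ∀ y ∈ Y, dist x y ≤ D) (I : Plane → Finset ℝ)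
    (hI : ∀ x ∈ X, ((I x).card : ℝ) ≤ q ^ (-(N * u))) :
    pm X Y ν μ (fun x y => (∃ a ∈ I x, |dist x y - a| ≤ 3 * q ^ N) ∧ Cls X ν k N t f x ∧
      Cls Y μ k N s f' y ∧ TubeOK X ν N A q y x ∧ TubeOK Y μ N A q x y) ≤
      3 * C * (N + 1) ^ 2 * q := by
  have hq0 : 0 < q := by rw [hqk]; positivity
  have hq1 : q < 1 := by rw [hqk]; exact pow_lt_one₀ (by norm_num) (by norm_num) (by lia)
  set G1 : Plane → Plane → Prop := fun x y => Cls X ν k N t f x ∧ TubeOK Y μ N A q x y ∧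
    ¬ XGood X ν k N A₁ f x y with hG1
  set G2 : Plane → Plane → Prop := fun x y => Cls Y μ k N s f' y ∧
    (Cls X ν k N t f x ∧ TubeOK X ν N A q y x ∧ XGood X ν k N A₁ f x y) ∧
      ¬ YGood Y μ k N m f' y x with hG2
  set G3 : Plane → Plane → Prop := fun x y => (∃ a ∈ I x, |dist x y - a| ≤ 3 * q ^ N) ∧
    Cls Y μ k N s f' y ∧ YGood Y μ k N m f' y x with hG3
  have hC0 : 0 ≤ C := (wt_nonneg hν _).trans hXC
  have hNq : 0 ≤ ((N : ℝ) + 1) ^ 2 * q := by positivity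
  have e1 : pm X Y ν μ G1 ≤ C * ((N + 1) ^ 2 * q) := by
    refine (pm_le_mul hν (A := (N + 1) ^ 2 * q) fun x hx => ?_).trans (by gcongr)
    by_cases hc : Cls X ν k N t f x
    · refine (wt_mono hμ fun y _ hy => hy.2).trans
        (wt_not_xgood hν hμ hk hqk hA hAA' hN (hYC.trans hCq) (fun y hy => ?_) hc)
      rw [dist_comm]
      exact hDY x hx y hy
    · refine le_trans (le_of_eq ?_) hNq
      exact Finset.sum_eq_zero fun y _ => Set.indicator_of_notMem (fun h => hc h.1) _
  have e2 : pm X Y ν μ G2 ≤ C * ((N + 1) ^ 2 * q) := by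
    rw [pm_swap]
    refine (pm_le_mul hμ (A := (N + 1) ^ 2 * q) fun y hy => ?_).trans (by gcongr)
    by_cases hc : Cls Y μ k N s f' y
    · exact (wt_mono hν fun x _ hx => hx.2).trans
        (wt_not_ygood hν hμ hk hqk hA hAA hA₁ hN (hXC.trans hCq) ht (by lia) hNm
          (fun x hx => hDY x hx y hy) hDY hc)
    · refine le_trans (le_of_eq ?_) hNq
      exact Finset.sum_eq_zero fun y _ => Set.indicator_of_notMem (fun h => hc h.1) _
  have e3 : pm X Y ν μ G3 ≤ C * ((N + 1) ^ 2 * q) := by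
    refine (pm_le_mul hν (A := (N + 1) ^ 2 * q) fun x hx => ?_).trans (by gcongr)
    have hcov := wt_le_sum (X := Y) hμ {y | G3 x y} (I x)
      (fun a => {y | |dist x y - a| ≤ 3 * q ^ N ∧ Cls Y μ k N s f' y ∧ YGood Y μ k N m f' y x}) (by
        rintro y _ ⟨⟨a, ha, hya⟩, hy⟩
        exact ⟨a, ha, hya, hy⟩)
    refine hcov.trans ?_
    calc _ ≤ ∑ _a ∈ I x, q ^ (N * (s / 4 + 1 / 2) - 2000 * m) :=
          Finset.sum_le_sum fun a _ => annulus_chain hμ hk hqk (hYC.trans hCq) hs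
            (fun z hz => hz.2) (fun z hz => hz.1) hm hNm
      _ ≤ q ^ (-(N * u)) * q ^ (N * (s / 4 + 1 / 2) - 2000 * m) := by
          rw [Finset.sum_const, nsmul_eq_mul]
          exact mul_le_mul_of_nonneg_right (hI x hx) (Real.rpow_nonneg hq0.le _)
      _ = q ^ (-(N * u) + (N * (s / 4 + 1 / 2) - 2000 * m)) := by rw [Real.rpow_add hq0]
      _ ≤ q ^ (1 : ℝ) := Real.rpow_le_rpow_of_exponent_ge hq0 hq1.le (by linarith)
      _ = q := Real.rpow_one q
      _ ≤ (N + 1) ^ 2 * q := by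
          apply le_mul_of_one_le_left hq0.le
          apply one_le_pow₀
          have : (0 : ℝ) ≤ N := Nat.cast_nonneg N
          linarith
  have u1 := pm_le_of_or (X := X) (Y := Y) (G := fun x y =>
      (∃ a ∈ I x, |dist x y - a| ≤ 3 * q ^ N) ∧ Cls X ν k N t f x ∧
      Cls Y μ k N s f' y ∧ TubeOK X ν N A q y x ∧ TubeOK Y μ N A q x y) (A := G1)
    (B := fun x y => G2 x y ∨ G3 x y) hν hμ (by
      rintro x _ y _ ⟨h1, h2, h3, h4, h5⟩
      by_cases hx : XGood X ν k N A₁ f x y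
      · by_cases hy : YGood Y μ k N m f' y x
        · exact Or.inr (Or.inr ⟨h1, h3, hy⟩)
        · exact Or.inr (Or.inl ⟨h3, ⟨h2, h4, hx⟩, hy⟩)
      · exact Or.inl ⟨h2, h5, hx⟩)
  have u2 := pm_le_of_or (X := X) (Y := Y) (G := fun x y => G2 x y ∨ G3 x y) (A := G2) (B := G3)
    hν hμ (fun _ _ _ _ h => h)
  linarith

end finite

lemma pm_not_tubeOK {X Y : Finset Plane} {ν μ : Plane → ℝ} (hν : ∀ x, 0 ≤ ν x) (hμ : ∀ y, 0 ≤ μ y)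
    {N : ℕ} {A q H : ℝ}
    (h : ∀ j ≤ N, pm X Y ν μ (fun x y => q⁻¹ * (A * q ^ j) <
      wt X ν {x' | |cross (x' - y) (x - y)| ≤ A * q ^ j}) ≤ H) :
    pm X Y ν μ (fun x y => ¬ TubeOK X ν N A q y x) ≤ (N + 1) * H := by
  have hcov := pm_le_sum (X := X) (Y := Y) hν hμ (fun x y => ¬ TubeOK X ν N A q y x)
    (Finset.range (N + 1)) (fun j x y => q⁻¹ * (A * q ^ j) <
      wt X ν {x' | |cross (x' - y) (x - y)| ≤ A * q ^ j}) (by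
    intro x _ y _ hn
    unfold TubeOK at hn
    push Not at hn
    obtain ⟨j, hj, h⟩ := hn
    exact ⟨j, by simp; lia, h⟩)
  refine hcov.trans ?_
  calc _ ≤ ∑ _j ∈ Finset.range (N + 1), H :=
        Finset.sum_le_sum fun j hj => h j (by simp at hj; lia)
    _ = _ := by simp

set_option maxHeartbeats 2000000 in
/-- The discretised theorem: if every `x ∈ X` sees a non-negligible part of `μ` at few
distances, then `ν` has small mass. -/
theorem finite_main {s t c₀ R C u : ℝ} (hs : 1 < s) (ht : 1 < t) (hc₀ : 0 < c₀) (hR : 0 < R)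
    (hC : 0 < C) (hu : u < s / 4 + 1 / 2) : ∃ (N k₀ : ℕ) (c : ℝ), 1 ≤ N ∧ 0 < c ∧
    ∀ k ≥ k₀, ∀ (i j : Fin 2), i ≠ j → ∀ (X Y : Finset Plane) (ν μ : Plane → ℝ)
      (I : Plane → Finset ℝ) (q : ℝ), q = (1 / 2) ^ k →
      (∀ x, 0 ≤ ν x) → (∀ y, 0 ≤ μ y) →
      (∀ x ∈ X, ∀ y ∈ Y, c₀ ≤ |x i - y i|) →
      (∀ x ∈ X, ∀ l, |x l| ≤ R) → (∀ y ∈ Y, ∀ l, |y l| ≤ R) →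
      wt X ν Set.univ ≤ C → wt Y μ Set.univ ≤ C →
      (∀ p ρ, q ^ N ≤ ρ → wt X ν (Metric.closedBall p ρ) ≤ C * ρ ^ t) →
      (∀ p ρ, q ^ N ≤ ρ → wt Y μ (Metric.closedBall p ρ) ≤ C * ρ ^ s) →
      (∀ x ∈ X, ((I x).card : ℝ) ≤ q ^ (-(N * u))) →
      (∀ x ∈ X, q ^ c ≤ wt Y μ {y | ∃ a ∈ I x, |dist x y - a| ≤ 3 * q ^ N}) →
      wt X ν Set.univ ≤ q ^ c := by
  classical
  obtain ⟨C₁, K₁, η₁, hC₁, hK₁, hη₁, hT₁⟩ := heavy_tubes ht hs hc₀ hR hC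
  obtain ⟨C₂, K₂, η₂, hC₂, hK₂, hη₂, hT₂⟩ := heavy_tubes hs ht hc₀ hR hC
  set η : ℝ := min (min η₁ η₂) 1 with hη
  have hη0 : 0 < η := lt_min (lt_min hη₁ hη₂) one_pos
  have hηη₁ : η ≤ η₁ := (min_le_left _ _).trans (min_le_left _ _)
  have hηη₂ : η ≤ η₂ := (min_le_left _ _).trans (min_le_right _ _)
  have hη1 : η ≤ 1 := min_le_right _ _
  set κ : ℝ := s / 4 + 1 / 2 - u with hκ
  have hκ0 : 0 < κ := by rw [hκ]; linarith
  -- the errors of the chains, of size `O(m)`, are beaten by `N * κ = m ^ 2 * κ`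
  set m : ℕ := max 88 ⌈2001 / κ⌉₊ with hm
  have hm88 : 88 ≤ m := le_max_left _ _
  have hmκ : 2001 ≤ m * κ := by
    have h1 : 2001 / κ ≤ (m : ℝ) :=
      (Nat.le_ceil _).trans (by exact_mod_cast le_max_right _ _)
    rwa [div_le_iff₀ hκ0] at h1
  set N : ℕ := m ^ 2 with hN
  have hm1 : (1 : ℝ) ≤ m := by exact_mod_cast (by lia : 1 ≤ m)
  have hmu : 1 + 2000 * (m : ℝ) ≤ N * (s / 4 + 1 / 2 - u) := by
    rw [← hκ, hN]; push_cast
    nlinarith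
  set D : ℝ := 4 * R with hD
  have hD0 : 0 < D := by positivity
  set A₁ : ℝ := 8 * D ^ 2 + 10 * D + 2 with hA₁
  have hA₁0 : 0 < A₁ := by positivity
  set A : ℝ := D * A₁ + (8 * D + 2) * D + 1 with hA
  have hA1 : 1 ≤ A := by
    have : 0 ≤ D * A₁ + (8 * D + 2) * D := by positivity
    linarith
  set L : ℕ := ⌈2 * R⌉₊ with hL
  -- `Kc * q ^ η` bounds the mass of the pairs at the given distances: irregular points, heavy
  -- tubes, and one term for each pair of branching functions
  set Kc : ℝ := 2 * ((N + 1) ^ 2 * (C * (74 + (2 * L + 3) ^ 2)) * C) + (N + 1) * C₁ +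
    (N + 1) * C₂ + (Fintype.card (Fin (N + 1) → Fin (2 * N + 20)) : ℝ) ^ 2 *
      (3 * C * (N + 1) ^ 2) with hKc
  have hKc0 : 0 < Kc := by positivity
  set Bd : ℝ := A + C + C * 2 ^ t + C * 2 ^ s + (N + 1) + K₁ + K₂ + Kc ^ (2 / η) with hBd
  obtain ⟨k₀, hk₀⟩ := pow_unbounded_of_one_lt Bd (by norm_num : (1 : ℝ) < 2)
  refine ⟨N, max 1 k₀, η / 4, Nat.one_le_pow _ _ (by lia), by positivity, ?_⟩
  intro k hk i j hij X Y ν μ I q hqk hν hμ hsep hXR hYR hXC hYC hfX hfY hI hbig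
  have hk1 : 1 ≤ k := (le_max_left _ _).trans hk
  have hq0 : 0 < q := by rw [hqk]; positivity
  have hq1 : q < 1 := by rw [hqk]; exact pow_lt_one₀ (by norm_num) (by norm_num) (by lia)
  have hBq : Bd ≤ q⁻¹ := by
    refine hk₀.le.trans ?_
    rw [hqk, one_div, inv_pow, inv_inv]
    exact pow_le_pow_right₀ (by norm_num) ((le_max_right _ _).trans hk)
  have p1 : 0 < C * 2 ^ t := by positivity
  have p2 : 0 < C * 2 ^ s := by positivity
  have p3 : 0 < Kc ^ (2 / η) := by positivity
  have p4 : (0 : ℝ) ≤ N := Nat.cast_nonneg N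
  have bA : A ≤ q⁻¹ := by linarith
  have bC : C ≤ q⁻¹ := by linarith
  have bCt : C * 2 ^ t ≤ q⁻¹ := by linarith
  have bCs : C * 2 ^ s ≤ q⁻¹ := by linarith
  have bN : (N : ℝ) + 1 ≤ q⁻¹ := by linarith
  have bK₁ : K₁ ≤ q⁻¹ := by linarith
  have bK₂ : K₂ ≤ q⁻¹ := by linarith
  have bKc : Kc * q ^ (η / 2) ≤ 1 := by
    have h1 : Kc ^ (2 / η) ≤ q⁻¹ := by linarith
    have h2 : Kc ≤ (q⁻¹) ^ (η / 2) := by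
      calc Kc = (Kc ^ (2 / η)) ^ (η / 2) := by
            rw [← Real.rpow_mul hKc0.le]
            rw [show 2 / η * (η / 2) = 1 by field_simp, Real.rpow_one]
        _ ≤ _ := Real.rpow_le_rpow p3.le h1 (by positivity)
    rw [Real.inv_rpow hq0.le] at h2
    calc Kc * q ^ (η / 2) ≤ (q ^ (η / 2))⁻¹ * q ^ (η / 2) := by gcongr
      _ = 1 := inv_mul_cancel₀ (Real.rpow_pos_of_pos hq0 _).ne'
  have hqη : q ≤ q ^ η := by
    calc q = q ^ (1 : ℝ) := (Real.rpow_one q).symm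
      _ ≤ _ := Real.rpow_le_rpow_of_exponent_ge hq0 hq1.le hη1
  by_contra! hcon
  have hqc : q ≤ q ^ (η / 4) := by
    calc q = q ^ (1 : ℝ) := (Real.rpow_one q).symm
      _ ≤ _ := Real.rpow_le_rpow_of_exponent_ge hq0 hq1.le (by linarith)
  have hqc0 : 0 < q ^ (η / 4) := Real.rpow_pos_of_pos hq0 _
  have hXlow : q ≤ wt X ν Set.univ := hqc.trans hcon.le
  have hYlow : q ≤ wt Y μ Set.univ := by
    rcases X.eq_empty_or_nonempty with rfl | ⟨x, hx⟩
    · simp only [wt, Finset.sum_empty] at hcon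
      linarith
    · exact hqc.trans ((hbig x hx).trans (wt_le_univ hμ _))
  have hDY : ∀ x ∈ X, ∀ y ∈ Y, dist x y ≤ D := by
    intro x hx y hy
    have := dist_le_two_mul (x := x) (y := y) (r := 2 * R) (fun l => by
      have h1 := hXR x hx l
      have h2 := hYR y hy l
      exact (abs_sub _ _).trans (by linarith))
    rw [hD]; linarith
  -- lower bound for the mass of the pairs at the given distances
  set G0 : Plane → Plane → Prop := fun x y => ∃ a ∈ I x, |dist x y - a| ≤ 3 * q ^ N with hG0
  have hlow : q ^ (η / 2) < pm X Y ν μ G0 := by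
    calc q ^ (η / 2) = q ^ (η / 4) * q ^ (η / 4) := by
          rw [← Real.rpow_add hq0]; congr 1; ring
      _ < wt X ν Set.univ * q ^ (η / 4) := by gcongr
      _ ≤ _ := by
          rw [pm, wt, Finset.sum_mul]
          refine Finset.sum_le_sum fun x hx => ?_
          rw [Set.indicator_univ]
          exact mul_le_mul_of_nonneg_left (hbig x hx) (hν x)
  -- upper bound: irregular points, heavy tubes, and finitely many classes
  have hLR : ∀ r : ℝ, r ≤ R → r ≤ (L : ℝ) / 2 := fun r hr => by
    have := Nat.le_ceil (2 * R)
    rw [← hL] at this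
    linarith
  set BX : Set Plane :=
    {x | ¬ ∃ i : Fin (N + 1) → Fin (2 * N + 20), Cls X ν k N t (branching i) x} with hBX
  set BY : Set Plane :=
    {y | ¬ ∃ i : Fin (N + 1) → Fin (2 * N + 20), Cls Y μ k N s (branching i) y} with hBY
  have hBXle : wt X ν BX ≤ _ := wt_not_cls hν hk1 hqk (L := L)
    (fun x hx l => hLR _ (hXR x hx l)) hXC hC bC bCt hfX hXlow
  have hBYle : wt Y μ BY ≤ _ := wt_not_cls hμ hk1 hqk (L := L)
    (fun x hx l => hLR _ (hYR x hx l)) hYC hC bC bCs hfY hYlow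
  have e1 : pm X Y ν μ (fun x _ => x ∈ BX) ≤
      (N + 1) ^ 2 * (C * (74 + (2 * L + 3) ^ 2)) * C * q ^ η := by
    refine (pm_fst_le BX).trans ?_
    have h0 := wt_nonneg (X := Y) hμ Set.univ
    calc _ ≤ ((N + 1) ^ 2 * (C * (74 + (2 * L + 3) ^ 2) * q)) * C := by gcongr
      _ ≤ ((N + 1) ^ 2 * (C * (74 + (2 * L + 3) ^ 2) * q ^ η)) * C := by gcongr
      _ = _ := by ring
  have e2 : pm X Y ν μ (fun _ y => y ∈ BY) ≤
      (N + 1) ^ 2 * (C * (74 + (2 * L + 3) ^ 2)) * C * q ^ η := by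
    rw [pm_swap]
    refine (pm_fst_le BY).trans ?_
    have h0 := wt_nonneg (X := X) hν Set.univ
    calc _ ≤ ((N + 1) ^ 2 * (C * (74 + (2 * L + 3) ^ 2) * q)) * C := by gcongr
      _ ≤ ((N + 1) ^ 2 * (C * (74 + (2 * L + 3) ^ 2) * q ^ η)) * C := by gcongr
      _ = _ := by ring
  have hw : ∀ n ≤ N, q ^ N ≤ A * q ^ n := by
    intro n hn
    calc q ^ N ≤ q ^ n := pow_le_pow_of_le_one hq0.le hq1.le hn
      _ ≤ A * q ^ n := le_mul_of_one_le_left (by positivity) hA1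
  have hinv : ∀ η' : ℝ, η ≤ η' → (q⁻¹) ^ (-η') ≤ q ^ η := by
    intro η' h
    rw [Real.inv_rpow hq0.le, Real.rpow_neg hq0.le, inv_inv]
    exact Real.rpow_le_rpow_of_exponent_ge hq0 hq1.le h
  have e3 : pm X Y ν μ (fun x y => ¬ TubeOK X ν N A q y x) ≤ (N + 1) * (C₁ * q ^ η) := by
    refine pm_not_tubeOK hν hμ fun n hn => ?_
    refine (hT₁ i j hij X Y ν μ (A * q ^ n) q⁻¹ hν hμ hsep hXR hYR hXC hYC (by positivity)
      (fun p ρ h => hfX p ρ ((hw n hn).trans h)) (fun p ρ h => hfY p ρ ((hw n hn).trans h))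
      bK₁).trans ?_
    exact mul_le_mul_of_nonneg_left (hinv _ hηη₁) hC₁.le
  have e4 : pm X Y ν μ (fun x y => ¬ TubeOK Y μ N A q x y) ≤ (N + 1) * (C₂ * q ^ η) := by
    rw [pm_swap]
    refine pm_not_tubeOK hμ hν fun n hn => ?_
    refine (hT₂ i j hij Y X μ ν (A * q ^ n) q⁻¹ hμ hν
      (fun y hy x hx => by rw [abs_sub_comm]; exact hsep x hx y hy) hYR hXR hYC hXC (by positivity)
      (fun p ρ h => hfY p ρ ((hw n hn).trans h)) (fun p ρ h => hfX p ρ ((hw n hn).trans h))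
      bK₂).trans ?_
    exact mul_le_mul_of_nonneg_left (hinv _ hηη₂) hC₂.le
  set Gc : (Fin (N + 1) → Fin (2 * N + 20)) × (Fin (N + 1) → Fin (2 * N + 20)) →
      Plane → Plane → Prop := fun f x y => G0 x y ∧ Cls X ν k N t (branching f.1) x ∧
      Cls Y μ k N s (branching f.2) y ∧ TubeOK X ν N A q y x ∧ TubeOK Y μ N A q x y with hGc
  set GG : Plane → Plane → Prop := fun x y => ∃ f, Gc f x y with hGG
  have e5 : pm X Y ν μ GG ≤ (Fintype.card (Fin (N + 1) → Fin (2 * N + 20)) : ℝ) ^ 2 *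
      (3 * C * (N + 1) ^ 2) * q ^ η := by
    refine (pm_le_sum hν hμ GG Finset.univ Gc (fun x _ y _ ⟨f, hf⟩ =>
      ⟨f, Finset.mem_univ _, hf⟩)).trans ?_
    calc _ ≤ ∑ _f : (Fin (N + 1) → Fin (2 * N + 20)) × (Fin (N + 1) → Fin (2 * N + 20)),
          3 * C * (N + 1) ^ 2 * q ^ η := by
          refine Finset.sum_le_sum fun f _ => ?_
          refine (pm_class_le hν hμ hk1 hqk bA (A₁ := A₁) (D := D) (by
            have : 0 ≤ (8 * D + 2) * D := by positivity
            linarith) (by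
            have : 0 ≤ D * A₁ := by positivity
            linarith) le_rfl bN hXC hYC bC ht.le hs hm88 hN hmu hDY I hI).trans ?_
          gcongr
      _ = _ := by
          rw [Finset.sum_const, Finset.card_univ, Fintype.card_prod, nsmul_eq_mul]
          push_cast; ring
  have hup := pm_le_sum (X := X) (Y := Y) hν hμ G0 (Finset.univ : Finset (Fin 5))
    ![fun x _ => x ∈ BX, fun _ y => y ∈ BY, fun x y => ¬ TubeOK X ν N A q y x,
      fun x y => ¬ TubeOK Y μ N A q x y, GG] (by
    intro x _ y _ h0
    by_cases h1 : x ∈ BX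
    · exact ⟨0, Finset.mem_univ _, h1⟩
    by_cases h2 : y ∈ BY
    · exact ⟨1, Finset.mem_univ _, h2⟩
    by_cases h3 : TubeOK X ν N A q y x
    · by_cases h4 : TubeOK Y μ N A q x y
      · obtain ⟨f, hf⟩ := not_not.1 h1
        obtain ⟨f', hf'⟩ := not_not.1 h2
        exact ⟨4, Finset.mem_univ _, ⟨(f, f'), h0, hf, hf', h3, h4⟩⟩
      · exact ⟨3, Finset.mem_univ _, h4⟩
    · exact ⟨2, Finset.mem_univ _, h3⟩)
  rw [Fin.sum_univ_five] at hup
  simp only [Matrix.cons_val] at hup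
  have hfin : q ^ (η / 2) < Kc * q ^ η := by
    refine hlow.trans_le (hup.trans ?_)
    calc _ ≤ (N + 1) ^ 2 * (C * (74 + (2 * L + 3) ^ 2)) * C * q ^ η +
          (N + 1) ^ 2 * (C * (74 + (2 * L + 3) ^ 2)) * C * q ^ η + (N + 1) * (C₁ * q ^ η) +
          (N + 1) * (C₂ * q ^ η) + (Fintype.card (Fin (N + 1) → Fin (2 * N + 20)) : ℝ) ^ 2 *
      (3 * C * (N + 1) ^ 2) * q ^ η := by gcongr
      _ = _ := by rw [hKc]; ring
  have hsplit : q ^ η = q ^ (η / 2) * q ^ (η / 2) := by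
    rw [← Real.rpow_add hq0]; congr 1; ring
  rw [hsplit, ← mul_assoc] at hfin
  have hpos : 0 < q ^ (η / 2) := Real.rpow_pos_of_pos hq0 _
  nlinarith

/-! ### A Frostman-type subset -/

/-- The half-open dyadic square of level `n` with index `c`. -/
def dy (n : ℕ) (c : ℤ × ℤ) : Set Plane := {y | cell n y = c}

lemma measurableSet_dy (n : ℕ) (c : ℤ × ℤ) : MeasurableSet (dy n c) := by
  have h : ∀ i : Fin 2, Measurable fun y : Plane => ⌊y i * 2 ^ n⌋ := fun i =>
    Int.measurable_floor.comp (((EuclideanSpace.proj i).continuous.measurable).mul_const _)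
  exact ((h 0).prodMk (h 1)) (measurableSet_singleton c)

lemma ediam_dy (n : ℕ) (c : ℤ × ℤ) :
    Metric.ediam (dy n c) ≤ ENNReal.ofReal (2 * (1 / 2) ^ n) := by
  apply Metric.ediam_le
  intro x hx y hy
  rw [edist_dist]
  exact ENNReal.ofReal_le_ofReal (cell_dist (hx.trans hy.symm))

/-- A set of finite positive `s`-dimensional measure has a subset of positive measure on which
dyadic squares carry at most `C · side ^ s`: the points lying in too heavy squares of arbitrarily
high level form a set of at most half the measure, by covering with maximal heavy squares. -/
lemma exists_frostman_subset {s : ℝ} (hs : 0 < s) {E : Set Plane} (hpos : 0 < μH[s] E)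
    (hfin : μH[s] E < ⊤) : ∃ (E' : Set Plane) (C : ℝ), E' ⊆ E ∧ 0 < C ∧ 0 < μH[s] E' ∧
      ∀ n c, μH[s] (E' ∩ dy n c) ≤ ENNReal.ofReal (C * ((1 / 2 : ℝ) ^ n) ^ s) := by
  classical
  set M : Measure Plane := μH[s].restrict E with hM
  have hMu : M Set.univ = μH[s] E := by simp [hM]
  set Bad : ℕ × (ℤ × ℤ) → Prop := fun τ =>
    ENNReal.ofReal (2 * (2 * (1 / 2 : ℝ) ^ τ.1) ^ s) < M (dy τ.1 τ.2) with hBad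
  set F : ℕ → Set Plane := fun n => {y | y ∈ E ∧ ∃ m ≥ n, Bad (m, cell m y)} with hF
  set T : ℕ → Set (ℕ × (ℤ × ℤ)) := fun n => {τ | n ≤ τ.1 ∧ Bad τ ∧
    ∃ y, cell τ.1 y = τ.2 ∧ ∀ m, n ≤ m → m < τ.1 → ¬ Bad (m, cell m y)} with hT
  have hdis : ∀ n, Pairwise (Function.onFun Disjoint fun τ : T n => dy τ.1.1 τ.1.2) := by
    intro n
    have key : ∀ τ ∈ T n, ∀ τ' ∈ T n, τ.1 ≤ τ'.1 → ∀ w, cell τ.1 w = τ.2 → cell τ'.1 w = τ'.2 →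
        τ = τ' := by
      rintro ⟨m, c⟩ ⟨h1, h2, -⟩ ⟨m', c'⟩ ⟨-, -, y, hy, hmin⟩ hle w hw hw'
      simp only at *
      rcases hle.eq_or_lt with rfl | hlt
      · rw [← hw, ← hw']
      · exfalso
        refine hmin m h1 hlt ?_
        rw [cell_mono hle (hy.trans hw'.symm), hw]
        exact h2
    rintro ⟨τ, hτ⟩ ⟨τ', hτ'⟩ hne
    refine Set.disjoint_left.2 fun w hw hw' => hne (Subtype.ext ?_)
    rcases le_total τ.1 τ'.1 with h | h
    · exact key τ hτ τ' hτ' h w hw hw'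
    · exact (key τ' hτ' τ hτ h w hw' hw).symm
  have hdiam : ∀ n, ∀ τ : T n, 2 * Metric.ediam (dy τ.1.1 τ.1.2) ^ s ≤ M (dy τ.1.1 τ.1.2) := by
    rintro n ⟨τ, hτ⟩
    refine le_trans ?_ hτ.2.1.le
    rw [ENNReal.ofReal_mul (by norm_num), ← ENNReal.ofReal_rpow_of_nonneg (by positivity) hs.le]
    have := ENNReal.rpow_le_rpow (ediam_dy τ.1 τ.2) hs.le
    simp only [ENNReal.ofReal_ofNat]
    gcongr
  have hsum : ∀ n, ∑' τ : T n, Metric.ediam (dy τ.1.1 τ.1.2) ^ s ≤ μH[s] E / 2 := by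
    intro n
    rw [ENNReal.le_div_iff_mul_le (by simp) (by simp), mul_comm, ← ENNReal.tsum_mul_left, ← hMu]
    exact (ENNReal.tsum_le_tsum (hdiam n)).trans
      ((tsum_meas_le_meas_iUnion_of_disjoint M (fun τ => measurableSet_dy _ _) (hdis n)).trans
        (measure_mono (Set.subset_univ _)))
  have hcov : ∀ n, (⋂ n, F n) ⊆ ⋃ τ : T n, dy τ.1.1 τ.1.2 := by
    intro n y hy
    obtain ⟨hyE, hex⟩ := Set.mem_iInter.1 hy n
    have hsp := Nat.find_spec hex
    refine Set.mem_iUnion.2 ⟨⟨(Nat.find hex, cell (Nat.find hex) y), hsp.1, hsp.2, y, rfl, ?_⟩, rfl⟩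
    intro m hm hlt hb
    exact Nat.find_min hex hlt ⟨hm, hb⟩
  have hlim : Filter.Tendsto (fun n : ℕ => ENNReal.ofReal (2 * (1 / 2 : ℝ) ^ n)) Filter.atTop
      (nhds 0) := by
    rw [← ENNReal.ofReal_zero]
    apply ENNReal.tendsto_ofReal
    have := (tendsto_pow_atTop_nhds_zero_of_lt_one (r := (1 / 2 : ℝ)) (by norm_num)
      (by norm_num)).const_mul 2
    simpa using this
  have hFle : μH[s] (⋂ n, F n) ≤ μH[s] E / 2 := by
    refine (Measure.hausdorffMeasure_le_liminf_tsum (ι := fun n => T n) s (⋂ n, F n)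
      (l := Filter.atTop) _ hlim
      (fun n (τ : T n) => dy τ.1.1 τ.1.2) (Filter.Eventually.of_forall ?_)
      (Filter.Eventually.of_forall hcov)).trans ?_
    · rintro n ⟨τ, hτ⟩
      refine (ediam_dy _ _).trans (ENNReal.ofReal_le_ofReal ?_)
      have := pow_le_pow_of_le_one (by norm_num : (0 : ℝ) ≤ 1 / 2) (by norm_num) hτ.1
      linarith
    · refine (Filter.liminf_le_liminf (Filter.Eventually.of_forall hsum)).trans ?_
      simp
  have hex : ∃ n, 0 < μH[s] (E \ F n) := by
    by_contra hno
    push Not at hno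
    have h0 : μH[s] (⋃ n, E \ F n) = 0 := measure_iUnion_null fun n => le_antisymm (hno n) bot_le
    have h1 : μH[s] E ≤ μH[s] E / 2 := by
      calc μH[s] E ≤ μH[s] ((⋃ n, E \ F n) ∪ ⋂ n, F n) := by
            apply measure_mono
            intro y hy
            by_cases h : ∀ n, y ∈ F n
            · exact Or.inr (Set.mem_iInter.2 h)
            · push Not at h
              obtain ⟨n, hn⟩ := h
              exact Or.inl (Set.mem_iUnion.2 ⟨n, hy, hn⟩)
        _ ≤ _ := (measure_union_le _ _).trans (by rw [h0, zero_add]; exact hFle)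
    exact absurd h1 (not_le.2 (ENNReal.half_lt_self hpos.ne' hfin.ne))
  obtain ⟨n₀, hn₀⟩ := hex
  -- heavy squares of level below `n₀` are absorbed into the constant
  set C : ℝ := 2 * 2 ^ s + (μH[s] E).toReal / ((1 / 2 : ℝ) ^ n₀) ^ s with hC
  have hC0 : 0 < C := by positivity
  refine ⟨E \ F n₀, C, Set.sdiff_subset, hC0, hn₀, fun n c => ?_⟩
  rcases Set.eq_empty_or_nonempty ((E \ F n₀) ∩ dy n c) with h0 | ⟨y, ⟨hyE, hyF⟩, hyc⟩
  · simp [h0]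
  rcases lt_or_ge n n₀ with h | h
  · refine (measure_mono (fun z hz => hz.1.1)).trans (b := μH[s] E) ?_
    rw [← ENNReal.ofReal_toReal hfin.ne]
    apply ENNReal.ofReal_le_ofReal
    have h1 : ((1 / 2 : ℝ) ^ n₀) ^ s ≤ ((1 / 2 : ℝ) ^ n) ^ s :=
      Real.rpow_le_rpow (by positivity)
        (pow_le_pow_of_le_one (by norm_num) (by norm_num) h.le) hs.le
    have h2 : 0 < ((1 / 2 : ℝ) ^ n₀) ^ s := by positivity
    calc (μH[s] E).toReal = (μH[s] E).toReal / ((1 / 2 : ℝ) ^ n₀) ^ s * ((1 / 2 : ℝ) ^ n₀) ^ s := by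
          field_simp
      _ ≤ C * ((1 / 2 : ℝ) ^ n) ^ s := by
          apply mul_le_mul _ h1 h2.le hC0.le
          rw [hC]
          linarith [(by positivity : (0 : ℝ) < 2 ^ s)]
  · have hnb : ¬ Bad (n, cell n y) := fun hb => hyF ⟨hyE, n, h, hb⟩
    rw [hBad] at hnb
    simp only [not_lt] at hnb
    have hyc' : cell n y = c := hyc
    rw [hyc'] at hnb
    calc μH[s] ((E \ F n₀) ∩ dy n c) ≤ μH[s] (dy n c ∩ E) :=
          measure_mono fun z hz => ⟨hz.2, hz.1.1⟩
      _ = M (dy n c) := (Measure.restrict_apply (measurableSet_dy _ _)).symm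
      _ ≤ _ := hnb
      _ ≤ _ := by
          apply ENNReal.ofReal_le_ofReal
          rw [Real.mul_rpow (by norm_num) (by positivity), ← mul_assoc]
          gcongr
          rw [hC]
          linarith [(by positivity : 0 ≤ (μH[s] E).toReal / ((1 / 2 : ℝ) ^ n₀) ^ s)]

/-- A set that can be covered with arbitrarily small `t`-dimensional cost is `H^t`-null. -/
lemma null_of_covers {t : ℝ} (ht : 0 < t) {Z : Set Plane} {ι : Type} [Countable ι]
    (h : ∀ n : ℕ, ∃ U : ι → Set Plane, Z ⊆ ⋃ i, U i ∧
      ∑' i, Metric.ediam (U i) ^ t ≤ ((n : ENNReal) + 1)⁻¹) : μH[t] Z = 0 := by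
  choose U hU hsum using h
  have hlim : Filter.Tendsto (fun n : ℕ => ((n : ENNReal) + 1)⁻¹) Filter.atTop (nhds 0) := by
    have := (Filter.tendsto_add_atTop_iff_nat 1).2 ENNReal.tendsto_inv_nat_nhds_zero
    simpa using this
  have hlim2 : Filter.Tendsto (fun n : ℕ => (((n : ENNReal) + 1)⁻¹) ^ (1 / t)) Filter.atTop
      (nhds 0) := by
    have := ((ENNReal.continuous_rpow_const (y := 1 / t)).tendsto 0).comp hlim
    rwa [ENNReal.zero_rpow_of_pos (by positivity)] at this
  have h1 := Measure.hausdorffMeasure_le_liminf_tsum (ι := fun _ : ℕ => ι) t Z _ hlim2 U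
    (Filter.Eventually.of_forall fun n i => by
      rw [one_div, ENNReal.le_rpow_inv_iff ht]
      exact (ENNReal.le_tsum i).trans (hsum n))
    (Filter.Eventually.of_forall hU)
  refine le_antisymm (h1.trans ((Filter.liminf_le_liminf (Filter.Eventually.of_forall hsum)).trans
    ?_)) bot_le
  rw [hlim.liminf_eq]

/-! ### Discretisation -/

lemma finite_cells {Z : Set Plane} {R : ℝ} (hR : ∀ x ∈ Z, ∀ l, |x l| ≤ R) (n : ℕ) :
    (cell n '' Z).Finite := by
  apply ((Set.finite_Icc ⌊-R * 2 ^ n⌋ ⌊R * 2 ^ n⌋).prod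
    (Set.finite_Icc ⌊-R * 2 ^ n⌋ ⌊R * 2 ^ n⌋)).subset
  rintro _ ⟨x, hx, rfl⟩
  have h : ∀ l, ⌊x l * 2 ^ n⌋ ∈ Set.Icc ⌊-R * 2 ^ n⌋ ⌊R * 2 ^ n⌋ := fun l =>
    ⟨Int.floor_mono (by gcongr; exact (abs_le.1 (hR x hx l)).1),
      Int.floor_mono (by gcongr; exact (abs_le.1 (hR x hx l)).2)⟩
  exact ⟨h 0, h 1⟩

/-- Mass bounds on dyadic squares give mass bounds on balls. -/
lemma ball_of_cells {X : Finset Plane} {ν : Plane → ℝ} (hν : ∀ x, 0 ≤ ν x) {C t : ℝ} (ht : 0 < t)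
    (hC : 0 ≤ C) {m : ℕ}
    (hu : wt X ν Set.univ ≤ 49 * C) (h : ∀ n ≤ m, ∀ c, wt X ν (dy n c) ≤ C * ((1 / 2 : ℝ) ^ n) ^ t)
    (p : Plane) {ρ : ℝ} (hρ : (1 / 2 : ℝ) ^ m ≤ ρ) :
    wt X ν (Metric.closedBall p ρ) ≤ 49 * C * ρ ^ t := by
  classical
  have hρ0 : 0 < ρ := lt_of_lt_of_le (by positivity) hρ
  rcases le_or_gt 1 ρ with h1 | h1
  · refine (wt_le_univ hν _).trans (hu.trans ?_)
    exact le_mul_of_one_le_right (by positivity) (Real.one_le_rpow h1 ht.le)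
  obtain ⟨n, hn1, hn2⟩ := exists_nat_pow_near_of_lt_one hρ0 h1.le
    (by norm_num : (0 : ℝ) < 1 / 2) (by norm_num)
  -- the ball is covered by squares of level `min (n + 1) m`, whose side is comparable to `ρ`
  set n' := min (n + 1) m with hn'
  have hside : (1 / 2 : ℝ) ^ n' ≤ ρ := by
    rcases min_choice (n + 1) m with h | h
    · rw [hn', h]; exact hn1.le
    · rw [hn', h]; exact hρ
  have hρ2 : ρ ≤ (2 : ℕ) * (1 / 2 : ℝ) ^ n' := by
    have : (1 / 2 : ℝ) ^ (n + 1) ≤ (1 / 2 : ℝ) ^ n' :=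
      pow_le_pow_of_le_one (by norm_num) (by norm_num) (min_le_left _ _)
    rw [pow_succ] at this
    push_cast
    linarith
  set A := X.filter fun x => x ∈ Metric.closedBall p ρ with hA
  have hcard := card_cells A p n' 2 (fun x hx l => by
    have : x ∈ Metric.closedBall p ρ := (Finset.mem_filter.1 hx).2
    exact ((abs_coord_le_dist x p l).trans (Metric.mem_closedBall.1 this)).trans hρ2)
  have hcov := wt_le_sum (X := X) hν (Metric.closedBall p ρ) (A.image (cell n')) (dy n')
    (fun x hx hxb => ⟨cell n' x, Finset.mem_image_of_mem _ (Finset.mem_filter.2 ⟨hx, hxb⟩), rfl⟩)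
  calc wt X ν (Metric.closedBall p ρ) ≤ ∑ c ∈ A.image (cell n'), wt X ν (dy n' c) := hcov
    _ ≤ ∑ _c ∈ A.image (cell n'), C * ρ ^ t := Finset.sum_le_sum fun c _ =>
        (h n' (min_le_right _ _) c).trans (by gcongr)
    _ = ((A.image (cell n')).card : ℝ) * (C * ρ ^ t) := by simp
    _ ≤ ((2 * 2 + 3) ^ 2 : ℕ) * (C * ρ ^ t) := by gcongr
    _ = 49 * C * ρ ^ t := by push_cast; ring

/-- A finite Frostman lemma. A maximal subset `X` of `Z` whose counting measure is
`t`-dimensional at scales between `2⁻ᵐ` and `1` is large: the squares in which the constraint is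
saturated cover `Z` with total cost controlled by the cardinality of `X`. -/
lemma finite_frostman {t R : ℝ} (ht : 0 < t) {Z : Set Plane} (hR : ∀ x ∈ Z, ∀ l, |x l| ≤ R)
    (m : ℕ) : ∃ (X : Finset Plane) (T : Finset (ℕ × (ℤ × ℤ))), ↑X ⊆ Z ∧
      (∀ n ≤ m, ∀ c, ((X.filter fun x => cell n x = c).card : ℝ) ≤ ((2 : ℝ) ^ (m - n)) ^ t) ∧
      (∀ z ∈ Z, ∃ τ ∈ T, z ∈ dy τ.1 τ.2) ∧
      ∑ τ ∈ T, ((1 / 2 : ℝ) ^ τ.1) ^ t ≤ 2 * (((1 / 2 : ℝ) ^ m) ^ t * X.card) := by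
  classical
  set Adm : Finset Plane → Prop := fun X => ↑X ⊆ Z ∧
    ∀ n ≤ m, ∀ c, ((X.filter fun x => cell n x = c).card : ℝ) ≤ ((2 : ℝ) ^ (m - n)) ^ t with hAdm
  have hpow1 : ∀ n, 1 ≤ ((2 : ℝ) ^ (m - n)) ^ t := fun n =>
    Real.one_le_rpow (one_le_pow₀ (by norm_num)) ht.le
  have hbdd : ∀ X, Adm X → X.card ≤ (finite_cells hR m).toFinset.card := by
    intro X hX
    refine Finset.card_le_card_of_injOn (cell m) (fun x hx => ?_) (fun x hx y hy hxy => ?_)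
    · simp only [Set.Finite.coe_toFinset]
      exact ⟨x, hX.1 hx, rfl⟩
    · have h := hX.2 m le_rfl (cell m y)
      simp only [Nat.sub_self, pow_zero, Real.one_rpow] at h
      have h' : (X.filter fun x => cell m x = cell m y).card ≤ 1 := by exact_mod_cast h
      exact Finset.card_le_one.1 h' x (Finset.mem_filter.2 ⟨hx, hxy⟩) y
        (Finset.mem_filter.2 ⟨hy, rfl⟩)
  -- an admissible set of maximal cardinality
  obtain ⟨X, hX, hmax⟩ : ∃ X, Adm X ∧ ∀ X', Adm X' → X'.card ≤ X.card := by
    have hne : ∃ d X, Adm X ∧ X.card = d :=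
      ⟨0, ∅, ⟨by simp, fun n _ c => by simpa using (zero_le_one.trans (hpow1 n))⟩, rfl⟩
    have hb : ∀ d, (∃ X, Adm X ∧ X.card = d) → d ≤ (finite_cells hR m).toFinset.card := by
      rintro d ⟨X, hX, rfl⟩
      exact hbdd X hX
    obtain ⟨X, hX, hXc⟩ := Nat.findGreatest_spec (P := fun d => ∃ X, Adm X ∧ X.card = d)
      (hb _ hne.choose_spec) hne.choose_spec
    exact ⟨X, hX, fun X' hX' => by
      rw [hXc]
      exact Nat.le_findGreatest (hbdd X' hX') ⟨X', hX', rfl⟩⟩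
  set Sat : Plane → ℕ → Prop := fun z n => n ≤ m ∧
    ((2 : ℝ) ^ (m - n)) ^ t < ((X.filter fun x => cell n x = cell n z).card : ℝ) + 1 with hSat
  have hsat : ∀ z ∈ Z, ∃ n, Sat z n := by
    intro z hz
    by_cases hzX : z ∈ X
    · refine ⟨m, le_rfl, ?_⟩
      have : 0 < (X.filter fun x => cell m x = cell m z).card :=
        Finset.card_pos.2 ⟨z, Finset.mem_filter.2 ⟨hzX, rfl⟩⟩
      have : (0 : ℝ) < (X.filter fun x => cell m x = cell m z).card := by exact_mod_cast this
      simpa using this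
    · by_contra hno
      push Not at hno
      have hadm : Adm (insert z X) := by
        refine ⟨?_, fun n hn c => ?_⟩
        · rw [Finset.coe_insert]
          exact Set.insert_subset hz hX.1
        · rw [Finset.filter_insert]
          split_ifs with hc
          · have h := hno n
            simp only [hSat, not_and, not_lt] at h
            have h' := h hn
            rw [hc] at h'
            refine le_trans ?_ h'
            exact_mod_cast Finset.card_insert_le _ _
          · exact hX.2 n hn c
      have := hmax _ hadm
      rw [Finset.card_insert_of_notMem hzX] at this
      lia
  have hcongr : ∀ z z' n, cell n z = cell n z' → Sat z n → Sat z' n := by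
    intro z z' n h hz
    simpa only [hSat, h] using hz
  have hlev : ∀ z, ∃ n, z ∈ Z → Sat z n ∧ ∀ l < n, ¬ Sat z l := by
    intro z
    by_cases hz : z ∈ Z
    · exact ⟨Nat.find (hsat z hz), fun _ => ⟨Nat.find_spec (hsat z hz), fun l hl =>
        Nat.find_min (hsat z hz) hl⟩⟩
    · exact ⟨0, fun h => absurd h hz⟩
  choose lev hlev using hlev
  have hle : ∀ z ∈ Z, ∀ w ∈ Z, cell (lev z) z = cell (lev z) w → lev w = lev z := by
    intro z hz w hw h
    have h1 : lev w ≤ lev z := by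
      by_contra hlt
      exact (hlev w hw).2 _ (not_le.1 hlt) (hcongr _ _ _ h (hlev z hz).1)
    have h2 : lev z ≤ lev w := by
      by_contra hlt
      exact (hlev z hz).2 _ (not_le.1 hlt)
        (hcongr _ _ _ (cell_mono h1 h).symm (hlev w hw).1)
    exact le_antisymm h1 h2
  have hcard1 : ∀ z ∈ Z, 0 < (X.filter fun x => cell (lev z) x = cell (lev z) z).card := by
    intro z hz
    have h := (hlev z hz).1.2
    have := hpow1 (lev z)
    have h3 : (0 : ℝ) < (X.filter fun x => cell (lev z) x = cell (lev z) z).card := by linarith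
    exact_mod_cast h3
  set key : Plane → ℕ × (ℤ × ℤ) := fun z => (lev z, cell (lev z) z) with hkey
  have hkeq : ∀ z ∈ Z, ∀ w ∈ Z, cell (lev z) w = cell (lev z) z → key w = key z := by
    intro z hz w hw h
    have := hle z hz w hw h.symm
    simp only [hkey, this, h]
  refine ⟨X, X.image key, hX.1, hX.2, ?_, ?_⟩
  · intro z hz
    obtain ⟨w, hw⟩ := Finset.card_pos.1 (hcard1 z hz)
    obtain ⟨hwX, hwz⟩ := Finset.mem_filter.1 hw
    refine ⟨key z, ?_, rfl⟩
    rw [← hkeq z hz w (hX.1 hwX) hwz]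
    exact Finset.mem_image_of_mem _ hwX
  · rw [Finset.card_eq_sum_card_image key X]
    push_cast
    rw [Finset.mul_sum, Finset.mul_sum]
    refine Finset.sum_le_sum fun τ hτ => ?_
    obtain ⟨z, hzX, rfl⟩ := Finset.mem_image.1 hτ
    have hz := hX.1 hzX
    have hsub : (X.filter fun x => cell (lev z) x = cell (lev z) z).card ≤
        (X.filter fun x => key x = key z).card := by
      apply Finset.card_le_card
      intro w hw
      obtain ⟨hwX, hwz⟩ := Finset.mem_filter.1 hw
      exact Finset.mem_filter.2 ⟨hwX, hkeq z hz w (hX.1 hwX) hwz⟩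
    have h1 : (1 : ℝ) ≤ (X.filter fun x => cell (lev z) x = cell (lev z) z).card := by
      exact_mod_cast hcard1 z hz
    have h2 : ((X.filter fun x => cell (lev z) x = cell (lev z) z).card : ℝ) ≤
        (X.filter fun x => key x = key z).card := by exact_mod_cast hsub
    obtain ⟨hn, hS⟩ := (hlev z hz).1
    have h3 : ((2 : ℝ) ^ (m - lev z)) ^ t ≤ 2 * (X.filter fun x => key x = key z).card := by
      linarith
    have h4 : ((1 / 2 : ℝ) ^ lev z) ^ t = ((1 / 2 : ℝ) ^ m) ^ t * ((2 : ℝ) ^ (m - lev z)) ^ t := by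
      rw [← Real.mul_rpow (by positivity) (by positivity)]
      congr 1
      obtain ⟨d, hd⟩ := Nat.exists_eq_add_of_le hn
      rw [hd, Nat.add_sub_cancel_left, pow_add, mul_assoc, ← mul_pow]
      norm_num
    have h5 : (0 : ℝ) ≤ ((1 / 2 : ℝ) ^ m) ^ t := by positivity
    calc ((1 / 2 : ℝ) ^ (key z).1) ^ t = ((1 / 2 : ℝ) ^ m) ^ t * ((2 : ℝ) ^ (m - lev z)) ^ t := h4
      _ ≤ ((1 / 2 : ℝ) ^ m) ^ t * (2 * (X.filter fun x => key x = key z).card) := by gcongr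
      _ = _ := by ring

/-- Concentrating a measure at one point of each dyadic square of level `m`. -/
lemma discretise {M : Measure Plane} [IsFiniteMeasure M] {F : Set Plane} {R : ℝ}
    (hR : ∀ x ∈ F, ∀ l, |x l| ≤ R) (m : ℕ) :
    ∃ (Y : Finset Plane) (μ : Plane → ℝ), ↑Y ⊆ F ∧ (∀ y, 0 ≤ μ y) ∧
      wt Y μ Set.univ ≤ (M Set.univ).toReal ∧
      (∀ n ≤ m, ∀ c, wt Y μ (dy n c) ≤ (M (dy n c)).toReal) ∧
      ∀ A A' : Set Plane, (∀ z ∈ F, z ∈ A → ∀ y, dist z y ≤ 2 * (1 / 2) ^ m → y ∈ A') →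
        (M (F ∩ A)).toReal ≤ wt Y μ A' := by
  classical
  have hrep : ∀ c, ∃ y, c ∈ cell m '' F → y ∈ F ∧ cell m y = c := by
    intro c
    by_cases hc : c ∈ cell m '' F
    · obtain ⟨y, hy, hyc⟩ := hc
      exact ⟨y, fun _ => ⟨hy, hyc⟩⟩
    · exact ⟨0, fun h => absurd h hc⟩
  choose rep hrep using hrep
  set S := (finite_cells hR m).toFinset with hS
  have hmem : ∀ c, c ∈ S ↔ c ∈ cell m '' F := fun c => by simp [hS]
  have hinj : Set.InjOn rep S := by
    intro c hc c' hc' h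
    rw [← (hrep c ((hmem c).1 hc)).2, h, (hrep c' ((hmem c').1 hc')).2]
  set μ : Plane → ℝ := fun y => (M (dy m (cell m y))).toReal with hμ
  have hwt : ∀ A, wt (S.image rep) μ A = ∑ c ∈ S.filter (fun c => rep c ∈ A), (M (dy m c)).toReal := by
    intro A
    unfold wt
    rw [Finset.sum_image hinj, Finset.sum_filter]
    refine Finset.sum_congr rfl fun c hc => ?_
    rw [Set.indicator_apply]
    simp only [hμ, (hrep c ((hmem c).1 hc)).2]
  have hle : ∀ (S' : Finset (ℤ × ℤ)) (A : Set Plane), (∀ c ∈ S', dy m c ⊆ A) →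
      ∑ c ∈ S', (M (dy m c)).toReal ≤ (M A).toReal := by
    intro S' A hA
    rw [← ENNReal.toReal_sum (fun c _ => measure_ne_top _ _), ← measure_biUnion_finset]
    · exact ENNReal.toReal_mono (measure_ne_top _ _) (measure_mono (Set.iUnion₂_subset hA))
    · intro c _ c' _ hne
      exact Set.disjoint_left.2 fun w hw hw' => hne (hw.symm.trans hw')
    · exact fun c _ => measurableSet_dy _ _
  refine ⟨S.image rep, μ, ?_, fun y => ENNReal.toReal_nonneg, ?_, ?_, ?_⟩
  · intro y hy
    obtain ⟨c, hc, rfl⟩ := Finset.mem_image.1 (Finset.mem_coe.1 hy)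
    exact (hrep c ((hmem c).1 hc)).1
  · rw [hwt]
    exact hle _ _ fun _ _ => Set.subset_univ _
  · intro n hn c
    rw [hwt]
    refine hle _ _ fun c' hc' w hw => ?_
    obtain ⟨hc'S, hc'c⟩ := Finset.mem_filter.1 hc'
    have : cell m (rep c') = c' := (hrep c' ((hmem c').1 hc'S)).2
    exact (cell_mono hn (hw.trans this.symm)).trans hc'c
  · intro A A' hAA'
    rw [hwt, ← ENNReal.toReal_sum (fun c _ => measure_ne_top _ _)]
    refine ENNReal.toReal_mono (ENNReal.sum_ne_top.2 fun c _ => measure_ne_top _ _) ?_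
    refine (measure_mono (t := ⋃ c ∈ S.filter (fun c => rep c ∈ A'), dy m c) ?_).trans
      (measure_biUnion_finset_le _ _)
    rintro z ⟨hzF, hzA⟩
    have hzS : cell m z ∈ cell m '' F := ⟨z, hzF, rfl⟩
    refine Set.mem_iUnion₂.2 ⟨cell m z, Finset.mem_filter.2 ⟨(hmem _).2 hzS, ?_⟩, rfl⟩
    exact hAA' z hzF hzA _ (cell_dist (hrep _ hzS).2.symm)

/-! ### Coverings of distance sets -/

/-- An `H^u`-null set of reals is covered by intervals of positive width with small `u`-cost. -/
lemma cover_of_null {F : Set ℝ} {u ε : ℝ} (hu : 0 < u) (h : μH[u] F = 0) (hε : 0 < ε) :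
    ∃ a w : ℕ → ℝ, (∀ j, 0 < w j) ∧ Summable (fun j => w j ^ u) ∧ ∑' j, w j ^ u ≤ ε ∧
      ∀ z ∈ F, ∃ j, |z - a j| ≤ w j := by
  have h1 := h
  rw [Measure.hausdorffMeasure_apply] at h1
  have h2 : (⨅ (t : ℕ → Set ℝ) (_ : F ⊆ ⋃ n, t n) (_ : ∀ n, Metric.ediam (t n) ≤ 1),
      ∑' n, ⨆ _ : (t n).Nonempty, Metric.ediam (t n) ^ u) < ENNReal.ofReal (ε / 2) := by
    refine lt_of_le_of_lt ?_ (ENNReal.ofReal_pos.2 (half_pos hε))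
    rw [← h1]
    exact le_iSup₂ (f := fun (r : ENNReal) (_ : 0 < r) =>
      ⨅ (t : ℕ → Set ℝ) (_ : F ⊆ ⋃ n, t n) (_ : ∀ n, Metric.ediam (t n) ≤ r),
        ∑' n, ⨆ _ : (t n).Nonempty, Metric.ediam (t n) ^ u) 1 one_pos
  simp only [iInf_lt_iff] at h2
  obtain ⟨U, hcov, hdiam, hsum⟩ := h2
  set f : ℕ → ENNReal := fun n => ⨆ _ : (U n).Nonempty, Metric.ediam (U n) ^ u with hf
  have hfin : ∀ n, f n ≠ ⊤ := fun n =>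
    ((ENNReal.le_tsum n).trans_lt (hsum.trans ENNReal.ofReal_lt_top)).ne
  have hfsum : Summable fun n => (f n).toReal :=
    ENNReal.summable_toReal (hsum.trans ENNReal.ofReal_lt_top).ne
  have hft : ∑' n, (f n).toReal ≤ ε / 2 := by
    rw [← ENNReal.tsum_toReal_eq hfin]
    exact ENNReal.toReal_le_of_le_ofReal (by positivity) hsum.le
  set e : ℕ → ℝ := fun n => (f n).toReal + ε / 2 / 2 / 2 ^ n with he
  have he0 : ∀ n, 0 < e n := fun n => by positivity
  have hesum : HasSum e (∑' n, (f n).toReal + ε / 2) :=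
    hfsum.hasSum.add (hasSum_geometric_two' (ε / 2))
  have hpow : ∀ n, (e n ^ (1 / u)) ^ u = e n := fun n => by
    rw [← Real.rpow_mul (he0 n).le, one_div, inv_mul_cancel₀ hu.ne', Real.rpow_one]
  have ha : ∀ n, ∃ a, (U n).Nonempty → a ∈ U n := fun n => by
    by_cases hn : (U n).Nonempty
    · exact ⟨hn.choose, fun _ => hn.choose_spec⟩
    · exact ⟨0, fun h => absurd h hn⟩
  choose a ha using ha
  refine ⟨a, fun n => e n ^ (1 / u), fun n => Real.rpow_pos_of_pos (he0 n) _, ?_, ?_, ?_⟩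
  · simp only [hpow]
    exact hesum.summable
  · simp only [hpow]
    rw [hesum.tsum_eq]
    linarith
  · intro z hz
    obtain ⟨n, hn⟩ := Set.mem_iUnion.1 (hcov hz)
    have hne : (U n).Nonempty := ⟨z, hn⟩
    refine ⟨n, ?_⟩
    have h3 : f n = Metric.ediam (U n) ^ u := by simp [hf, hne]
    have h4 : ENNReal.ofReal |z - a n| ^ u ≤ f n := by
      rw [h3, ← Real.dist_eq, ← edist_dist]
      exact ENNReal.rpow_le_rpow (Metric.edist_le_ediam_of_mem hn (ha n hne)) hu.le
    rw [ENNReal.ofReal_rpow_of_nonneg (abs_nonneg _) hu.le] at h4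
    have h5 : |z - a n| ^ u ≤ e n := by
      have := (ENNReal.ofReal_le_iff_le_toReal (hfin n)).1 h4
      have h6 : 0 < ε / 2 / 2 / 2 ^ n := by positivity
      rw [he]
      linarith
    rw [one_div]
    exact (Real.le_rpow_inv_iff_of_pos (abs_nonneg _) (he0 n).le hu).2 h5

/-- If the distance set of `F` from `x` is `H^u`-null, then for arbitrarily large `k` a
non-negligible part of `F` lies in at most `2^{kNu}` annuli about `x` of width `2^{-kN}`. This is
a pigeonhole over the scales of an efficient covering of the distance set. -/
lemma exists_level {M : Measure Plane} [IsFiniteMeasure M] {F : Set Plane} (hF : 0 < M F)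
    {x : Plane} {u c : ℝ} (hu : 0 < u) (hc : 0 < c) {N : ℕ} (hN : 1 ≤ N)
    (h : μH[u] ((fun y => dist x y) '' F) = 0) (K : ℕ) :
    ∃ k ≥ K, ∃ I : Finset ℝ, (I.card : ℝ) ≤ ((1 / 2 : ℝ) ^ k) ^ (-(N * u)) ∧
      ((1 / 2 : ℝ) ^ k) ^ c ≤
        (M (F ∩ {y | ∃ a ∈ I, |dist x y - a| ≤ ((1 / 2 : ℝ) ^ k) ^ N})).toReal := by
  classical
  have hF' : 0 < (M F).toReal := ENNReal.toReal_pos hF.ne' (measure_ne_top _ _)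
  set θ : ℝ := (1 / 2 : ℝ) ^ c with hθ
  have hθ0 : 0 < θ := by positivity
  have hθ1 : θ < 1 := Real.rpow_lt_one (by norm_num) (by norm_num) hc
  have hθk : ∀ k : ℕ, ((1 / 2 : ℝ) ^ k) ^ c = θ ^ k := fun k => by
    rw [hθ, ← Real.rpow_natCast, ← Real.rpow_natCast, ← Real.rpow_mul (by norm_num),
      ← Real.rpow_mul (by norm_num), mul_comm]
  obtain ⟨K', hK'⟩ : ∃ K' ≥ K, θ ^ K' / (1 - θ) < (M F).toReal := by
    have := (tendsto_pow_atTop_nhds_zero_of_lt_one hθ0.le hθ1).div_const (1 - θ)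
    rw [zero_div] at this
    obtain ⟨K₁, hK₁⟩ := Filter.eventually_atTop.1 (this.eventually_lt_const hF')
    exact ⟨max K K₁, le_max_left _ _, hK₁ _ (le_max_right _ _)⟩
  obtain ⟨hKK', hK'⟩ := hK'
  set y₀ : ℝ := (1 / 2 : ℝ) ^ N with hy₀
  have hy0 : 0 < y₀ := by positivity
  have hy1 : y₀ < 1 := pow_lt_one₀ (by norm_num) (by norm_num) (by lia)
  set ε : ℝ := (y₀ ^ (K' + 1)) ^ u with hε
  have hε0 : 0 < ε := by positivity
  obtain ⟨a, w, hw0, hws, hwε, hcov⟩ := cover_of_null hu h hε0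
  have hwle : ∀ j, w j ≤ y₀ ^ (K' + 1) := fun j => by
    have h1 : w j ^ u ≤ ε := (hws.le_tsum j fun i _ => by have := hw0 i; positivity).trans hwε
    exact (Real.rpow_le_rpow_iff (hw0 j).le (by positivity) hu).1 h1
  have hlev : ∀ j, ∃ k : ℕ, y₀ ^ (k + 1) < w j ∧ w j ≤ y₀ ^ k := fun j =>
    exists_nat_pow_near_of_lt_one (hw0 j) ((hwle j).trans (pow_le_one₀ hy0.le hy1.le)) hy0 hy1
  choose lev hlev1 hlev2 using hlev
  have hlevK : ∀ j, K' ≤ lev j := fun j => by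
    by_contra hlt
    have h1 := (hlev1 j).trans_le (hwle j)
    have h2 : y₀ ^ (K' + 1) ≤ y₀ ^ (lev j + 1) := pow_le_pow_of_le_one hy0.le hy1.le (by lia)
    linarith
  have hy0k : ∀ k : ℕ, ((1 / 2 : ℝ) ^ k) ^ N = y₀ ^ k := fun k => by
    rw [hy₀, ← pow_mul, ← pow_mul, mul_comm]
  -- few covering intervals have a given scale
  have hcard : ∀ k (S : Finset ℕ), (∀ j ∈ S, lev j = k) →
      (S.card : ℝ) ≤ ((1 / 2 : ℝ) ^ k) ^ (-(N * u)) := by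
    intro k S hS
    rcases S.eq_empty_or_nonempty with rfl | ⟨j₀, hj₀⟩
    · simp only [Finset.card_empty, Nat.cast_zero]; positivity
    have h1 : (S.card : ℝ) * (y₀ ^ (k + 1)) ^ u ≤ ε := by
      calc (S.card : ℝ) * (y₀ ^ (k + 1)) ^ u = ∑ _j ∈ S, (y₀ ^ (k + 1)) ^ u := by simp
        _ ≤ ∑ j ∈ S, w j ^ u := Finset.sum_le_sum fun j hj => by
            have := hlev1 j
            rw [hS j hj] at this
            exact Real.rpow_le_rpow (by positivity) this.le hu.le
        _ ≤ ∑' j, w j ^ u := hws.sum_le_tsum _ fun i _ => by have := hw0 i; positivity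
        _ ≤ ε := hwε
    have h2 : (y₀ ^ (k + 1)) ^ u = (y₀ ^ k) ^ u * y₀ ^ u := by
      rw [pow_succ, Real.mul_rpow (by positivity) hy0.le]
    have h3 : ε ≤ y₀ ^ u := by
      rw [hε]
      refine Real.rpow_le_rpow (by positivity) ?_ hu.le
      exact pow_le_of_le_one hy0.le hy1.le (by lia)
    have h4 : (S.card : ℝ) * (y₀ ^ k) ^ u ≤ 1 := by
      rw [h2, ← mul_assoc] at h1
      have h5 : 0 < y₀ ^ u := by positivity
      exact le_of_mul_le_mul_right (by linarith) h5
    rw [Real.rpow_neg (by positivity), Real.rpow_mul (by positivity), Real.rpow_natCast, hy0k,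
      ← one_div, le_div_iff₀ (by positivity)]
    exact h4
  have hfin : ∀ k, {j | lev j = k}.Finite := by
    intro k
    by_contra hinf
    obtain ⟨n, hn⟩ := exists_nat_gt (((1 / 2 : ℝ) ^ k) ^ (-(N * u)))
    obtain ⟨S, hS, hSn⟩ := Set.Infinite.exists_subset_card_eq hinf n
    have := hcard k S fun j hj => hS hj
    rw [hSn] at this
    linarith
  by_contra hno
  push Not at hno
  set A : ℕ → Set Plane := fun k =>
    F ∩ {y | ∃ b ∈ (hfin k).toFinset.image a, |dist x y - b| ≤ ((1 / 2 : ℝ) ^ k) ^ N} with hA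
  have hAle : ∀ k ≥ K', M (A k) ≤ ENNReal.ofReal (θ ^ k) := by
    intro k hk
    have h1 := hno k (hKK'.trans hk) ((hfin k).toFinset.image a) (le_trans (by
      exact_mod_cast Finset.card_image_le) (hcard k (hfin k).toFinset fun j hj => by simpa using hj))
    rw [hθk] at h1
    exact (ENNReal.le_ofReal_iff_toReal_le (measure_ne_top _ _) (by positivity)).2 h1.le
  have hsub : F ⊆ ⋃ i : ℕ, A (K' + i) := by
    intro y hy
    obtain ⟨j, hj⟩ := hcov _ ⟨y, hy, rfl⟩
    refine Set.mem_iUnion.2 ⟨lev j - K', ?_⟩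
    rw [Nat.add_sub_cancel' (hlevK j)]
    refine ⟨hy, a j, Finset.mem_image_of_mem _ (by simp), ?_⟩
    rw [hy0k]
    exact hj.trans (hlev2 j)
  have hgeo : HasSum (fun i : ℕ => θ ^ (K' + i)) (θ ^ K' / (1 - θ)) := by
    simp only [pow_add, div_eq_mul_inv]
    exact (hasSum_geometric_of_lt_one hθ0.le hθ1).mul_left _
  have h1 : M F ≤ ENNReal.ofReal (θ ^ K' / (1 - θ)) := by
    rw [← hgeo.tsum_eq, ENNReal.ofReal_tsum_of_nonneg (fun i => by positivity) hgeo.summable]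
    exact (measure_mono hsub).trans ((measure_iUnion_le _).trans
      (ENNReal.tsum_le_tsum fun i => hAle _ (by lia)))
  have h2 := (ENNReal.le_ofReal_iff_toReal_le (measure_ne_top _ _)
    (div_nonneg (by positivity) (by linarith))).1 h1
  linarith

/-! ### The exceptional set -/

/-- The exceptional set is null when the pins stay away, in one coordinate, from a Frostman
set `F`. -/
lemma piece_null {s t c₀ R C u : ℝ} (hs : 1 < s) (ht : 1 < t) (hc₀ : 0 < c₀) (hR : 0 < R)
    (hC : 0 < C) (hu0 : 0 < u) (hu : u < s / 4 + 1 / 2) {i j : Fin 2} (hij : i ≠ j)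
    {F Z : Set Plane} (hFpos : 0 < μH[s] F) (hFfin : μH[s] F ≠ ⊤)
    (hFC : ∀ n c, μH[s] (F ∩ dy n c) ≤ ENNReal.ofReal (C * ((1 / 2 : ℝ) ^ n) ^ s))
    (hFR : ∀ y ∈ F, ∀ l, |y l| ≤ R) (hZR : ∀ x ∈ Z, ∀ l, |x l| ≤ R)
    (hsep : ∀ x ∈ Z, ∀ y ∈ F, c₀ ≤ |x i - y i|)
    (hnull : ∀ x ∈ Z, μH[u] ((fun y => dist x y) '' F) = 0) : μH[t] Z = 0 := by
  classical
  have hs0 : 0 < s := by linarith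
  have ht0 : 0 < t := by linarith
  set M : Measure Plane := μH[s].restrict F with hM
  have hMu : M Set.univ = μH[s] F := by simp [hM]
  have : IsFiniteMeasure M := ⟨by rw [hMu]; exact hFfin.lt_top⟩
  have hMF : 0 < M F := by rw [hM, Measure.restrict_eq_self _ subset_rfl]; exact hFpos
  set L : ℕ := ⌈R⌉₊ with hL
  set D : ℝ := C + (μH[s] F).toReal + (2 * L + 3) ^ 2 with hD
  have hm1 : 0 ≤ (μH[s] F).toReal := ENNReal.toReal_nonneg
  have hL1 : (1 : ℝ) ≤ (2 * L + 3) ^ 2 := by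
    have : (0 : ℝ) ≤ L := Nat.cast_nonneg _
    nlinarith
  have hD0 : 0 < D := by positivity
  have hCD : C ≤ D := by linarith
  have hLD : ((2 * L + 3) ^ 2 : ℝ) ≤ D := by linarith
  have h1D : (1 : ℝ) ≤ D := by linarith
  obtain ⟨N, k₀, c, hN, hc, hmain⟩ := finite_main hs ht hc₀ hR (by positivity : 0 < 49 * D) hu
  set θ : ℝ := (1 / 2 : ℝ) ^ c with hθ
  have hθ0 : 0 < θ := by positivity
  have hθ1 : θ < 1 := Real.rpow_lt_one (by norm_num) (by norm_num) hc
  have hθk : ∀ k : ℕ, ((1 / 2 : ℝ) ^ k) ^ c = θ ^ k := fun k => by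
    rw [hθ, ← Real.rpow_natCast, ← Real.rpow_natCast, ← Real.rpow_mul (by norm_num),
      ← Real.rpow_mul (by norm_num), mul_comm]
  -- the pins for which the level `k` is good
  set Zk : ℕ → Set Plane := fun k => {x | x ∈ Z ∧ ∃ I : Finset ℝ,
    (I.card : ℝ) ≤ ((1 / 2 : ℝ) ^ k) ^ (-(N * u)) ∧ ((1 / 2 : ℝ) ^ k) ^ c ≤
      (M (F ∩ {y | ∃ a ∈ I, |dist x y - a| ≤ ((1 / 2 : ℝ) ^ k) ^ N})).toReal} with hZk
  have hlevel : ∀ k, ∃ T : Finset (ℕ × (ℤ × ℤ)), k₀ ≤ k →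
      (∀ z ∈ Zk k, ∃ τ ∈ T, z ∈ dy τ.1 τ.2) ∧ ∑ τ ∈ T, ((1 / 2 : ℝ) ^ τ.1) ^ t ≤ 2 * θ ^ k := by
    intro k
    by_cases hk : k₀ ≤ k
    swap
    · exact ⟨∅, fun h => absurd h hk⟩
    set m : ℕ := k * N with hm
    have hqN : ((1 / 2 : ℝ) ^ k) ^ N = (1 / 2 : ℝ) ^ m := by rw [← pow_mul]
    obtain ⟨X, T, hXZ, hXcard, hcov, hsum⟩ := finite_frostman ht0
      (fun x (hx : x ∈ Zk k) => hZR x hx.1) m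
    obtain ⟨Y, μ, hYF, hμ0, hYu, hYc, hYA⟩ := discretise (M := M) hFR m
    refine ⟨T, fun _ => ⟨hcov, hsum.trans ?_⟩⟩
    set ν : Plane → ℝ := fun _ => ((1 / 2 : ℝ) ^ m) ^ t with hν
    have hν0 : ∀ x, 0 ≤ ν x := fun _ => by positivity
    have hXwt : ∀ A : Set Plane, wt X ν A =
        ((1 / 2 : ℝ) ^ m) ^ t * (X.filter fun x => x ∈ A).card := by
      intro A
      unfold wt
      simp only [hν, Set.indicator_apply]
      rw [← Finset.sum_filter, Finset.sum_const, nsmul_eq_mul, mul_comm]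
    have hXc : ∀ n ≤ m, ∀ c, wt X ν (dy n c) ≤ 1 * ((1 / 2 : ℝ) ^ n) ^ t := by
      intro n hn c
      rw [hXwt, one_mul]
      have h4 : ((1 / 2 : ℝ) ^ n) ^ t = ((1 / 2 : ℝ) ^ m) ^ t * ((2 : ℝ) ^ (m - n)) ^ t := by
        rw [← Real.mul_rpow (by positivity) (by positivity)]
        congr 1
        obtain ⟨d, hd⟩ := Nat.exists_eq_add_of_le hn
        rw [hd, Nat.add_sub_cancel_left, pow_add, mul_assoc, ← mul_pow]
        norm_num
      rw [h4]
      have h5 : (X.filter fun x => x ∈ dy n c) = X.filter fun x => cell n x = c :=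
        Finset.filter_congr fun x _ => Iff.rfl
      rw [h5]
      exact mul_le_mul_of_nonneg_left (hXcard n hn c) (by positivity)
    have hXu : wt X ν Set.univ ≤ (2 * L + 3) ^ 2 := by
      have hcard := card_cells X 0 0 L (fun x hx l => by
        simpa using (hZR x (hXZ hx).1 l).trans (Nat.le_ceil R))
      calc wt X ν Set.univ ≤ ∑ c ∈ X.image (cell 0), wt X ν (dy 0 c) :=
            wt_le_sum hν0 _ _ (dy 0) fun x hx _ => ⟨cell 0 x, Finset.mem_image_of_mem _ hx, rfl⟩
        _ ≤ ∑ _c ∈ X.image (cell 0), (1 : ℝ) := Finset.sum_le_sum fun c _ => by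
            simpa using hXc 0 (Nat.zero_le _) c
        _ = ((X.image (cell 0)).card : ℝ) := by simp
        _ ≤ ((2 * L + 3) ^ 2 : ℕ) := by exact_mod_cast hcard
        _ = _ := by push_cast; ring
    have hYc' : ∀ n ≤ m, ∀ c, wt Y μ (dy n c) ≤ D * ((1 / 2 : ℝ) ^ n) ^ s := by
      intro n hn c
      refine (hYc n hn c).trans ?_
      rw [hM, Measure.restrict_apply (measurableSet_dy _ _), Set.inter_comm]
      refine (ENNReal.toReal_le_of_le_ofReal (by positivity) (hFC n c)).trans ?_
      gcongr
    have hYu' : wt Y μ Set.univ ≤ D := by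
      rw [hMu] at hYu
      linarith
    have hXI : ∀ x, ∃ I : Finset ℝ, x ∈ X → (I.card : ℝ) ≤ ((1 / 2 : ℝ) ^ k) ^ (-(N * u)) ∧
        ((1 / 2 : ℝ) ^ k) ^ c ≤
          (M (F ∩ {y | ∃ a ∈ I, |dist x y - a| ≤ ((1 / 2 : ℝ) ^ k) ^ N})).toReal := by
      intro x
      by_cases hx : x ∈ X
      · obtain ⟨-, I, hI⟩ := hXZ hx
        exact ⟨I, fun _ => hI⟩
      · exact ⟨∅, fun h => absurd h hx⟩
    choose I hI using hXI
    have hfinal := hmain k hk i j hij X Y ν μ I _ rfl hν0 hμ0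
      (fun x hx y hy => hsep x (hXZ hx).1 y (hYF hy))
      (fun x hx => hZR x (hXZ hx).1) (fun y hy => hFR y (hYF hy))
      (by linarith) (by linarith)
      (fun p ρ hρ => ball_of_cells hν0 ht0 hD0.le (m := m) (by linarith)
        (fun n hn c => (hXc n hn c).trans (by gcongr)) p (hqN ▸ hρ))
      (fun p ρ hρ => ball_of_cells hμ0 hs0 hD0.le (m := m) (by linarith)
        hYc' p (hqN ▸ hρ))
      (fun x hx => (hI x hx).1)
      (fun x hx => (hI x hx).2.trans (hYA _ _ (by
        rintro z hz ⟨a, ha, hza⟩ y hzy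
        refine ⟨a, ha, ?_⟩
        rw [← hqN] at hzy
        have h1 : |dist x y - dist x z| ≤ dist z y := by
          rw [dist_comm x y, dist_comm x z, dist_comm z y]
          exact abs_dist_sub_le y z x
        calc |dist x y - a| = |(dist x y - dist x z) + (dist x z - a)| := by ring_nf
          _ ≤ |dist x y - dist x z| + |dist x z - a| := abs_add_le _ _
          _ ≤ 3 * ((1 / 2 : ℝ) ^ k) ^ N := by linarith)))
    rw [hθk, hXwt] at hfinal
    simpa using hfinal
  choose T hT using hlevel
  have hio : ∀ x ∈ Z, ∀ K, ∃ k ≥ K, x ∈ Zk k := by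
    intro x hx K
    obtain ⟨k, hk, I, hI⟩ := exists_level hMF hu0 hc hN (hnull x hx) K
    exact ⟨k, hk, hx, I, hI⟩
  refine null_of_covers ht0 (ι := ℕ × (ℕ × (ℤ × ℤ))) fun n => ?_
  obtain ⟨K, hKk₀, hK⟩ : ∃ K ≥ k₀, 2 ^ t * 2 * (θ ^ K / (1 - θ)) < 1 / ((n : ℝ) + 1) := by
    have := ((tendsto_pow_atTop_nhds_zero_of_lt_one hθ0.le hθ1).div_const (1 - θ)).const_mul
      (2 ^ t * 2)
    rw [zero_div, mul_zero] at this
    obtain ⟨K₁, hK₁⟩ := Filter.eventually_atTop.1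
      (this.eventually_lt_const (by positivity : 0 < 1 / ((n : ℝ) + 1)))
    exact ⟨max k₀ K₁, le_max_left _ _, hK₁ _ (le_max_right _ _)⟩
  refine ⟨fun p => if p.2 ∈ T (K + p.1) then dy p.2.1 p.2.2 else ∅, ?_, ?_⟩
  · intro x hx
    obtain ⟨k, hk, hxk⟩ := hio x hx K
    obtain ⟨τ, hτ, hxτ⟩ := (hT k (hKk₀.trans hk)).1 x hxk
    refine Set.mem_iUnion.2 ⟨(k - K, τ), ?_⟩
    simp only [Nat.add_sub_cancel' hk, hτ, if_true]
    exact hxτ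
  · have hinner : ∀ l, ∑' τ, Metric.ediam (if τ ∈ T (K + l) then dy τ.1 τ.2 else ∅) ^ t ≤
        ENNReal.ofReal (2 ^ t * 2 * θ ^ (K + l)) := by
      intro l
      rw [tsum_eq_sum (s := T (K + l)) (fun τ hτ => by simp [hτ, ht0])]
      calc _ ≤ ∑ τ ∈ T (K + l), ENNReal.ofReal (2 ^ t * ((1 / 2 : ℝ) ^ τ.1) ^ t) := by
            refine Finset.sum_le_sum fun τ hτ => ?_
            rw [if_pos hτ, ← Real.mul_rpow (by norm_num) (by positivity),
              ← ENNReal.ofReal_rpow_of_nonneg (by positivity) ht0.le]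
            exact ENNReal.rpow_le_rpow (ediam_dy _ _) ht0.le
        _ = ENNReal.ofReal (∑ τ ∈ T (K + l), 2 ^ t * ((1 / 2 : ℝ) ^ τ.1) ^ t) :=
            (ENNReal.ofReal_sum_of_nonneg fun τ _ => by positivity).symm
        _ ≤ _ := by
            apply ENNReal.ofReal_le_ofReal
            rw [← Finset.mul_sum, mul_assoc]
            exact mul_le_mul_of_nonneg_left (hT _ (by lia)).2 (by positivity)
    have hgeo : HasSum (fun l : ℕ => 2 ^ t * 2 * θ ^ (K + l)) (2 ^ t * 2 * (θ ^ K / (1 - θ))) := by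
      simp only [pow_add, div_eq_mul_inv]
      exact ((hasSum_geometric_of_lt_one hθ0.le hθ1).mul_left _).mul_left _
    rw [ENNReal.tsum_prod']
    refine (ENNReal.tsum_le_tsum hinner).trans ?_
    rw [← ENNReal.ofReal_tsum_of_nonneg (fun l => by positivity) hgeo.summable, hgeo.tsum_eq]
    refine (ENNReal.ofReal_le_ofReal hK.le).trans ?_
    rw [one_div, ENNReal.ofReal_inv_of_pos (by positivity), ENNReal.ofReal_add (by positivity)
      (by norm_num)]
    simp

end PinnedDist

open PinnedDist in
/-- For a compact set `E ⊆ ℝ²` with `0 < H^s(E) < ∞` for some `s > 1`, there is a set `B`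
of Hausdorff dimension at most one such that for every `x ∉ B` the pinned distance set
`Δ_x E = {‖x - y‖ : y ∈ E}` has Hausdorff dimension at least `s/4 + 1/2`. -/
theorem pinned_distance_set_dimension_compact
    (s : ℝ) (hs : 1 < s)
    (E : Set (EuclideanSpace ℝ (Fin 2)))
    (hEc : IsCompact E)
    (hpos : 0 < μH[s] E) (hfin : μH[s] E < ⊤) :
    ∃ B : Set (EuclideanSpace ℝ (Fin 2)), dimH B ≤ 1 ∧
      ∀ x ∉ B, ENNReal.ofReal (s / 4 + 1 / 2) ≤ dimH ((fun y => ‖x - y‖) '' E) := by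
  have hs0 : 0 < s := by linarith
  obtain ⟨E', C, hE'E, hC, hE'pos, hE'C⟩ := exists_frostman_subset hs0 hpos hfin
  obtain ⟨R, hR⟩ := hEc.isBounded.exists_norm_le
  have hcoord : ∀ (x : EuclideanSpace ℝ (Fin 2)) l, |x l| ≤ ‖x‖ := fun x l => by
    simpa using PiLp.norm_apply_le x l
  refine ⟨{x | dimH ((fun y => ‖x - y‖) '' E) < ENNReal.ofReal (s / 4 + 1 / 2)}, ?_,
    fun x hx => not_lt.1 hx⟩
  set B := {x | dimH ((fun y => ‖x - y‖) '' E) < ENNReal.ofReal (s / 4 + 1 / 2)} with hB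
  suffices hnull : ∀ t : ℝ, 1 < t → μH[t] B = 0 by
    refine ENNReal.le_of_forall_pos_le_add fun ε hε _ => ?_
    have h := dimH_le_of_hausdorffMeasure_ne_top (s := B) (d := 1 + ε)
      (by rw [hnull _ (by push_cast; linarith [(NNReal.coe_pos.2 hε)])]; simp)
    simpa using h
  intro t ht
  -- the part of `E'` in the strip of half-width `r` about the line where coordinate `i` is `p`
  set F : Fin 2 × ℚ × ℚ → Set (EuclideanSpace ℝ (Fin 2)) := fun κ =>
    {y | y ∈ E' ∧ |y κ.1 - (κ.2.1 : ℝ)| ≤ (κ.2.2 : ℝ)} with hF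
  set Z : ℕ × ℚ × (Fin 2 × ℚ × ℚ) → Set (EuclideanSpace ℝ (Fin 2)) := fun κ =>
    {x | ‖x‖ ≤ κ.1 ∧ R ≤ κ.1 ∧ (0 : ℝ) < κ.1 ∧ (0 : ℝ) < κ.2.1 ∧
      (κ.2.1 : ℝ) < s / 4 + 1 / 2 ∧ (0 : ℝ) < κ.2.2.2.2 ∧
      2 * (κ.2.2.2.2 : ℝ) ≤ |x κ.2.2.1 - (κ.2.2.2.1 : ℝ)| ∧ 0 < μH[s] (F κ.2.2) ∧
      μH[(κ.2.1 : ℝ)] ((fun y => dist x y) '' F κ.2.2) = 0} with hZ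
  have hcover : B ⊆ ⋃ κ, Z κ := by
    intro x hx
    obtain ⟨u, -, hxu, hu⟩ := ENNReal.lt_iff_exists_rat_btwn.1 hx
    have hu' : (u : ℝ) < s / 4 + 1 / 2 := by
      have h1 : ENNReal.ofReal (u : ℝ) < ENNReal.ofReal (s / 4 + 1 / 2) := hu
      exact (ENNReal.ofReal_lt_ofReal_iff (by linarith)).1 h1
    have hu0 : (0 : ℝ) < u := by
      have h1 : 0 < ENNReal.ofReal (u : ℝ) := bot_le.trans_lt hxu
      exact ENNReal.ofReal_pos.1 h1
    have hxn : μH[(u : ℝ)] ((fun y => dist x y) '' E) = 0 := by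
      have h1 := hausdorffMeasure_of_dimH_lt hxu
      rw [Real.coe_toNNReal _ hu0.le] at h1
      simpa only [dist_eq_norm] using h1
    obtain ⟨κ, hκ0, hκx, hκF⟩ : ∃ κ : Fin 2 × ℚ × ℚ, (0 : ℝ) < κ.2.2 ∧
        2 * (κ.2.2 : ℝ) ≤ |x κ.1 - (κ.2.1 : ℝ)| ∧ 0 < μH[s] (F κ) := by
      by_contra hno
      push Not at hno
      have := Measure.nullSingletonClass_hausdorff (EuclideanSpace ℝ (Fin 2)) hs0
      set G : Fin 2 × ℚ × ℚ → Set (EuclideanSpace ℝ (Fin 2)) := fun κ =>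
        {y | y ∈ F κ ∧ (0 : ℝ) < κ.2.2 ∧ 2 * (κ.2.2 : ℝ) ≤ |x κ.1 - (κ.2.1 : ℝ)|} with hG
      have hG0 : ∀ κ, μH[s] (G κ) = 0 := by
        intro κ
        by_cases h : (0 : ℝ) < κ.2.2 ∧ 2 * (κ.2.2 : ℝ) ≤ |x κ.1 - (κ.2.1 : ℝ)|
        · exact le_antisymm ((measure_mono fun y hy => hy.1).trans (hno κ h.1 h.2)) bot_le
        · rw [Set.eq_empty_of_forall_notMem (s := G κ) fun y hy => h hy.2]
          simp
      have hsub : E' ⊆ (⋃ κ, G κ) ∪ {x} := by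
        intro y hy
        by_cases hyx : y = x
        · exact Or.inr hyx
        left
        obtain ⟨i, hi⟩ : ∃ i, y i ≠ x i := by
          by_contra hall
          push Not at hall
          exact hyx (PiLp.ext hall)
        have hg : 0 < |y i - x i| / 3 := by
          have := abs_pos.2 (sub_ne_zero.2 hi)
          positivity
        obtain ⟨r, hr0, hr1⟩ := exists_rat_btwn hg
        obtain ⟨p, hp0, hp1⟩ := exists_rat_btwn (by linarith : y i - r < y i)
        have hyp : |y i - (p : ℝ)| ≤ r := by rw [abs_le]; constructor <;> linarith
        refine Set.mem_iUnion.2 ⟨(i, p, r), ⟨hy, hyp⟩, hr0, ?_⟩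
        have h1 : |y i - x i| ≤ |y i - (p : ℝ)| + |x i - (p : ℝ)| := by
          rw [abs_sub_comm (x i)]
          exact abs_sub_le _ _ _
        simp only
        linarith
      have : μH[s] E' = 0 := measure_mono_null hsub
        (measure_union_null (measure_iUnion_null hG0) (measure_singleton x))
      exact hE'pos.ne' this
    obtain ⟨n, hn⟩ := exists_nat_ge (max (max ‖x‖ R) 1)
    refine Set.mem_iUnion.2 ⟨(n, u, κ), ?_, ?_, ?_, hu0, hu', hκ0, hκx, hκF, ?_⟩
    · exact ((le_max_left _ _).trans (le_max_left _ _)).trans hn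
    · exact ((le_max_right _ _).trans (le_max_left _ _)).trans hn
    · exact one_pos.trans_le ((le_max_right _ _).trans hn)
    · exact measure_mono_null (Set.image_mono fun y hy => hE'E hy.1) hxn
  refine measure_mono_null hcover (measure_iUnion_null ?_)
  rintro ⟨n, u, i, p, r⟩
  rcases Set.eq_empty_or_nonempty (Z (n, u, i, p, r)) with h0 | ⟨x₀, hx₀⟩
  · rw [h0]; simp
  obtain ⟨-, hRn, hn0, hu0, hu, hr, -, hFpos, -⟩ := hx₀
  simp only at hRn hn0 hu0 hu hr hFpos
  obtain ⟨j, hij⟩ : ∃ j : Fin 2, i ≠ j := by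
    obtain ⟨j, hj⟩ := exists_ne i
    exact ⟨j, hj.symm⟩
  have hFE : F (i, p, r) ⊆ E' := fun y hy => hy.1
  refine piece_null hs ht hr hn0 hC hu0 hu hij hFpos
    ((measure_mono (hFE.trans hE'E)).trans_lt hfin).ne
    (fun n c => (measure_mono (Set.inter_subset_inter_left _ hFE)).trans (hE'C n c))
    (fun y hy l => (hcoord y l).trans ((hR y (hE'E hy.1)).trans hRn))
    (fun x hx l => (hcoord x l).trans hx.1) (fun x hx y hy => ?_) (fun x hx => hx.2.2.2.2.2.2.2.2)
  have h1 : 2 * (r : ℝ) ≤ |x i - (p : ℝ)| := hx.2.2.2.2.2.2.1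
  have h2 : |y i - (p : ℝ)| ≤ r := hy.2
  have h3 : |x i - (p : ℝ)| ≤ |x i - y i| + |y i - (p : ℝ)| := abs_sub_le _ _ _
  linarith
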